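/- Let 𝒳={1,…,c}, μ a probability measure on 𝒳 with μ_r>0 for every r, and X₁,…,Xₙ i.i.d. μ. Suppose δ_□(W_{Qₙ},W)→0 for some W∈𝒲 and limsup_{n→∞}‖W_{Qₙ}‖_{qΔ}<∞ for some q>1. Then the monochromatic subgraph count N₂(H,Qₙ,X) = n^{−v} Σ_{(i₁,…,i_v)∈S(n,v)} 1{X_{i₁}=X_{i₂}=…=X_{i_v}} Π_{(a,b)∈E(H)} Qₙ(i_a,i_b) satisfies a large deviation principle at speed n with the good rate function I₂(t) = inf{ ∫₀¹ Σ_{r=1}^c f_r(u) log(f_r(u)/μ_r) du : f∈ℱ_c, G_{2,W}(f)=t }. -/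

import Mathlib

open MeasureTheory Filter Set
open scoped ENNReal NNReal

noncomputable section

/-- The uniform probability measure on `[0,1]`. -/
def unif01 : Measure ℝ := volume.restrict (Set.Icc 0 1)

instance : IsProbabilityMeasure unif01 :=
  ⟨by rw [unif01, Measure.restrict_apply_univ, Real.volume_Icc]; norm_num⟩

/-- The `L^r` norm (`r : ℝ≥0∞`) of a kernel, viewed as a function on `[0,1]²`. -/
def kerNorm (W : ℝ → ℝ → ℝ) (r : ℝ≥0∞) : ℝ≥0∞ :=
  eLpNorm (fun z : ℝ × ℝ => W z.1 z.2) r (unif01.prod unif01)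

/-- The (strong) cut distance `d_□` between two kernels on `[0,1]²`. -/
def cutDist (W₁ W₂ : ℝ → ℝ → ℝ) : ℝ :=
  ⨆ S : {S : Set ℝ // MeasurableSet S}, ⨆ T : {T : Set ℝ // MeasurableSet T},
    |∫ x in Set.Icc (0:ℝ) 1 ∩ S.1, ∫ y in Set.Icc (0:ℝ) 1 ∩ T.1, (W₁ x y - W₂ x y)|

/-- A Lebesgue-measure-preserving bijection of `[0,1]`. -/
def MPB (σ : ℝ → ℝ) : Prop :=
  Set.BijOn σ (Set.Icc 0 1) (Set.Icc 0 1) ∧ MeasurePreserving σ unif01 unif01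

/-- The weak cut distance `δ_□`. -/
def weakCutDist (W₁ W₂ : ℝ → ℝ → ℝ) : ℝ :=
  ⨅ σ : {σ : ℝ → ℝ // MPB σ}, cutDist (fun x y => W₁ (σ.1 x) (σ.1 y)) W₂

/-- The step kernel `W_{Q_n}` associated to an `n × n` matrix `Q`:
it equals `Q i j` when `⌈n x⌉ = i, ⌈n y⌉ = j`. -/
def stepKernel (n : ℕ) (Q : Fin n → Fin n → ℝ) : ℝ → ℝ → ℝ := fun x y =>
  ∑ i : Fin n, ∑ j : Fin n,
    if x ∈ Set.Ioc (((i : ℕ) : ℝ)/n) ((((i : ℕ) : ℝ)+1)/n) ∧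
       y ∈ Set.Ioc (((j : ℕ) : ℝ)/n) ((((j : ℕ) : ℝ)+1)/n)
    then Q i j else 0

/-- Product over the edges of `H` (each edge counted once) of `f a b`. -/
def edgeProd {v : ℕ} (G : SimpleGraph (Fin v)) [DecidableRel G.Adj]
    (f : Fin v → Fin v → ℝ) : ℝ :=
  ∏ p ∈ Finset.univ.filter (fun p : Fin v × Fin v => G.Adj p.1 p.2 ∧ p.1 < p.2), f p.1 p.2

/-- The number of edges `|E(H)|`. -/
def edgeCard {v : ℕ} (G : SimpleGraph (Fin v)) [DecidableRel G.Adj] : ℕ :=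
  (Finset.univ.filter (fun p : Fin v × Fin v => G.Adj p.1 p.2 ∧ p.1 < p.2)).card

/-- The inhomogeneous U-statistic `U_n(X)` (sum over distinct indices). -/
def Ustat {X : Type*} {v : ℕ} (G : SimpleGraph (Fin v)) [DecidableRel G.Adj]
    (φ : (Fin v → X) → ℝ) (n : ℕ) (Q : Fin n → Fin n → ℝ) (x : Fin n → X) : ℝ :=
  (∑ i ∈ Finset.univ.filter (fun i : Fin v → Fin n => Function.Injective i),
      φ (x ∘ i) * edgeProd G (fun a b => Q (i a) (i b))) / (n : ℝ) ^ v

/-- The inhomogeneous V-statistic `V_n(X)` (sum over all indices). -/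
def Vstat {X : Type*} {v : ℕ} (G : SimpleGraph (Fin v)) [DecidableRel G.Adj]
    (φ : (Fin v → X) → ℝ) (n : ℕ) (Q : Fin n → Fin n → ℝ) (x : Fin n → X) : ℝ :=
  (∑ i : Fin v → Fin n, φ (x ∘ i) * edgeProd G (fun a b => Q (i a) (i b))) / (n : ℝ) ^ v

open Classical in
/-- Kullback-Leibler divergence `D(ν | ρ) ∈ [0,∞]`. -/
def KLdiv {α : Type*} [MeasurableSpace α] (ν ρ : Measure α) : ℝ≥0∞ :=
  if ν ≪ ρ ∧ Integrable (llr ν ρ) ν then ENNReal.ofReal (∫ a, llr ν ρ a ∂ν) else ⊤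

open Classical in
/-- `ν` itself if it is a probability measure, junk value `0` otherwise. -/
def probOr {α : Type*} [MeasurableSpace α] (ν : Measure α) : Measure α :=
  if IsProbabilityMeasure ν then ν else 0

instance {α : Type*} [MeasurableSpace α] (ν : Measure α) : SigmaFinite (probOr ν) := by
  unfold probOr
  split_ifs with h
  · haveI := h; infer_instance
  · infer_instance

/-- `v`-fold product of a (probability) measure. -/
def piProb {α : Type*} [MeasurableSpace α] (v : ℕ) (ν : Measure α) : Measure (Fin v → α) :=
  Measure.pi fun _ => probOr ν

/-- The functional `T_{W,φ}(ν) = E[φ(B₁,…,B_v) ∏_{(a,b) ∈ E(H)} W(A_a,A_b)]`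
for `(A_a,B_a)` i.i.d. with law `ν`. -/
def TWphi {X : Type*} [MeasurableSpace X] {v : ℕ} (G : SimpleGraph (Fin v))
    [DecidableRel G.Adj] (W : ℝ → ℝ → ℝ) (φ : (Fin v → X) → ℝ)
    (ν : Measure (ℝ × X)) : ℝ :=
  ∫ z : Fin v → ℝ × X,
    φ (fun a => (z a).2) * edgeProd G (fun a b => W (z a).1 (z b).1) ∂(piProb v ν)

/-- Membership in `𝒯ℳ`: probability measures on `[0,1] × 𝒳` whose first marginal
is uniform on `[0,1]`. -/
def inTM {X : Type*} [MeasurableSpace X] (ν : Measure (ℝ × X)) : Prop :=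
  IsProbabilityMeasure ν ∧ ν.map Prod.fst = unif01

/-- The rate function `I₀(t) = inf { D(ν|ρ) : ν ∈ 𝒯ℳ, D(ν|ρ) < ∞, T_{W,φ}(ν) = t }`. -/
def rate0 {X : Type*} [MeasurableSpace X] {v : ℕ} (G : SimpleGraph (Fin v))
    [DecidableRel G.Adj] (W : ℝ → ℝ → ℝ) (φ : (Fin v → X) → ℝ) (μ : Measure X)
    (t : ℝ) : ℝ≥0∞ :=
  ⨅ ν : {ν : Measure (ℝ × X) //
      inTM ν ∧ KLdiv ν (unif01.prod μ) ≠ ⊤ ∧ TWphi G W φ ν = t},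
    KLdiv ν.1 (unif01.prod μ)

/-- Tail assumption (T): `E_μ[e^{λ ψ(X)^p}] < ∞` for all `λ > 0`; for `p = ∞`
it means `ψ` is bounded. -/
def TailCond {X : Type*} [MeasurableSpace X] (μ : Measure X) (ψ : X → ℝ)
    (p : ℝ≥0∞) : Prop :=
  if p = ⊤ then ∃ C : ℝ, ∀ x, ψ x ≤ C
  else ∀ lam : ℝ, 0 < lam →
    ∫⁻ x, ENNReal.ofReal (Real.exp (lam * ψ x ^ p.toReal)) ∂μ < ⊤

/-- A sequence of random elements `T n` defined on probability spaces `(Ω n, P n)`,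
taking values in a topological space `E`, satisfies a large deviation principle at
speed `n` with good rate function `I`. -/
def SatisfiesLDP {E : Type*} [TopologicalSpace E] {Ω : ℕ → Type*}
    [∀ n, MeasurableSpace (Ω n)] (P : ∀ n, Measure (Ω n)) (T : ∀ n, Ω n → E)
    (I : E → ℝ≥0∞) : Prop :=
  (∀ c : ℝ≥0∞, c ≠ ⊤ → IsCompact {x | I x ≤ c}) ∧
  ∀ F : Set E, MeasurableSet[borel E] F →
    (-(⨅ x ∈ interior F, (I x : EReal)) ≤
      Filter.atTop.liminf fun n : ℕ =>
        (((n : ℝ)⁻¹ : ℝ) : EReal) * ENNReal.log (P n {ω | T n ω ∈ F})) ∧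
    (Filter.atTop.limsup (fun n : ℕ =>
        (((n : ℝ)⁻¹ : ℝ) : EReal) * ENNReal.log (P n {ω | T n ω ∈ F})) ≤
      -(⨅ x ∈ closure F, (I x : EReal)))

end
/-- `φ(x₁,…,x_v) = 1{x₁ = … = x_v}` for monochromatic subgraph counts. -/
def monoPhi (c v : ℕ) : (Fin v → Fin c) → ℝ := fun y =>
  if ∀ a b : Fin v, y a = y b then 1 else 0

/-- The class `ℱ_c` of measurable `f = (f₁,…,f_c) : [0,1] → [0,1]^c`
with `Σ_r f_r(x) = 1`. -/
def Fc (c : ℕ) : Set (ℝ → Fin c → ℝ) :=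
  {f | Measurable f ∧ (∀ u ∈ Set.Icc (0 : ℝ) 1, ∀ r, f u r ∈ Set.Icc (0 : ℝ) 1) ∧
    ∀ u ∈ Set.Icc (0 : ℝ) 1, ∑ r, f u r = 1}

/-- `G_{2,W}(f) = Σ_r ∫_{[0,1]^v} ∏_{(a,b) ∈ E(H)} W(x_a,x_b) ∏_a f_r(x_a) dx`. -/
noncomputable def G2 {v : ℕ} (c : ℕ) (G : SimpleGraph (Fin v)) [DecidableRel G.Adj]
    (W : ℝ → ℝ → ℝ) (f : ℝ → Fin c → ℝ) : ℝ :=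
  ∑ r : Fin c,
    ∫ x : Fin v → ℝ, edgeProd G (fun a b => W (x a) (x b)) * ∏ a, f (x a) r
      ∂(Measure.pi fun _ : Fin v => unif01)

/-- The relative entropy `∫₀¹ Σ_r f_r(u) log (f_r(u)/μ_r) du`. -/
noncomputable def entPotts (c : ℕ) (μ : Measure (Fin c)) (f : ℝ → Fin c → ℝ) : ℝ :=
  ∫ u, (∑ r, f u r * Real.log (f u r / (μ {r}).toReal)) ∂unif01

/-- The rate function `I₂` for monochromatic subgraph counts. -/
noncomputable def rate2 {v : ℕ} (c : ℕ) (G : SimpleGraph (Fin v)) [DecidableRel G.Adj]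
    (W : ℝ → ℝ → ℝ) (μ : Measure (Fin c)) (t : ℝ) : ℝ≥0∞ :=
  ⨅ f : {f : ℝ → Fin c → ℝ // f ∈ Fc c ∧ G2 c G W f = t},
    ENNReal.ofReal (entPotts c μ f.1)

lemma holder_one {α κ : Type*} [MeasurableSpace α] (P : Measure α) [IsProbabilityMeasure P]
    (s : Finset κ) (D : ℕ) (hD : 1 ≤ D) (hcard : s.card ≤ D) (f : κ → α → ℝ≥0∞)
    (hf : ∀ j, Measurable (f j)) :
    ∫⁻ a, ∏ j ∈ s, f j a ^ (1 / (D : ℝ)) ∂P ≤ ∏ j ∈ s, (∫⁻ a, f j a ∂P) ^ (1 / (D : ℝ)) := by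
  classical
  have hD0 : (0 : ℝ) < D := by exact_mod_cast hD
  have h := ENNReal.lintegral_prod_norm_pow_le (μ := P) (Finset.insertNone s)
    (f := fun o a => o.elim 1 (fun j => f j a))
    (p := fun o => o.elim (1 - s.card / (D : ℝ)) (fun _ => 1 / (D : ℝ)))
    (by
      intro o _
      cases o with
      | none => exact aemeasurable_const
      | some j => exact (hf j).aemeasurable)
    (by
      rw [Finset.sum_insertNone]
      simp
      field_simp
      ring)
    (by
      intro o _
      cases o with
      | none =>
        simp only [Option.elim]
        rw [sub_nonneg, div_le_one hD0]
        exact_mod_cast hcard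
      | some j => simp)
  simpa [Finset.prod_insertNone] using h

lemma finner_aux {ι κ : Type*} [DecidableEq ι] [DecidableEq κ] (J : Finset κ) (S : κ → Finset ι)
    (h : κ → (ι → ℝ) → ℝ≥0∞) (hm : ∀ j, Measurable (h j))
    (hdep : ∀ j ∈ J, ∀ i ∉ S j, ∀ x t, h j (Function.update x i t) = h j x)
    (D : ℕ) (hD : 1 ≤ D) (hdeg : ∀ i, (J.filter (fun j => i ∈ S j)).card ≤ D)
    (s : Finset ι) (x : ι → ℝ) :
    (∫⋯∫⁻_s, (fun x => ∏ j ∈ J, h j x ^ (1 / (D : ℝ))) ∂(fun _ : ι => unif01)) x ≤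
      ∏ j ∈ J, ((∫⋯∫⁻_s, h j ∂(fun _ : ι => unif01)) x) ^ (1 / (D : ℝ)) := by
  induction s using Finset.induction generalizing x with
  | empty => simp
  | insert i s hi ih =>
    have hm' : Measurable (fun x => ∏ j ∈ J, h j x ^ (1 / (D : ℝ))) :=
      Finset.measurable_prod _ fun j _ => (hm j).pow_const _
    rw [lmarginal_insert _ hm' hi]
    refine (lintegral_mono fun t => ih (Function.update x i t)).trans ?_
    have key : ∀ j ∈ J, i ∉ S j → ∀ t, (∫⋯∫⁻_s, h j ∂(fun _ : ι => unif01)) (Function.update x i t)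
        = (∫⋯∫⁻_s, h j ∂(fun _ : ι => unif01)) x := by
      intro j hj hij t
      rw [lmarginal_update_of_notMem (hm j) hi]
      have : h j ∘ (fun y => Function.update y i t) = h j := funext fun y => hdep j hj i hij y t
      rw [this]
    simp_rw [← Finset.prod_filter_mul_prod_filter_not J (fun j => i ∈ S j)]
    have e1 : ∀ t, (∏ j ∈ J with i ∉ S j, ((∫⋯∫⁻_s, h j ∂(fun _ : ι => unif01)) (Function.update x i t)) ^ (1 / (D : ℝ)))
        = ∏ j ∈ J with i ∉ S j, ((∫⋯∫⁻_(insert i s), h j ∂(fun _ : ι => unif01)) x) ^ (1 / (D : ℝ)) := by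
      intro t
      refine Finset.prod_congr rfl fun j hj => ?_
      rw [Finset.mem_filter] at hj
      rw [lmarginal_insert _ (hm j) hi, key j hj.1 hj.2 t]
      simp_rw [key j hj.1 hj.2]
      simp
    simp_rw [e1]
    have hmm : ∀ j, Measurable fun t => (∫⋯∫⁻_s, h j ∂(fun _ : ι => unif01)) (Function.update x i t) :=
      fun j => ((hm j).lmarginal _).comp (measurable_update x)
    rw [lintegral_mul_const _ (Finset.measurable_prod _ fun j _ => (hmm j).pow_const _)]
    gcongr
    refine (holder_one unif01 _ D hD (hdeg i) _ hmm).trans_eq ?_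
    refine Finset.prod_congr rfl fun j hj => ?_
    rw [lmarginal_insert _ (hm j) hi]

/-- the product uniform measure -/
noncomputable abbrev piU (v : ℕ) : Measure (Fin v → ℝ) := Measure.pi fun _ : Fin v => unif01

/-- the ordered edge set -/
def edgeS {v : ℕ} (G : SimpleGraph (Fin v)) [DecidableRel G.Adj] : Finset (Fin v × Fin v) :=
  Finset.univ.filter (fun p : Fin v × Fin v => G.Adj p.1 p.2 ∧ p.1 < p.2)

lemma edgeProd_eq {v : ℕ} (G : SimpleGraph (Fin v)) [DecidableRel G.Adj]
    (f : Fin v → Fin v → ℝ) : edgeProd G f = ∏ p ∈ edgeS G, f p.1 p.2 := rfl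

lemma edgeS_deg {v : ℕ} (G : SimpleGraph (Fin v)) [DecidableRel G.Adj] (i : Fin v) :
    ((edgeS G).filter (fun p => i ∈ ({p.1, p.2} : Finset (Fin v)))).card ≤ G.degree i := by
  rw [← SimpleGraph.card_neighborFinset_eq_degree]
  refine Finset.card_le_card_of_injOn (fun p => if p.1 = i then p.2 else p.1) ?_ ?_
  · intro p hp
    simp [edgeS] at hp
    simp only [Finset.mem_coe, SimpleGraph.mem_neighborFinset]
    split_ifs with h
    · rw [← h]; exact hp.1.1
    · rcases hp.2 with h2 | h2
      · exact absurd h2.symm h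
      · rw [h2]; exact hp.1.1.symm
  · rintro ⟨a, b⟩ hp ⟨a', b'⟩ hp'
    simp [edgeS] at hp hp'
    simp only
    split_ifs <;> grind

lemma mp_pair {v : ℕ} {a b : Fin v} (hab : a ≠ b) :
    MeasurePreserving (fun x : Fin v → ℝ => (x a, x b)) (piU v) (unif01.prod unif01) := by
  have hm : Measurable (fun x : Fin v → ℝ => (x a, x b)) := by fun_prop
  refine ⟨hm, (Measure.prod_eq fun A B hA hB => ?_).symm⟩
  rw [Measure.map_apply hm (hA.prod hB)]
  have : (fun x : Fin v → ℝ => (x a, x b)) ⁻¹' (A ×ˢ B) =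
      Set.univ.pi (fun i => if i = a then A else if i = b then B else Set.univ) := by
    ext x
    simp only [Set.mem_preimage, Set.mem_prod, Set.mem_pi, Set.mem_univ, true_imp_iff]
    constructor
    · rintro ⟨h1, h2⟩ i
      split_ifs with h h'
      · rwa [h]
      · rwa [h']
      · trivial
    · intro h
      have h1 := h a
      have h2 := h b
      rw [if_pos rfl] at h1
      rw [if_neg hab.symm, if_pos rfl] at h2
      exact ⟨h1, h2⟩
  rw [this, Measure.pi_pi, Fintype.prod_eq_mul a b hab]
  · simp [hab.symm]
  · intro i hi
    simp [hi.1, hi.2]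

lemma edgeS_ne {v : ℕ} {G : SimpleGraph (Fin v)} [DecidableRel G.Adj] {p : Fin v × Fin v}
    (hp : p ∈ edgeS G) : p.1 ≠ p.2 := by
  simp [edgeS] at hp
  exact hp.2.ne

/-- Graph Hölder inequality. -/
lemma graph_holder {v : ℕ} (G : SimpleGraph (Fin v)) [DecidableRel G.Adj] (D : ℕ) (hD : 1 ≤ D)
    (hdeg : ∀ i, G.degree i ≤ D) (q : ℝ) (hq : 0 < q) (F : Fin v × Fin v → ℝ → ℝ → ℝ)
    (hF : ∀ p, Measurable (Function.uncurry (F p))) (C : ℝ≥0∞)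
    (hC : ∀ p ∈ edgeS G, kerNorm (F p) (ENNReal.ofReal (q * D)) ≤ C) :
    ∫⁻ x, (∏ p ∈ edgeS G, ‖F p (x p.1) (x p.2)‖ₑ) ^ q ∂(piU v) ≤ (C ^ (edgeS G).card) ^ q := by
  have hD0 : (0 : ℝ) < D := by exact_mod_cast hD
  have hqD : 0 < q * D := by positivity
  have hFm : ∀ p : Fin v × Fin v, Measurable fun x : Fin v → ℝ => F p (x p.1) (x p.2) := fun p =>
    (hF p).comp (by fun_prop : Measurable fun x : Fin v → ℝ => (x p.1, x p.2))
  have h := finner_aux (edgeS G) (fun p => {p.1, p.2})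
    (fun p x => ‖F p (x p.1) (x p.2)‖ₑ ^ (q * D)) (fun p => (hFm p).enorm.pow_const _)
    (by
      intro p hp i hi x t
      simp at hi
      simp [Function.update_of_ne (Ne.symm hi.1), Function.update_of_ne (Ne.symm hi.2)]) D hD
    (fun i => (edgeS_deg G i).trans (hdeg i)) Finset.univ 0
  simp only [lmarginal_univ] at h
  refine (le_of_eq ?_).trans (h.trans ?_)
  · refine lintegral_congr fun x => ?_
    rw [← ENNReal.prod_rpow_of_nonneg hq.le]
    refine Finset.prod_congr rfl fun p _ => ?_
    rw [← ENNReal.rpow_mul]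
    congr 1
    field_simp
  · rw [← Finset.prod_const, ← ENNReal.prod_rpow_of_nonneg hq.le]
    refine Finset.prod_le_prod (fun _ _ => zero_le) fun p hp => ?_
    have h1 := (mp_pair (edgeS_ne hp)).lintegral_comp
      (f := fun z : ℝ × ℝ => ‖F p z.1 z.2‖ₑ ^ (q * D)) ((hF p).enorm.pow_const _)
    simp only at h1
    rw [h1]
    have h2 := hC p hp
    rw [kerNorm, eLpNorm_eq_lintegral_rpow_enorm_toReal (by simpa using hqD) (by simp),
      ENNReal.toReal_ofReal hqD.le] at h2
    calc _ = ((∫⁻ z, ‖F p z.1 z.2‖ₑ ^ (q * D) ∂(unif01.prod unif01)) ^ (1 / (q * D))) ^ q := by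
            rw [← ENNReal.rpow_mul]
            congr 1
            field_simp
      _ ≤ C ^ q := by gcongr

/-- Uniform integrability. -/
lemma graph_ui {v : ℕ} (G : SimpleGraph (Fin v)) [DecidableRel G.Adj] (D : ℕ) (hD : 1 ≤ D)
    (hdeg : ∀ i, G.degree i ≤ D) (q : ℝ) (hq : 1 < q) (F : Fin v × Fin v → ℝ → ℝ → ℝ)
    (hF : ∀ p, Measurable (Function.uncurry (F p))) (C : ℝ≥0∞)
    (hC : ∀ p ∈ edgeS G, kerNorm (F p) (ENNReal.ofReal (q * D)) ≤ C) (B : Set (Fin v → ℝ))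
    (hB : MeasurableSet B) :
    ∫⁻ x in B, (∏ p ∈ edgeS G, ‖F p (x p.1) (x p.2)‖ₑ) ∂(piU v) ≤
      C ^ (edgeS G).card * (piU v B) ^ (1 - 1 / q) := by
  have hq0 : 0 < q := by linarith
  have hFm : ∀ p : Fin v × Fin v, Measurable fun x : Fin v → ℝ => F p (x p.1) (x p.2) := fun p =>
    (hF p).comp (by fun_prop : Measurable fun x : Fin v → ℝ => (x p.1, x p.2))
  have hY : Measurable fun x : Fin v → ℝ => ∏ p ∈ edgeS G, ‖F p (x p.1) (x p.2)‖ₑ :=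
    Finset.measurable_prod _ fun p _ => (hFm p).enorm
  have hpq : q.HolderConjugate (Real.conjExponent q) := Real.HolderConjugate.conjExponent hq
  have h := ENNReal.lintegral_mul_le_Lp_mul_Lq (piU v) hpq hY.aemeasurable
    (g := B.indicator 1) (measurable_one.indicator hB).aemeasurable
  have e1 : ∀ x, ((fun x : Fin v → ℝ => ∏ p ∈ edgeS G, ‖F p (x p.1) (x p.2)‖ₑ) * (B.indicator 1 : (Fin v → ℝ) → ℝ≥0∞)) x
     = B.indicator (fun x : Fin v → ℝ => ∏ p ∈ edgeS G, ‖F p (x p.1) (x p.2)‖ₑ) x := by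
    intro x
    by_cases hx : x ∈ B <;> simp [hx]
  have e2 : ∀ x, (B.indicator (1 : (Fin v → ℝ) → ℝ≥0∞) x) ^ (Real.conjExponent q) = B.indicator 1 x := by
    intro x
    by_cases hx : x ∈ B <;> simp [hx, hpq.symm.pos]
  simp_rw [e1, e2] at h
  rw [lintegral_indicator hB, lintegral_indicator_one hB] at h
  refine h.trans ?_
  have e3 : 1 / Real.conjExponent q = 1 - 1 / q := by
    have := hpq.inv_add_inv_eq_one
    rw [one_div, one_div]; linarith
  rw [e3]
  gcongr
  have h3 := graph_holder G D hD hdeg q hq0 F hF C hC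
  calc _ ≤ ((C ^ (edgeS G).card) ^ q) ^ (1 / q) := by gcongr
    _ = C ^ (edgeS G).card := by
      rw [← ENNReal.rpow_mul]; field_simp; simp

lemma unif01_restrict {S : Set ℝ} (hS : MeasurableSet S) :
    unif01.restrict S = volume.restrict (Set.Icc (0:ℝ) 1 ∩ S) := by
  rw [unif01, Measure.restrict_restrict hS, Set.inter_comm]

lemma le_cutDist {U W : ℝ → ℝ → ℝ}
    (hI : Integrable (fun z : ℝ × ℝ => U z.1 z.2 - W z.1 z.2) (unif01.prod unif01))
    {S T : Set ℝ} (hS : MeasurableSet S) (hT : MeasurableSet T) :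
    |∫ x in S, ∫ y in T, (U x y - W x y) ∂unif01 ∂unif01| ≤ cutDist U W := by
  have hb : ∀ S T : {S : Set ℝ // MeasurableSet S},
    |∫ x in Set.Icc (0:ℝ) 1 ∩ S.1, ∫ y in Set.Icc (0:ℝ) 1 ∩ T.1, (U x y - W x y)| ≤
      ∫ z, ‖U z.1 z.2 - W z.1 z.2‖ ∂(unif01.prod unif01) := by
    intro S T
    rw [← unif01_restrict S.2, ← unif01_restrict T.2]
    have := setIntegral_prod (μ := unif01) (ν := unif01) (s := S.1) (t := T.1)
      (f := fun z : ℝ × ℝ => U z.1 z.2 - W z.1 z.2) hI.integrableOn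
    simp only at this
    rw [← this, ← Real.norm_eq_abs]
    refine (norm_integral_le_integral_norm _).trans ?_
    exact setIntegral_le_integral hI.norm (ae_of_all _ fun _ => norm_nonneg _)
  rw [unif01_restrict hS, unif01_restrict hT, cutDist]
  have hb' : ∀ S : {S : Set ℝ // MeasurableSet S}, BddAbove (Set.range fun T : {S : Set ℝ // MeasurableSet S} =>
      |∫ x in Set.Icc (0:ℝ) 1 ∩ S.1, ∫ y in Set.Icc (0:ℝ) 1 ∩ T.1, (U x y - W x y)|) := by
    intro S
    refine ⟨∫ z, ‖U z.1 z.2 - W z.1 z.2‖ ∂(unif01.prod unif01), ?_⟩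
    rintro _ ⟨T, rfl⟩
    exact hb S T
  refine le_trans ?_ (le_ciSup (f := fun S : {S : Set ℝ // MeasurableSet S} => ⨆ T : {S : Set ℝ // MeasurableSet S},
      |∫ x in Set.Icc (0:ℝ) 1 ∩ S.1, ∫ y in Set.Icc (0:ℝ) 1 ∩ T.1, (U x y - W x y)|) ?_ ⟨S, hS⟩)
  · exact le_ciSup (hb' ⟨S, hS⟩) ⟨T, hT⟩
  · refine ⟨∫ z, ‖U z.1 z.2 - W z.1 z.2‖ ∂(unif01.prod unif01), ?_⟩
    rintro _ ⟨S, rfl⟩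
    have : Nonempty {S : Set ℝ // MeasurableSet S} := ⟨⟨∅, MeasurableSet.empty⟩⟩
    exact ciSup_le (hb S)

lemma cutDist_nonneg (U W : ℝ → ℝ → ℝ) : 0 ≤ cutDist U W :=
  Real.iSup_nonneg fun _ => Real.iSup_nonneg fun _ => abs_nonneg _

lemma abs_integral_mul_le {g α : ℝ → ℝ} (hg : Integrable g unif01) (hgm : Measurable g)
    {M : ℝ} (hα : ∀ x, |α x| ≤ M) :
    |∫ x, α x * g x ∂unif01| ≤
      M * (|∫ x in {x | 0 ≤ g x}, g x ∂unif01| + |∫ x in {x | 0 ≤ g x}ᶜ, g x ∂unif01|) := by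
  have hS : MeasurableSet {x | 0 ≤ g x} := measurableSet_le measurable_const hgm
  have h1 : |∫ x, α x * g x ∂unif01| ≤ ∫ x, M * |g x| ∂unif01 := by
    refine (norm_integral_le_integral_norm (μ := unif01) (fun x => α x * g x)).trans ?_
    refine integral_mono_of_nonneg (ae_of_all _ fun _ => norm_nonneg _) (hg.abs.const_mul M)
      (ae_of_all _ fun x => ?_)
    simp only [norm_mul, Real.norm_eq_abs]
    exact mul_le_mul_of_nonneg_right (hα x) (abs_nonneg _)
  refine h1.trans ?_
  rw [integral_const_mul]
  have hM : 0 ≤ M := (abs_nonneg _).trans (hα 0)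
  gcongr
  rw [← integral_add_compl hS hg.abs]
  gcongr
  · rw [setIntegral_congr_fun (g := g) hS fun x hx => abs_of_nonneg hx]
    exact le_abs_self _
  · rw [setIntegral_congr_fun (g := fun x => - g x) hS.compl fun x hx => abs_of_nonpos (by
      simp at hx; exact hx.le), integral_neg]
    exact neg_le_abs _

lemma bilin_bound {U W : ℝ → ℝ → ℝ} (hU : Measurable (Function.uncurry U))
    (hW : Measurable (Function.uncurry W))
    (hI : Integrable (fun z : ℝ × ℝ => U z.1 z.2 - W z.1 z.2) (unif01.prod unif01))
    {α β : ℝ → ℝ} (hαm : Measurable α) (hβm : Measurable β) {M N : ℝ}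
    (hα : ∀ x, |α x| ≤ M) (hβ : ∀ x, |β x| ≤ N) :
    |∫ s, ∫ t, (U s t - W s t) * (α s * β t) ∂unif01 ∂unif01| ≤ 4 * (M * N) * cutDist U W := by
  have hM : 0 ≤ M := (abs_nonneg _).trans (hα 0)
  have hN : 0 ≤ N := (abs_nonneg _).trans (hβ 0)
  have hDm : Measurable (fun z : ℝ × ℝ => U z.1 z.2 - W z.1 z.2) := hU.sub hW
  have hIβ : Integrable (fun z : ℝ × ℝ => (U z.1 z.2 - W z.1 z.2) * β z.2) (unif01.prod unif01) := by
    refine hI.mul_bdd (c := N) (hβm.comp measurable_snd).aestronglyMeasurable (ae_of_all _ fun z => hβ z.2)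
  have hDβ : Measurable (fun z : ℝ × ℝ => (U z.1 z.2 - W z.1 z.2) * β z.2) :=
    hDm.mul (hβm.comp measurable_snd)
  have e1 : ∀ s, ∫ t, (U s t - W s t) * (α s * β t) ∂unif01 =
      α s * ∫ t, (U s t - W s t) * β t ∂unif01 := by
    intro s
    rw [← integral_const_mul]
    congr 1
    ext t
    ring
  simp_rw [e1]
  have hgm : Measurable fun s => ∫ t, (U s t - W s t) * β t ∂unif01 :=
    (hDβ.stronglyMeasurable.integral_prod_right (ν := unif01)).measurable
  have hgi : Integrable (fun s => ∫ t, (U s t - W s t) * β t ∂unif01) unif01 := hIβ.integral_prod_left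
  have key : ∀ S : Set ℝ, MeasurableSet S →
      |∫ s in S, ∫ t, (U s t - W s t) * β t ∂unif01 ∂unif01| ≤ 2 * N * cutDist U W := by
    intro S hS
    have hI2 : Integrable (fun z : ℝ × ℝ => (U z.1 z.2 - W z.1 z.2)) ((unif01.restrict S).prod unif01) := by
      have : (unif01.restrict S).prod unif01 = (unif01.prod unif01).restrict (S ×ˢ Set.univ) := by
        rw [← Measure.prod_restrict, Measure.restrict_univ]
      rw [this]
      exact hI.restrict
    have hI3 : Integrable (fun z : ℝ × ℝ => (U z.1 z.2 - W z.1 z.2) * β z.2) ((unif01.restrict S).prod unif01) :=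
      hI2.mul_bdd (c := N) (hβm.comp measurable_snd).aestronglyMeasurable (ae_of_all _ fun z => hβ z.2)
    rw [integral_integral_swap (f := fun s t => (U s t - W s t) * β t) hI3]
    have e2 : ∀ t, ∫ s in S, (U s t - W s t) * β t ∂unif01 = β t * ∫ s in S, (U s t - W s t) ∂unif01 := by
      intro t
      rw [integral_mul_const, mul_comm]
    simp_rw [e2]
    have hhm : Measurable fun t => ∫ s in S, (U s t - W s t) ∂unif01 :=
      (hDm.stronglyMeasurable.integral_prod_left (μ := unif01.restrict S)).measurable
    have hhi : Integrable (fun t => ∫ s in S, (U s t - W s t) ∂unif01) unif01 := hI2.integral_prod_right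
    refine (abs_integral_mul_le hhi hhm hβ).trans ?_
    have key2 : ∀ T : Set ℝ, MeasurableSet T →
        |∫ t in T, ∫ s in S, (U s t - W s t) ∂unif01 ∂unif01| ≤ cutDist U W := by
      intro T hT
      have hI4 : Integrable (fun z : ℝ × ℝ => (U z.1 z.2 - W z.1 z.2))
          ((unif01.restrict S).prod (unif01.restrict T)) := by
        rw [Measure.prod_restrict]
        exact hI.restrict
      rw [← integral_integral_swap (f := fun s t => (U s t - W s t)) hI4]
      exact le_cutDist hI hS hT
    have hT := measurableSet_le (measurable_const (a := (0:ℝ))) hhm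
    have a1 := key2 _ hT
    have a2 := key2 _ hT.compl
    nlinarith
  refine (abs_integral_mul_le hgi hgm hα).trans ?_
  have hT := measurableSet_le (measurable_const (a := (0:ℝ))) hgm
  have a1 := key _ hT
  have a2 := key _ hT.compl
  nlinarith

lemma mp_update {v : ℕ} (a : Fin v) :
    MeasurePreserving (fun z : (Fin v → ℝ) × ℝ => Function.update z.1 a z.2)
      ((piU v).prod unif01) (piU v) := by
  have hm : Measurable (fun z : (Fin v → ℝ) × ℝ => Function.update z.1 a z.2) := by
    rw [measurable_pi_iff]
    intro i
    by_cases h : i = a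
    · subst h; simpa using measurable_snd
    · simp only [Function.update_of_ne h]; fun_prop
  refine ⟨hm, (Measure.pi_eq fun B hB => ?_).symm⟩
  rw [Measure.map_apply hm (MeasurableSet.univ_pi hB)]
  have : (fun z : (Fin v → ℝ) × ℝ => Function.update z.1 a z.2) ⁻¹' (Set.univ.pi B) =
      (Set.univ.pi (Function.update B a Set.univ)) ×ˢ (B a) := by
    ext ⟨x, t⟩
    simp only [Set.mem_preimage, Set.mem_pi, Set.mem_univ, true_imp_iff, Set.mem_prod]
    constructor
    · intro h
      refine ⟨fun i => ?_, by simpa using h a⟩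
      by_cases hi : i = a
      · subst hi; simp
      · simpa [hi] using h i
    · rintro ⟨h1, h2⟩ i
      by_cases hi : i = a
      · subst hi; simpa using h2
      · simpa [hi] using h1 i
  rw [this, Measure.prod_prod, Measure.pi_pi]
  rw [← Finset.mul_prod_erase _ _ (Finset.mem_univ a), ← Finset.mul_prod_erase _ (fun i => unif01 (B i)) (Finset.mem_univ a)]
  simp only [Function.update_self, measure_univ, one_mul]
  rw [mul_comm]
  congr 1
  refine Finset.prod_congr rfl fun i hi => ?_
  rw [Function.update_of_ne (Finset.ne_of_mem_erase hi)]

lemma integral_update {v : ℕ} (a : Fin v) {Φ : (Fin v → ℝ) → ℝ} (hΦ : Integrable Φ (piU v)) :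
    Integrable (fun x => ∫ t, Φ (Function.update x a t) ∂unif01) (piU v) ∧
    ∫ x, Φ x ∂(piU v) = ∫ x, ∫ t, Φ (Function.update x a t) ∂unif01 ∂(piU v) := by
  have m1 := mp_update (v := v) a
  have h1 : Integrable (fun z : (Fin v → ℝ) × ℝ => Φ (Function.update z.1 a z.2)) ((piU v).prod unif01) :=
    m1.integrable_comp_of_integrable hΦ
  refine ⟨h1.integral_prod_left, ?_⟩
  rw [← integral_prod _ h1]
  conv_lhs => rw [← m1.map_eq]
  rw [integral_map m1.measurable.aemeasurable (by rw [m1.map_eq]; exact hΦ.aestronglyMeasurable)]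

lemma edge_cut_bound {v : ℕ} {a b : Fin v} (hab : a ≠ b) {U W : ℝ → ℝ → ℝ}
    (hU : Measurable (Function.uncurry U)) (hW : Measurable (Function.uncurry W))
    (hI : Integrable (fun z : ℝ × ℝ => U z.1 z.2 - W z.1 z.2) (unif01.prod unif01))
    {A B : (Fin v → ℝ) → ℝ} (hA : Measurable A) (hB : Measurable B)
    (hAb : ∀ x t, A (Function.update x b t) = A x) (hBa : ∀ x t, B (Function.update x a t) = B x)
    {M N : ℝ} (hM : ∀ x, |A x| ≤ M) (hN : ∀ x, |B x| ≤ N) :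
    |∫ x, (U (x a) (x b) - W (x a) (x b)) * (A x * B x) ∂(piU v)| ≤ 4 * (M * N) * cutDist U W := by
  have hM0 : 0 ≤ M := (abs_nonneg _).trans (hM 0)
  have hN0 : 0 ≤ N := (abs_nonneg _).trans (hN 0)
  have hD : Integrable (fun x : Fin v → ℝ => U (x a) (x b) - W (x a) (x b)) (piU v) :=
    (mp_pair hab).integrable_comp_of_integrable hI
  have hΦ : Integrable (fun x : Fin v → ℝ => (U (x a) (x b) - W (x a) (x b)) * (A x * B x)) (piU v) := by
    refine hD.mul_bdd (c := M * N) (hA.mul hB).aestronglyMeasurable (ae_of_all _ fun z => ?_)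
    rw [norm_mul]
    exact mul_le_mul (hM z) (hN z) (norm_nonneg _) hM0
  obtain ⟨hΦ2, e1⟩ := integral_update b hΦ
  rw [e1, (integral_update a hΦ2).2]
  have e : ∀ (x : Fin v → ℝ) (s t : ℝ), A (Function.update (Function.update x a s) b t) *
      B (Function.update (Function.update x a s) b t) = A (Function.update x a s) * B (Function.update x b t) := by
    intro x s t
    rw [hAb, Function.update_comm hab, hBa]
  simp only [Function.update_self, Function.update_of_ne hab, e]
  have hmu : ∀ (x : Fin v → ℝ) (i : Fin v), Measurable (fun s => Function.update x i s) := fun x i =>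
    measurable_update x
  have : ∀ x : Fin v → ℝ, ‖∫ s, ∫ t, (U s t - W s t) * (A (Function.update x a s) * B (Function.update x b t)) ∂unif01 ∂unif01‖
      ≤ 4 * (M * N) * cutDist U W := fun x =>
    bilin_bound hU hW hI (hA.comp (hmu x a)) (hB.comp (hmu x b)) (fun s => hM _) (fun t => hN _)
  have h3 := norm_integral_le_of_norm_le_const (μ := piU v) (ae_of_all _ this)
  simpa using h3

lemma meas_pair {v : ℕ} {F : ℝ → ℝ → ℝ} (hF : Measurable (Function.uncurry F)) (a b : Fin v) :
    Measurable fun x : Fin v → ℝ => F (x a) (x b) :=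
  hF.comp (by fun_prop : Measurable fun x : Fin v → ℝ => (x a, x b))

lemma graph_integrable {v : ℕ} (G : SimpleGraph (Fin v)) [DecidableRel G.Adj] (D : ℕ) (hD : 1 ≤ D)
    (hdeg : ∀ i, G.degree i ≤ D) (q : ℝ) (hq : 1 < q) (F : Fin v × Fin v → ℝ → ℝ → ℝ)
    (hF : ∀ p, Measurable (Function.uncurry (F p))) (C : ℝ≥0)
    (hC : ∀ p ∈ edgeS G, kerNorm (F p) (ENNReal.ofReal (q * D)) ≤ C) {ψ : (Fin v → ℝ) → ℝ}
    (hψ : Measurable ψ) (hψ1 : ∀ x, |ψ x| ≤ 1) :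
    Integrable (fun x => (∏ p ∈ edgeS G, F p (x p.1) (x p.2)) * ψ x) (piU v) := by
  have h := graph_ui G D hD hdeg q hq F hF C hC Set.univ MeasurableSet.univ
  have hm : Measurable fun x : Fin v → ℝ => ∏ p ∈ edgeS G, F p (x p.1) (x p.2) :=
    Finset.measurable_prod _ fun p _ => meas_pair (hF p) _ _
  refine Integrable.mul_bdd (c := 1) ⟨hm.aestronglyMeasurable, ?_⟩ hψ.aestronglyMeasurable (ae_of_all _ hψ1)
  rw [hasFiniteIntegral_iff_enorm]
  simp only [Measure.restrict_univ, measure_univ, ENNReal.one_rpow, mul_one] at h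
  refine lt_of_le_of_lt (le_trans (le_of_eq ?_) h) (by simp)
  refine lintegral_congr fun x => ?_
  simp [enorm_eq_nnnorm, nnnorm_prod]

lemma graph_ui_real {v : ℕ} (G : SimpleGraph (Fin v)) [DecidableRel G.Adj] (D : ℕ) (hD : 1 ≤ D)
    (hdeg : ∀ i, G.degree i ≤ D) (q : ℝ) (hq : 1 < q) (F : Fin v × Fin v → ℝ → ℝ → ℝ)
    (hF : ∀ p, Measurable (Function.uncurry (F p))) (C : ℝ≥0)
    (hC : ∀ p ∈ edgeS G, kerNorm (F p) (ENNReal.ofReal (q * D)) ≤ C) {ψ : (Fin v → ℝ) → ℝ}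
    (hψ1 : ∀ x, |ψ x| ≤ 1) (B : Set (Fin v → ℝ)) (hB : MeasurableSet B)
    (b : ℝ≥0) (hb : piU v B ≤ b) :
    |∫ x in B, (∏ p ∈ edgeS G, F p (x p.1) (x p.2)) * ψ x ∂(piU v)| ≤
      (C : ℝ) ^ (edgeS G).card * (b : ℝ) ^ (1 - 1 / q) := by
  have hq0 : 0 ≤ 1 - 1 / q := by
    have : 1 / q ≤ 1 := by rw [div_le_one (by linarith)]; exact hq.le
    linarith
  have h := graph_ui G D hD hdeg q hq F hF C hC B hB
  have h2 : ‖∫ x in B, (∏ p ∈ edgeS G, F p (x p.1) (x p.2)) * ψ x ∂(piU v)‖ₑ ≤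
      ((C ^ (edgeS G).card * b ^ (1 - 1 / q) : ℝ≥0) : ℝ≥0∞) := by
    refine (enorm_integral_le_lintegral_enorm _).trans ?_
    refine (lintegral_mono fun x => ?_).trans (h.trans ?_)
    · rw [enorm_mul]
      have e2 : ‖ψ x‖ₑ ≤ 1 := by
        rw [← ofReal_norm]
        simpa using hψ1 x
      refine (mul_le_mul_right e2 _).trans (le_of_eq ?_)
      simp [enorm_eq_nnnorm, nnnorm_prod]
    · rw [ENNReal.coe_mul, ENNReal.coe_pow, ENNReal.coe_rpow_of_nonneg _ hq0]
      gcongr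
  rw [enorm_eq_nnnorm, ENNReal.coe_le_coe] at h2
  have h3 : (‖∫ x in B, (∏ p ∈ edgeS G, F p (x p.1) (x p.2)) * ψ x ∂(piU v)‖₊ : ℝ) ≤ _ :=
    NNReal.coe_le_coe.2 h2
  simpa using h3

lemma kerNorm_mono {W : ℝ → ℝ → ℝ} (hW : Measurable (Function.uncurry W)) {p p' : ℝ≥0∞} (h : p ≤ p') :
    kerNorm W p ≤ kerNorm W p' :=
  eLpNorm_le_eLpNorm_of_exponent_le h hW.aestronglyMeasurable

lemma count_step {v : ℕ} (G : SimpleGraph (Fin v)) [DecidableRel G.Adj] (D : ℕ) (hD : 1 ≤ D)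
    (hdeg : ∀ i, G.degree i ≤ D) (q : ℝ) (hq : 1 < q) (C : ℝ≥0)
    (M : Fin v × Fin v → ℝ → ℝ → ℝ)
    (hM : ∀ p, Measurable (Function.uncurry (M p)))
    (hMC : ∀ p, kerNorm (M p) (ENNReal.ofReal (q * D)) ≤ C)
    {U W : ℝ → ℝ → ℝ} (hU : Measurable (Function.uncurry U)) (hW : Measurable (Function.uncurry W))
    (hUC : kerNorm U (ENNReal.ofReal (q * D)) ≤ C) (hWC : kerNorm W (ENNReal.ofReal (q * D)) ≤ C)
    {φ : Fin v → ℝ → ℝ} (hφ : ∀ a, Measurable (φ a)) (hφ1 : ∀ a x, |φ a x| ≤ 1)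
    (K : ℝ≥0) (hK : 1 ≤ K) {e : Fin v × Fin v} (he : e ∈ edgeS G) :
    |∫ x, ((U (x e.1) (x e.2) - W (x e.1) (x e.2)) *
        ∏ p ∈ (edgeS G).erase e, M p (x p.1) (x p.2)) * ∏ a, φ a (x a) ∂(piU v)| ≤
      4 * (K : ℝ) ^ (edgeS G).card * cutDist U W +
        (2 * C : ℝ) ^ (edgeS G).card * ((edgeS G).card * (C / K) : ℝ) ^ (1 - 1 / q) := by
  have hD1 : (1 : ℝ) ≤ D := by exact_mod_cast hD
  have hr1 : 1 ≤ ENNReal.ofReal (q * D) := by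
    rw [ENNReal.one_le_ofReal]; nlinarith
  have hK0 : (0 : ℝ) < K := lt_of_lt_of_le one_pos (by exact_mod_cast hK)
  set Fam : Fin v × Fin v → ℝ → ℝ → ℝ := fun p => if p = e then fun x y => U x y - W x y else M p with hFam
  have hDm : Measurable (Function.uncurry fun x y => U x y - W x y) := hU.sub hW
  have hFamm : ∀ p, Measurable (Function.uncurry (Fam p)) := by
    intro p
    simp only [hFam]
    split_ifs
    · exact hDm
    · exact hM p
  have hDC : kerNorm (fun x y => U x y - W x y) (ENNReal.ofReal (q * D)) ≤ ((2 * C : ℝ≥0) : ℝ≥0∞) := by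
    refine (eLpNorm_sub_le hU.aestronglyMeasurable hW.aestronglyMeasurable hr1).trans ?_
    rw [two_mul, ENNReal.coe_add]
    exact add_le_add hUC hWC
  have hFamC : ∀ p ∈ edgeS G, kerNorm (Fam p) (ENNReal.ofReal (q * D)) ≤ ((2 * C : ℝ≥0) : ℝ≥0∞) := by
    intro p _
    simp only [hFam]
    split_ifs
    · exact hDC
    · refine (hMC p).trans ?_
      rw [ENNReal.coe_le_coe, two_mul]
      exact le_self_add
  have hDI : Integrable (fun z : ℝ × ℝ => U z.1 z.2 - W z.1 z.2) (unif01.prod unif01) := by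
    refine memLp_one_iff_integrable.1 ⟨hDm.aestronglyMeasurable, ?_⟩
    exact lt_of_le_of_lt ((kerNorm_mono hDm hr1).trans hDC) ENNReal.coe_lt_top
  set ψ : (Fin v → ℝ) → ℝ := fun x => ∏ a, φ a (x a) with hψdef
  have hψ : Measurable ψ := Finset.measurable_prod _ fun a _ => (hφ a).comp (measurable_pi_apply a)
  have hψ1 : ∀ x, |ψ x| ≤ 1 := by
    intro x
    rw [hψdef, Finset.abs_prod]
    exact Finset.prod_le_one (fun _ _ => abs_nonneg _) fun a _ => hφ1 a _
  have hprod : ∀ x : Fin v → ℝ, ((U (x e.1) (x e.2) - W (x e.1) (x e.2)) *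
        ∏ p ∈ (edgeS G).erase e, M p (x p.1) (x p.2)) = ∏ p ∈ edgeS G, Fam p (x p.1) (x p.2) := by
    intro x
    rw [← Finset.mul_prod_erase _ _ he]
    congr 1
    · simp [hFam]
    · refine Finset.prod_congr rfl fun p hp => ?_
      simp [hFam, Finset.ne_of_mem_erase hp]
  set B : Set (Fin v → ℝ) := ⋃ p ∈ (edgeS G).erase e, {x | (K : ℝ) < |M p (x p.1) (x p.2)|} with hBdef
  have hBp : ∀ p : Fin v × Fin v, MeasurableSet {x : Fin v → ℝ | (K : ℝ) < |M p (x p.1) (x p.2)|} := fun p =>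
    measurableSet_lt measurable_const (meas_pair (hM p) _ _).abs
  have hB : MeasurableSet B := Finset.measurableSet_biUnion _ fun p _ => hBp p
  have hBm : piU v B ≤ (((edgeS G).card * (C / K) : ℝ≥0) : ℝ≥0∞) := by
    refine (measure_biUnion_finset_le _ _).trans ?_
    have hone : ∀ p ∈ (edgeS G).erase e, piU v {x | (K : ℝ) < |M p (x p.1) (x p.2)|} ≤ ((C / K : ℝ≥0) : ℝ≥0∞) := by
      intro p hp
      have mp := mp_pair (edgeS_ne (Finset.mem_of_mem_erase hp))
      have hz : MeasurableSet {z : ℝ × ℝ | (K : ℝ) < |M p z.1 z.2|} :=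
        measurableSet_lt measurable_const (hM p).abs
      have e1 : piU v {x | (K : ℝ) < |M p (x p.1) (x p.2)|} =
          (unif01.prod unif01) {z : ℝ × ℝ | (K : ℝ) < |M p z.1 z.2|} :=
        mp.measure_preimage hz.nullMeasurableSet
      rw [e1, ENNReal.coe_div (by positivity)]
      have h1 := mul_meas_ge_le_lintegral (μ := unif01.prod unif01)
        (f := fun z : ℝ × ℝ => ‖M p z.1 z.2‖ₑ) (hM p).enorm K
      have h2 : ∫⁻ z, ‖M p z.1 z.2‖ₑ ∂(unif01.prod unif01) ≤ C := by
        have := (kerNorm_mono (hM p) hr1).trans (hMC p)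
        rwa [kerNorm, eLpNorm_one_eq_lintegral_enorm] at this
      rw [ENNReal.le_div_iff_mul_le (Or.inl (by positivity)) (Or.inl (by simp)), mul_comm]
      refine le_trans ?_ (h1.trans h2)
      gcongr with z
      intro hz
      rw [← ofReal_norm, Real.norm_eq_abs, ← ENNReal.ofReal_coe_nnreal]
      exact ENNReal.ofReal_le_ofReal (le_of_lt hz)
    refine (Finset.sum_le_card_nsmul _ _ _ hone).trans ?_
    rw [nsmul_eq_mul, ENNReal.coe_mul]
    gcongr
    simp only [ENNReal.coe_natCast, Nat.cast_le]
    exact Finset.card_le_card (Finset.erase_subset _ _)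
  have hInt := graph_integrable G D hD hdeg q hq Fam hFamm (2 * C) hFamC hψ hψ1
  have h1 := graph_ui_real G D hD hdeg q hq Fam hFamm (2 * C) hFamC hψ1 B hB _ hBm
  simp_rw [hprod]
  rw [← integral_add_compl hB hInt, add_comm (4 * _ * _)]
  refine (abs_add_le _ _).trans (add_le_add (by simpa using h1) ?_)
  -- the truncated part
  set Tr : Fin v × Fin v → (Fin v → ℝ) → ℝ := fun p x =>
    if |M p (x p.1) (x p.2)| ≤ K then M p (x p.1) (x p.2) else 0 with hTr
  have hTrm : ∀ p, Measurable (Tr p) := fun p =>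
    Measurable.ite (measurableSet_le (meas_pair (hM p) _ _).abs measurable_const) (meas_pair (hM p) _ _) measurable_const
  have hTrK : ∀ p x, |Tr p x| ≤ K := by
    intro p x
    simp only [hTr]
    split_ifs with h
    · exact h
    · simp
  set s1 := ((edgeS G).erase e).filter (fun p => e.1 = p.1 ∨ e.1 = p.2) with hs1
  set s2 := ((edgeS G).erase e).filter (fun p => ¬ (e.1 = p.1 ∨ e.1 = p.2)) with hs2
  have habs : ∀ (s : Finset (Fin v × Fin v)) x, |∏ p ∈ s, Tr p x| ≤ (K : ℝ) ^ s.card := by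
    intro s x
    rw [Finset.abs_prod]
    exact (Finset.prod_le_prod (fun _ _ => abs_nonneg _) fun p _ => hTrK p x).trans_eq (Finset.prod_const _)
  have hcut := edge_cut_bound (edgeS_ne he) hU hW hDI
    (A := fun x => (∏ p ∈ s1, Tr p x) * φ e.1 (x e.1))
    (B := fun x => (∏ p ∈ s2, Tr p x) * ∏ a ∈ Finset.univ.erase e.1, φ a (x a))
    ((Finset.measurable_prod _ fun p _ => hTrm p).mul ((hφ _).comp (measurable_pi_apply _)))
    ((Finset.measurable_prod _ fun p _ => hTrm p).mul
      (Finset.measurable_prod _ fun a _ => (hφ a).comp (measurable_pi_apply _)))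
    (by
      intro x t
      rw [Function.update_of_ne (edgeS_ne he)]
      congr 1
      refine Finset.prod_congr rfl fun p hp => ?_
      have hne : p.1 ≠ e.2 ∧ p.2 ≠ e.2 := by
        simp only [hs1, edgeS, Finset.mem_filter, Finset.mem_erase, Finset.mem_univ, true_and] at hp he
        obtain ⟨⟨h1, h2, h3⟩, h4⟩ := hp
        obtain ⟨he1, he2⟩ := he
        have h1' : ¬ (p.1 = e.1 ∧ p.2 = e.2) := fun h => h1 (Prod.ext h.1 h.2)
        constructor <;> intro h
        · rcases h4 with h4 | h4
          · rw [← h4] at h; exact he2.ne h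
          · rw [h, ← h4] at h3; exact absurd h3 (not_lt.2 he2.le)
        · rcases h4 with h4 | h4
          · exact h1' ⟨h4.symm, h⟩
          · rw [← h4] at h; exact he2.ne h
      simp only [hTr, Function.update_of_ne hne.1, Function.update_of_ne hne.2])
    (by
      intro x t
      congr 1
      · refine Finset.prod_congr rfl fun p hp => ?_
        have hne : p.1 ≠ e.1 ∧ p.2 ≠ e.1 := by
          simp only [hs2, Finset.mem_filter, not_or] at hp
          exact ⟨fun h => hp.2.1 h.symm, fun h => hp.2.2 h.symm⟩
        simp only [hTr, Function.update_of_ne hne.1, Function.update_of_ne hne.2]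
      · refine Finset.prod_congr rfl fun a ha => ?_
        rw [Function.update_of_ne (Finset.ne_of_mem_erase ha)])
    (M := (K : ℝ) ^ s1.card) (N := (K : ℝ) ^ s2.card)
    (by
      intro x
      rw [abs_mul]
      exact (mul_le_mul (habs _ _) (hφ1 _ _) (abs_nonneg _) (by positivity)).trans (by rw [mul_one]))
    (by
      intro x
      rw [abs_mul]
      refine (mul_le_mul (habs _ _) ?_ (abs_nonneg _) (by positivity)).trans (by rw [mul_one])
      rw [Finset.abs_prod]
      exact Finset.prod_le_one (fun _ _ => abs_nonneg _) fun a _ => hφ1 a _)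
  have e3 : ∫ x in Bᶜ, (∏ p ∈ edgeS G, Fam p (x p.1) (x p.2)) * ψ x ∂(piU v) =
      ∫ x, (U (x e.1) (x e.2) - W (x e.1) (x e.2)) * (((∏ p ∈ s1, Tr p x) * φ e.1 (x e.1)) *
        ((∏ p ∈ s2, Tr p x) * ∏ a ∈ Finset.univ.erase e.1, φ a (x a))) ∂(piU v) := by
    rw [← integral_indicator hB.compl]
    congr 1
    ext x
    have e4 : (U (x e.1) (x e.2) - W (x e.1) (x e.2)) * (((∏ p ∈ s1, Tr p x) * φ e.1 (x e.1)) *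
        ((∏ p ∈ s2, Tr p x) * ∏ a ∈ Finset.univ.erase e.1, φ a (x a))) =
        ((U (x e.1) (x e.2) - W (x e.1) (x e.2)) * ∏ p ∈ (edgeS G).erase e, Tr p x) * ψ x := by
      rw [hψdef]
      simp only
      rw [← Finset.mul_prod_erase _ _ (Finset.mem_univ e.1),
        ← Finset.prod_filter_mul_prod_filter_not ((edgeS G).erase e) (fun p => e.1 = p.1 ∨ e.1 = p.2)]
      ring
    rw [e4]
    by_cases hx : x ∈ B
    · rw [Set.indicator_of_notMem (by simpa using hx)]
      simp only [hBdef, Set.mem_iUnion, Set.mem_ofPred_eq] at hx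
      obtain ⟨p, hp, hx⟩ := hx
      rw [Finset.prod_eq_zero hp (by simp [hTr, not_le.2 hx])]
      simp
    · rw [Set.indicator_of_mem (by simpa using hx), ← hprod]
      congr 2
      refine Finset.prod_congr rfl fun p hp => ?_
      simp only [hBdef, Set.mem_iUnion, Set.mem_ofPred_eq, not_exists, not_lt] at hx
      simp [hTr, hx p hp]
  rw [e3]
  refine hcut.trans ?_
  have hKr : (1 : ℝ) ≤ K := by exact_mod_cast hK
  rw [← pow_add]
  have hc : s1.card + s2.card ≤ (edgeS G).card := by
    rw [hs1, hs2, Finset.card_filter_add_card_filter_not]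
    exact Finset.card_le_card (Finset.erase_subset _ _)
  have := cutDist_nonneg U W
  gcongr

lemma counting {v : ℕ} (G : SimpleGraph (Fin v)) [DecidableRel G.Adj] (D : ℕ) (hD : 1 ≤ D)
    (hdeg : ∀ i, G.degree i ≤ D) (q : ℝ) (hq : 1 < q) (C : ℝ≥0)
    {U W : ℝ → ℝ → ℝ} (hU : Measurable (Function.uncurry U)) (hW : Measurable (Function.uncurry W))
    (hUC : kerNorm U (ENNReal.ofReal (q * D)) ≤ C) (hWC : kerNorm W (ENNReal.ofReal (q * D)) ≤ C)
    {φ : Fin v → ℝ → ℝ} (hφ : ∀ a, Measurable (φ a)) (hφ1 : ∀ a x, |φ a x| ≤ 1)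
    (K : ℝ≥0) (hK : 1 ≤ K) :
    |∫ x, edgeProd G (fun a b => U (x a) (x b)) * ∏ a, φ a (x a) ∂(piU v) -
      ∫ x, edgeProd G (fun a b => W (x a) (x b)) * ∏ a, φ a (x a) ∂(piU v)| ≤
      (edgeS G).card * (4 * (K : ℝ) ^ (edgeS G).card * cutDist U W +
        (2 * C : ℝ) ^ (edgeS G).card * ((edgeS G).card * (C / K) : ℝ) ^ (1 - 1 / q)) := by
  set κ := 4 * (K : ℝ) ^ (edgeS G).card * cutDist U W +
        (2 * C : ℝ) ^ (edgeS G).card * ((edgeS G).card * (C / K) : ℝ) ^ (1 - 1 / q) with hκ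
  have hψ : Measurable fun x : Fin v → ℝ => ∏ a, φ a (x a) :=
    Finset.measurable_prod _ fun a _ => (hφ a).comp (measurable_pi_apply a)
  have hψ1 : ∀ x : Fin v → ℝ, |∏ a, φ a (x a)| ≤ 1 := by
    intro x
    rw [Finset.abs_prod]
    exact Finset.prod_le_one (fun _ _ => abs_nonneg _) fun a _ => hφ1 a _
  have hmix : ∀ (A : Finset (Fin v × Fin v)) (p : Fin v × Fin v),
      Measurable (Function.uncurry (if p ∈ A then U else W)) ∧
      kerNorm (if p ∈ A then U else W) (ENNReal.ofReal (q * D)) ≤ C := by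
    intro A p
    split_ifs
    · exact ⟨hU, hUC⟩
    · exact ⟨hW, hWC⟩
  have main : ∀ A : Finset (Fin v × Fin v), A ⊆ edgeS G →
      |∫ x, (∏ p ∈ edgeS G, (if p ∈ A then U else W) (x p.1) (x p.2)) * ∏ a, φ a (x a) ∂(piU v) -
      ∫ x, (∏ p ∈ edgeS G, W (x p.1) (x p.2)) * ∏ a, φ a (x a) ∂(piU v)| ≤ A.card * κ := by
    intro A
    induction A using Finset.induction with
    | empty => simp
    | insert e A heA ih =>
      intro hA
      have he : e ∈ edgeS G := hA (Finset.mem_insert_self _ _)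
      have h1 := ih ((Finset.subset_insert _ _).trans hA)
      have h2 := count_step G D hD hdeg q hq C (fun p => if p ∈ A then U else W)
        (fun p => (hmix A p).1) (fun p => (hmix A p).2) hU hW hUC hWC hφ hφ1 K hK he
      have i1 := graph_integrable G D hD hdeg q hq (fun p => if p ∈ insert e A then U else W)
        (fun p => (hmix _ p).1) C (fun p _ => (hmix _ p).2) hψ hψ1
      have i2 := graph_integrable G D hD hdeg q hq (fun p => if p ∈ A then U else W)
        (fun p => (hmix _ p).1) C (fun p _ => (hmix _ p).2) hψ hψ1
      have h3 : ∫ x, ((U (x e.1) (x e.2) - W (x e.1) (x e.2)) *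
        ∏ p ∈ (edgeS G).erase e, (if p ∈ A then U else W) (x p.1) (x p.2)) * ∏ a, φ a (x a) ∂(piU v) =
        ∫ x, (∏ p ∈ edgeS G, (if p ∈ insert e A then U else W) (x p.1) (x p.2)) * ∏ a, φ a (x a) ∂(piU v) -
        ∫ x, (∏ p ∈ edgeS G, (if p ∈ A then U else W) (x p.1) (x p.2)) * ∏ a, φ a (x a) ∂(piU v) := by
        rw [← integral_sub i1 i2]
        congr 1
        ext x
        rw [← sub_mul]
        congr 1
        rw [← Finset.mul_prod_erase _ _ he,
          ← Finset.mul_prod_erase _ (fun p => (if p ∈ A then U else W) (x p.1) (x p.2)) he]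
        simp only [Finset.mem_insert_self, if_true, heA, if_false]
        rw [sub_mul]
        congr 2
        refine Finset.prod_congr rfl fun p hp => ?_
        simp [Finset.mem_insert, Finset.ne_of_mem_erase hp]
      rw [h3] at h2
      rw [Finset.card_insert_of_notMem heA]
      push_cast
      rw [add_mul, one_mul, add_comm (_ * κ)]
      exact (abs_sub_le _ _ _).trans (add_le_add h2 h1)
  have h := main (edgeS G) (le_refl _)
  simp only [edgeProd_eq]
  convert h using 6 with x
  refine Finset.prod_congr rfl fun p hp => ?_
  rw [if_pos hp]

lemma counting_eps {v : ℕ} (G : SimpleGraph (Fin v)) [DecidableRel G.Adj] (D : ℕ) (hD : 1 ≤ D)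
    (hdeg : ∀ i, G.degree i ≤ D) (q : ℝ) (hq : 1 < q) (C : ℝ≥0) (ε : ℝ) (hε : 0 < ε) :
    ∃ η : ℝ, 0 < η ∧ ∀ U W : ℝ → ℝ → ℝ, Measurable (Function.uncurry U) →
      Measurable (Function.uncurry W) →
      kerNorm U (ENNReal.ofReal (q * D)) ≤ C → kerNorm W (ENNReal.ofReal (q * D)) ≤ C →
      cutDist U W ≤ η →
      ∀ φ : Fin v → ℝ → ℝ, (∀ a, Measurable (φ a)) → (∀ a x, |φ a x| ≤ 1) →
      |∫ x, edgeProd G (fun a b => U (x a) (x b)) * ∏ a, φ a (x a) ∂(piU v) -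
        ∫ x, edgeProd G (fun a b => W (x a) (x b)) * ∏ a, φ a (x a) ∂(piU v)| ≤ ε := by
  have hq0 : 0 < 1 - 1 / q := by
    have : 1 / q < 1 := by rw [div_lt_one (by linarith)]; exact hq
    linarith
  set m := (edgeS G).card
  have ht : Tendsto (fun n : ℕ => (m : ℝ) * ((2 * C : ℝ) ^ m * (m * (C / ((n : ℝ≥0) : ℝ)) : ℝ) ^ (1 - 1 / q)))
      atTop (nhds (m * ((2 * C : ℝ) ^ m * (m * 0 : ℝ) ^ (1 - 1 / q)))) := by
    refine Tendsto.const_mul _ (Tendsto.const_mul _ ?_)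
    refine Tendsto.rpow_const (Tendsto.const_mul _ ?_) (Or.inr hq0.le)
    exact tendsto_const_nhds.div_atTop (by simpa using tendsto_natCast_atTop_atTop (R := ℝ))
  rw [mul_zero, Real.zero_rpow hq0.ne', mul_zero, mul_zero] at ht
  obtain ⟨n, hn1, hn⟩ := ((ht.eventually (gt_mem_nhds (half_pos hε))).and (eventually_ge_atTop 1)).exists
  refine ⟨ε / 2 / (m * (4 * (n : ℝ) ^ m) + 1), by positivity, ?_⟩
  intro U W hU hW hUC hWC hη φ hφ hφ1
  refine (counting G D hD hdeg q hq C hU hW hUC hWC hφ hφ1 (n : ℝ≥0) (by exact_mod_cast hn)).trans ?_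
  rw [mul_add]
  have h2 : (m : ℝ) * (4 * (((n : ℝ≥0) : ℝ)) ^ m * cutDist U W) ≤ ε / 2 := by
    rw [le_div_iff₀ (by positivity)] at hη
    have := cutDist_nonneg U W
    simp only [NNReal.coe_natCast]
    nlinarith
  linarith

/-- Hölder inequality on a set of small measure. -/
lemma setInt_holder {α : Type*} [MeasurableSpace α] {ρ : Measure α} [IsProbabilityMeasure ρ]
    {u h : α → ℝ} (hu : Measurable u) (hh : Measurable h) {p : ℝ} (hp : 1 < p) {C : ℝ≥0}
    (hC : eLpNorm u (ENNReal.ofReal p) ρ ≤ C) :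
    ‖∫ x, u x * h x ∂ρ‖ₑ ≤ C * (∫⁻ x, ‖h x‖ₑ ^ (p / (p - 1)) ∂ρ) ^ (1 - 1 / p) := by
  have hp0 : 0 < p := by linarith
  have hp1 : 0 < p - 1 := by linarith
  have hpq : p.HolderConjugate (p / (p - 1)) := Real.HolderConjugate.conjExponent hp
  calc ‖∫ x, u x * h x ∂ρ‖ₑ ≤ ∫⁻ x, ‖u x * h x‖ₑ ∂ρ := enorm_integral_le_lintegral_enorm _
    _ = ∫⁻ x, ((fun x => ‖u x‖ₑ) * (fun x => ‖h x‖ₑ)) x ∂ρ := by simp [enorm_mul]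
    _ ≤ (∫⁻ x, ‖u x‖ₑ ^ p ∂ρ) ^ (1 / p) * (∫⁻ x, ‖h x‖ₑ ^ (p / (p - 1)) ∂ρ) ^ (1 / (p / (p - 1))) :=
        ENNReal.lintegral_mul_le_Lp_mul_Lq ρ hpq hu.enorm.aemeasurable hh.enorm.aemeasurable
    _ ≤ _ := by
        have e1 : 1 / (p / (p - 1)) = 1 - 1 / p := by field_simp
        rw [e1]
        gcongr
        rw [eLpNorm_eq_lintegral_rpow_enorm_toReal (by simpa using hp0) (by simp),
          ENNReal.toReal_ofReal hp0.le] at hC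
        exact hC

lemma sets_tendsto {u : ℕ → ℝ × ℝ → ℝ} {w : ℝ × ℝ → ℝ} {ρ : Measure (ℝ × ℝ)} [IsProbabilityMeasure ρ]
    (hu : ∀ n, Measurable (u n)) {p : ℝ} (hp : 1 < p) {C : ℝ≥0}
    (hC : ∀ n, eLpNorm (u n) (ENNReal.ofReal p) ρ ≤ C) (hui : ∀ n, Integrable (u n) ρ)
    (hw : Integrable w ρ)
    (hrect : ∀ S T, MeasurableSet S → MeasurableSet T →
      Tendsto (fun n => ∫ z in S ×ˢ T, u n z ∂ρ) atTop (nhds (∫ z in S ×ˢ T, w z ∂ρ))) 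
    (A : Set (ℝ × ℝ)) (hA : MeasurableSet A) :
    Tendsto (fun n => ∫ z in A, u n z ∂ρ) atTop (nhds (∫ z in A, w z ∂ρ)) := by
  have hp0 : 0 < p := by linarith
  have hp1 : 0 < p - 1 := by linarith
  have he : 0 < 1 - 1 / p := by
    have : 1 / p < 1 := by rw [div_lt_one hp0]; exact hp
    linarith
  induction A, hA using MeasurableSpace.induction_on_inter generateFrom_prod.symm isPiSystem_prod with
  | empty => simp
  | basic t ht =>
    obtain ⟨S, hS, T, hT, rfl⟩ := ht
    exact hrect S T hS hT
  | compl t ht ih =>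
    have h1 := hrect univ univ MeasurableSet.univ MeasurableSet.univ
    simp only [univ_prod_univ, Measure.restrict_univ] at h1
    have := h1.sub ih
    rw [setIntegral_compl ht hw]
    refine this.congr fun n => ?_
    rw [setIntegral_compl ht (hui n)]
  | iUnion f hd hm ih =>
    set B := ⋃ i, f i with hB
    have hBm : MeasurableSet B := MeasurableSet.iUnion hm
    let P : ℕ → Set (ℝ × ℝ) := fun k => ⋃ i ∈ Finset.range k, f i
    have hPm : ∀ k, MeasurableSet (P k) := fun k => Finset.measurableSet_biUnion _ fun i _ => hm i
    have hPB : ∀ k, P k ⊆ B := fun k => iUnion₂_subset fun i _ => subset_iUnion f i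
    have hPmono : Monotone P := by
      intro k l hkl
      exact biUnion_subset_biUnion_left (by simpa using hkl)
    have hPU : ⋃ k, P k = B := by
      apply subset_antisymm (iUnion_subset hPB)
      refine iUnion_subset fun i => ?_
      exact subset_iUnion_of_subset (i+1) (subset_biUnion_of_mem (u := f) (by simp))
    have hPt : ∀ k, Tendsto (fun n => ∫ z in P k, u n z ∂ρ) atTop (nhds (∫ z in P k, w z ∂ρ)) := by
      intro k
      have key : ∀ g : ℝ × ℝ → ℝ, Integrable g ρ → ∫ z in P k, g z ∂ρ = ∑ i ∈ Finset.range k, ∫ z in f i, g z ∂ρ := by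
        intro g hg
        exact integral_biUnion_finset _ (fun i _ => hm i) (fun i _ j _ hij => hd hij) (fun i _ => hg.integrableOn)
      rw [key w hw]
      simp_rw [fun n => key (u n) (hui n)]
      exact tendsto_finsetSum _ fun i _ => ih i
    have hPw : Tendsto (fun k => ∫ z in P k, w z ∂ρ) atTop (nhds (∫ z in B, w z ∂ρ)) := by
      have := tendsto_setIntegral_of_monotone (μ := ρ) (f := w) hPm hPmono (by rw [hPU]; exact hw.integrableOn)
      rwa [hPU] at this
    have hmt : Tendsto (fun k => (C : ℝ≥0∞) * (ρ (B \ P k)) ^ (1 - 1/p)) atTop (nhds 0) := by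
      have h1 : Tendsto (fun k => ρ (B \ P k)) atTop (nhds (ρ (⋂ k, B \ P k))) :=
        tendsto_measure_iInter_atTop (fun k => (hBm.diff (hPm k)).nullMeasurableSet)
          (fun k l hkl => sdiff_subset_sdiff_right (hPmono hkl)) ⟨0, measure_ne_top _ _⟩
      have h2 : ⋂ k, B \ P k = ∅ := by
        rw [← sdiff_iUnion, hPU, sdiff_self]
      rw [h2, measure_empty] at h1
      have h3 := (ENNReal.continuous_rpow_const (y := 1 - 1/p)).continuousAt.tendsto.comp h1
      have h4 := ENNReal.Tendsto.const_mul (a := (C:ℝ≥0∞)) h3 (Or.inr ENNReal.coe_ne_top)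
      rw [ENNReal.zero_rpow_of_pos he, mul_zero] at h4
      exact h4
    rw [Metric.tendsto_atTop]
    intro ε hε
    have hm1 : ∀ᶠ k in atTop, (C : ℝ≥0∞) * (ρ (B \ P k)) ^ (1 - 1/p) < ENNReal.ofReal (ε/3) :=
      hmt.eventually (gt_mem_nhds (by simpa using by positivity))
    have hm2 : ∀ᶠ k in atTop, dist (∫ z in P k, w z ∂ρ) (∫ z in B, w z ∂ρ) < ε/3 :=
      hPw.eventually (Metric.ball_mem_nhds _ (by positivity))
    obtain ⟨k, hk1, hk2⟩ := (hm1.and hm2).exists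
    have hm3 : ∀ᶠ n in atTop, dist (∫ z in P k, u n z ∂ρ) (∫ z in P k, w z ∂ρ) < ε/3 :=
      (hPt k).eventually (Metric.ball_mem_nhds _ (by positivity))
    obtain ⟨N, hN⟩ := eventually_atTop.1 hm3
    refine ⟨N, fun n hn => ?_⟩
    have h5 : dist (∫ z in B, u n z ∂ρ) (∫ z in P k, u n z ∂ρ) < ε/3 := by
      have e1 : (∫ z in B, u n z ∂ρ) - (∫ z in P k, u n z ∂ρ) = ∫ z, u n z * (B \ P k).indicator 1 z ∂ρ := by
        rw [← setIntegral_sdiff (hPm k) (hui n).integrableOn (hPB k), ← integral_indicator (hBm.diff (hPm k))]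
        congr 1; ext z; by_cases hz : z ∈ B \ P k <;> simp [hz, indicator]
      have h6 := setInt_holder (hu n) (measurable_one.indicator (hBm.diff (hPm k))) hp (hC n)
      have e2 : ∫⁻ x, ‖(B \ P k).indicator (1 : ℝ × ℝ → ℝ) x‖ₑ ^ (p / (p - 1)) ∂ρ = ρ (B \ P k) := by
        rw [← lintegral_indicator_one (hBm.diff (hPm k))]
        congr 1; ext z
        by_cases hz : z ∈ B \ P k
        · simp [hz, indicator]
        · simp [hz, indicator, ENNReal.zero_rpow_of_pos (div_pos hp0 hp1)]
      rw [e2] at h6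
      have h7 := h6.trans_lt hk1
      rw [← e1, ← ofReal_norm, ENNReal.ofReal_lt_ofReal_iff (by positivity)] at h7
      rwa [dist_eq_norm]
    have := hN n hn
    have t1 := dist_triangle (∫ z in B, u n z ∂ρ) (∫ z in P k, u n z ∂ρ) (∫ z in B, w z ∂ρ)
    have t2 := dist_triangle (∫ z in P k, u n z ∂ρ) (∫ z in P k, w z ∂ρ) (∫ z in B, w z ∂ρ)
    linarith

lemma simple_tendsto {α : Type*} [MeasurableSpace α] {u : ℕ → α → ℝ} {w : α → ℝ} {ρ : Measure α}
    [IsProbabilityMeasure ρ] (hui : ∀ n, Integrable (u n) ρ) (hw : Integrable w ρ)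
    (hA : ∀ A, MeasurableSet A →
      Tendsto (fun n => ∫ z in A, u n z ∂ρ) atTop (nhds (∫ z in A, w z ∂ρ))) (h : SimpleFunc α ℝ) :
    Tendsto (fun n => ∫ z, u n z * h z ∂ρ) atTop (nhds (∫ z, w z * h z ∂ρ)) := by
  have hIntg : ∀ (g : α → ℝ), Integrable g ρ → ∀ h : SimpleFunc α ℝ, Integrable (fun z => g z * h z) ρ := by
    intro g hg h
    obtain ⟨c, hc⟩ := h.exists_forall_norm_le
    exact hg.mul_bdd (c := c) h.measurable.aestronglyMeasurable (ae_of_all _ hc)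
  induction h using SimpleFunc.induction with
  | @const c s hs =>
    have key : ∀ g : α → ℝ, ∫ z, g z * (SimpleFunc.piecewise s hs (SimpleFunc.const α c) (SimpleFunc.const α 0)) z ∂ρ
        = c * ∫ z in s, g z ∂ρ := by
      intro g
      rw [← integral_indicator hs, ← integral_const_mul]
      congr 1; ext z
      by_cases hz : z ∈ s <;> simp [hz, mul_comm]
    rw [key]
    simp_rw [key]
    exact (hA s hs).const_mul c
  | @add f g hfg ihf ihg =>
    have key : ∀ k : α → ℝ, Integrable k ρ → ∫ z, k z * (f + g) z ∂ρ = ∫ z, k z * f z ∂ρ + ∫ z, k z * g z ∂ρ := by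
      intro k hk
      rw [← integral_add (hIntg k hk f) (hIntg k hk g)]
      congr 1; ext z; simp [mul_add]
    rw [key w hw]
    simp_rw [fun n => key (u n) (hui n)]
    exact ihf.add ihg

lemma lp_lsc {α : Type*} [MeasurableSpace α] {u : ℕ → α → ℝ} {w : α → ℝ} {ρ : Measure α}
    [IsProbabilityMeasure ρ] (hu : ∀ n, Measurable (u n)) (hwm : Measurable w)
    {p : ℝ} (hp : 1 < p) {C : ℝ≥0} (hC : ∀ n, eLpNorm (u n) (ENNReal.ofReal p) ρ ≤ C)
    (hw : Integrable w ρ)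
    (hS : ∀ h : SimpleFunc α ℝ, Tendsto (fun n => ∫ z, u n z * h z ∂ρ) atTop (nhds (∫ z, w z * h z ∂ρ))) :
    eLpNorm w (ENNReal.ofReal p) ρ ≤ C := by
  have hp0 : 0 < p := by linarith
  have hp1 : 0 < p - 1 := by linarith
  rw [eLpNorm_eq_lintegral_rpow_enorm_toReal (by simpa using hp0) (by simp), ENNReal.toReal_ofReal hp0.le]
  have hwe : Measurable (fun x => ‖w x‖ₑ) := hwm.enorm
  let g : ℕ → SimpleFunc α ℝ≥0∞ := SimpleFunc.eapprox (fun x => ‖w x‖ₑ)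
  have hsup : ∀ x, ‖w x‖ₑ ^ p = ⨆ k, (g k x) ^ p := by
    intro x
    have := SimpleFunc.iSup_eapprox_apply hwe x
    rw [← this, (ENNReal.monotone_rpow_of_nonneg hp0.le).map_iSup_of_continuousAt
      (ENNReal.continuous_rpow_const.continuousAt) (by simp [hp0])]
  have hle : ∀ k x, g k x ≤ ‖w x‖ₑ := fun k x => by
    rw [← SimpleFunc.iSup_eapprox_apply hwe x]; exact le_iSup (fun k => SimpleFunc.eapprox (fun x => ‖w x‖ₑ) k x) k
  have hlt : ∀ k x, g k x < ⊤ := fun k x => (hle k x).trans_lt enorm_lt_top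
  have main : ∀ k, (∫⁻ x, (g k x) ^ p ∂ρ) ≤ (C : ℝ≥0∞) ^ p := by
    intro k
    set I := ∫⁻ x, (g k x) ^ p ∂ρ with hI
    have hIfin : I ≠ ⊤ := by
      obtain ⟨M, hM⟩ := ((g k).map ENNReal.toReal).exists_forall_norm_le
      have : I ≤ ∫⁻ x, (ENNReal.ofReal M) ^ p ∂ρ := by
        refine lintegral_mono fun x => ENNReal.rpow_le_rpow ?_ hp0.le
        have := hM x
        rw [SimpleFunc.map_apply, Real.norm_of_nonneg ENNReal.toReal_nonneg] at this
        rw [← ENNReal.ofReal_toReal (hlt k x).ne]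
        exact ENNReal.ofReal_le_ofReal this
      refine ne_top_of_le_ne_top ?_ this
      simp only [lintegral_const, measure_univ, mul_one]
      exact ENNReal.rpow_ne_top_of_nonneg hp0.le ENNReal.ofReal_ne_top
    have hpos : MeasurableSet {x | 0 ≤ w x} := measurableSet_le measurable_const hwm
    let sg : SimpleFunc α ℝ := SimpleFunc.piecewise _ hpos (SimpleFunc.const α 1) (SimpleFunc.const α (-1))
    let h : SimpleFunc α ℝ := ((g k).map (fun t => t.toReal ^ (p - 1))) * sg
    have hsg : ∀ x, w x * sg x = |w x| := by
      intro x
      by_cases hx : 0 ≤ w x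
      · simp [sg, hx, abs_of_nonneg hx]
      · simp [sg, hx, abs_of_neg (not_le.1 hx)]
    have hsg1 : ∀ x, |sg x| = 1 := by
      intro x
      by_cases hx : 0 ≤ w x <;> simp [sg, hx]
    have hhx : ∀ x, h x = (g k x).toReal ^ (p - 1) * sg x := fun x => rfl
    have hhe : ∀ x, ‖h x‖ₑ = (g k x) ^ (p - 1) := by
      intro x
      rw [hhx, enorm_mul, ← ofReal_norm (sg x), Real.norm_eq_abs, hsg1, ENNReal.ofReal_one, mul_one,
        ← ofReal_norm, Real.norm_of_nonneg (by positivity), ← ENNReal.ofReal_rpow_of_nonneg ENNReal.toReal_nonneg hp1.le,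
        ENNReal.ofReal_toReal (hlt k x).ne]
    have hIb : I ≤ ENNReal.ofReal (∫ x, w x * h x ∂ρ) := by
      have hwh : Integrable (fun z => w z * h z) ρ := by
        obtain ⟨c, hc⟩ := h.exists_forall_norm_le
        exact hw.mul_bdd (c := c) h.measurable.aestronglyMeasurable (ae_of_all _ hc)
      have hnn : ∀ x, w x * h x = |w x| * (g k x).toReal ^ (p - 1) := by
        intro x; rw [hhx, ← hsg]; ring
      rw [ofReal_integral_eq_lintegral_ofReal hwh (ae_of_all _ fun x => by
        simp only [Pi.zero_apply]; rw [hnn]; positivity)]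
      refine lintegral_mono fun x => ?_
      rw [hnn, ENNReal.ofReal_mul (abs_nonneg _), ← Real.norm_eq_abs, ofReal_norm,
        ← ENNReal.ofReal_rpow_of_nonneg ENNReal.toReal_nonneg hp1.le, ENNReal.ofReal_toReal (hlt k x).ne]
      calc g k x ^ p = g k x * g k x ^ (p - 1) := by
            have := ENNReal.rpow_add_of_nonneg (x := g k x) 1 (p - 1) zero_le_one hp1.le
            rw [ENNReal.rpow_one] at this
            rw [← this]; congr 1; ring
        _ ≤ _ := by gcongr; exact hle k x
    have hb : ‖∫ x, w x * h x ∂ρ‖ₑ ≤ C * I ^ (1 - 1 / p) := by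
      refine le_of_tendsto (hS h).enorm (Eventually.of_forall fun n => ?_)
      refine (setInt_holder (hu n) h.measurable hp (hC n)).trans (le_of_eq ?_)
      congr 3
      ext x
      rw [hhe, ← ENNReal.rpow_mul]
      congr 1
      field_simp
    have hIC : I ≤ C * I ^ (1 - 1 / p) := by
      refine hIb.trans (le_trans ?_ hb)
      rw [← ofReal_norm]; exact ENNReal.ofReal_le_ofReal (Real.le_norm_self _)
    by_cases hI0 : I = 0
    · rw [hI0]; exact zero_le
    have : I ^ (1 / p) ≤ C := by
      have e : I = I ^ (1 / p) * I ^ (1 - 1 / p) := by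
        rw [← ENNReal.rpow_add _ _ hI0 hIfin]; simp
      have h0 : I ^ (1 - 1/p) ≠ 0 := by
        intro h0
        rw [ENNReal.rpow_eq_zero_iff] at h0
        rcases h0 with h0 | h0
        · exact hI0 h0.1
        · exact hIfin h0.1
      have h1 : I ^ (1 - 1/p) ≠ ⊤ := by
        intro h0
        rw [ENNReal.rpow_eq_top_iff] at h0
        rcases h0 with h0 | h0
        · exact hI0 h0.1
        · exact hIfin h0.1
      rw [← ENNReal.mul_le_mul_iff_left h0 h1]
      rw [← e]; exact hIC
    calc I = (I ^ (1 / p)) ^ p := by rw [← ENNReal.rpow_mul]; simp [hp0.ne']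
      _ ≤ _ := ENNReal.rpow_le_rpow this hp0.le
  have : ∫⁻ x, ‖w x‖ₑ ^ p ∂ρ ≤ (C : ℝ≥0∞) ^ p := by
    simp_rw [hsup]
    rw [lintegral_iSup (fun k => (g k).measurable.pow_const p)]
    · exact iSup_le main
    · intro k l hkl x
      exact ENNReal.rpow_le_rpow (SimpleFunc.monotone_eapprox _ hkl x) hp0.le
  calc _ ≤ ((C : ℝ≥0∞) ^ p) ^ (1 / p) := ENNReal.rpow_le_rpow this (by positivity)
    _ = C := by rw [← ENNReal.rpow_mul]; simp [hp0.ne']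

lemma kerNorm_lim {U : ℕ → ℝ → ℝ → ℝ} {W : ℝ → ℝ → ℝ} (hU : ∀ n, Measurable (Function.uncurry (U n)))
    (hW : Measurable (Function.uncurry W)) {p : ℝ} (hp : 1 < p) {C : ℝ≥0}
    (hC : ∀ n, kerNorm (U n) (ENNReal.ofReal p) ≤ C) (hW1 : kerNorm W 1 ≠ ⊤)
    (hcut : Tendsto (fun n => cutDist (U n) W) atTop (nhds 0)) :
    kerNorm W (ENNReal.ofReal p) ≤ C := by
  have hWi : Integrable (fun z : ℝ × ℝ => W z.1 z.2) (unif01.prod unif01) :=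
    memLp_one_iff_integrable.1 ⟨hW.aestronglyMeasurable, lt_top_iff_ne_top.2 hW1⟩
  have hUi : ∀ n, Integrable (fun z : ℝ × ℝ => U n z.1 z.2) (unif01.prod unif01) := fun n => by
    refine memLp_one_iff_integrable.1 ⟨(hU n).aestronglyMeasurable, ?_⟩
    have h1 : (1:ℝ≥0∞) ≤ ENNReal.ofReal p := by
      rw [← ENNReal.ofReal_one]; exact ENNReal.ofReal_le_ofReal hp.le
    exact ((kerNorm_mono (hU n) h1).trans (hC n)).trans_lt ENNReal.coe_lt_top
  have hU' : ∀ n, Measurable (fun z : ℝ × ℝ => U n z.1 z.2) := hU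
  have hW' : Measurable (fun z : ℝ × ℝ => W z.1 z.2) := hW
  unfold kerNorm at hC ⊢
  refine lp_lsc hU' hW' hp hC hWi fun h => ?_
  refine simple_tendsto hUi hWi (fun A hA => ?_) h
  refine sets_tendsto hU' hp hC hUi hWi (fun S T hS hT => ?_) A hA
  rw [tendsto_iff_dist_tendsto_zero]
  refine squeeze_zero (fun _ => dist_nonneg) (fun n => ?_) hcut
  have hI := (hUi n).sub hWi
  have := le_cutDist hI hS hT
  refine le_trans (le_of_eq ?_) this
  rw [Real.dist_eq, ← integral_sub (hUi n).integrableOn hWi.integrableOn, ← Measure.prod_restrict, integral_prod]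
  rw [Measure.prod_restrict]
  exact hI.integrableOn

/-- Everywhere-valid probability-vector valued functions. -/
structure TT (c : ℕ) where
  val : ℝ → Fin c → ℝ
  property : Measurable val ∧ ∀ u, (∀ r, 0 ≤ val u r) ∧ ∑ r, val u r = 1

/-- Bounded measurable test functions. -/
structure Tst where
  val : ℝ → ℝ
  property : Measurable val ∧ ∃ M, ∀ x, |val x| ≤ M

namespace TT
variable {c : ℕ}

lemma meas (f : TT c) (r : Fin c) : Measurable fun u => f.1 u r := (measurable_pi_iff.1 f.2.1) r
lemma nn (f : TT c) (u : ℝ) (r : Fin c) : 0 ≤ f.1 u r := (f.2.2 u).1 r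
lemma sum_one (f : TT c) (u : ℝ) : ∑ r, f.1 u r = 1 := (f.2.2 u).2
lemma le_one (f : TT c) (u : ℝ) (r : Fin c) : f.1 u r ≤ 1 := by
  rw [← f.sum_one u]
  exact Finset.single_le_sum (f := fun r => f.1 u r) (fun i _ => f.nn u i) (Finset.mem_univ r)
lemma abs_le (f : TT c) (u : ℝ) (r : Fin c) : |f.1 u r| ≤ 1 := by
  rw [abs_of_nonneg (f.nn u r)]; exact f.le_one u r

lemma test_int (h : Tst) : Integrable h.1 unif01 := by
  obtain ⟨M, hM⟩ := h.2.2
  exact Integrable.of_bound h.2.1.aestronglyMeasurable M (ae_of_all _ hM)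

lemma mul_int {h : ℝ → ℝ} (hh : Integrable h unif01) (f : TT c) (r : Fin c) :
    Integrable (fun u => h u * f.1 u r) unif01 :=
  hh.mul_bdd (c := 1) (f.meas r).aestronglyMeasurable (ae_of_all _ fun u => f.abs_le u r)

/-- The pairing of `f` with a test function. -/
noncomputable def pr (h : ℝ → ℝ) (f : TT c) (r : Fin c) : ℝ := ∫ u, h u * f.1 u r ∂unif01

/-- All pairings. -/
noncomputable def emb (f : TT c) : Tst × Fin c → ℝ := fun k => pr k.1.1 f k.2

noncomputable instance : UniformSpace (TT c) := UniformSpace.comap emb inferInstance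

lemma continuous_emb : Continuous (emb : TT c → _) := continuous_induced_dom

lemma continuous_pr (h : Tst) (r : Fin c) : Continuous fun f : TT c => pr h.1 f r :=
  (continuous_apply (h, r)).comp continuous_emb

lemma uc_extract {Φ : TT c → ℝ} (hΦ : UniformContinuous Φ) (ε : ℝ) (hε : 0 < ε) :
    ∃ (s : Finset (Tst × Fin c)) (δ : ℝ), 0 < δ ∧ ∀ f g : TT c,
      (∀ k ∈ s, |pr k.1.1 f k.2 - pr k.1.1 g k.2| < δ) → |Φ f - Φ g| < ε := by
  have h1 : {p : TT c × TT c | dist (Φ p.1) (Φ p.2) < ε} ∈ uniformity (TT c) :=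
    hΦ (Metric.dist_mem_uniformity hε)
  have h2 : uniformity (TT c) = ⨅ k : Tst × Fin c,
      Filter.comap (fun p : TT c × TT c => (emb p.1 k, emb p.2 k)) (uniformity ℝ) := by
    change Filter.comap _ (uniformity (Tst × Fin c → ℝ)) = _
    rw [Pi.uniformity, Filter.comap_iInf]
    simp only [Filter.comap_comap]
    rfl
  rw [h2] at h1
  have hb := Filter.HasBasis.iInf' (fun k : Tst × Fin c =>
    (Metric.uniformity_basis_dist (α := ℝ)).comap (fun p : TT c × TT c => (emb p.1 k, emb p.2 k)))
  obtain ⟨I, ⟨hI1, hI2⟩, hI3⟩ := hb.mem_iff.1 h1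
  obtain ⟨δ, hδ0, hδ⟩ : ∃ δ : ℝ, 0 < δ ∧ ∀ i ∈ hI1.toFinset, δ ≤ I.2 i := by
    have : ∀ s : Finset (Tst × Fin c), (∀ i ∈ s, 0 < I.2 i) → ∃ δ : ℝ, 0 < δ ∧ ∀ i ∈ s, δ ≤ I.2 i := by
      classical
      intro s
      induction s using Finset.induction with
      | empty => intro _; exact ⟨1, one_pos, by simp⟩
      | insert a s _ ih =>
        intro h
        obtain ⟨δ, h0, h1⟩ := ih fun i hi => h i (Finset.mem_insert_of_mem hi)
        refine ⟨min δ (I.2 a), lt_min h0 (h a (Finset.mem_insert_self _ _)), fun i hi => ?_⟩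
        rcases Finset.mem_insert.1 hi with rfl | hi
        · exact min_le_right _ _
        · exact (min_le_left _ _).trans (h1 i hi)
    exact this _ fun i hi => hI2 i (hI1.mem_toFinset.1 hi)
  refine ⟨hI1.toFinset, δ, hδ0, fun f g hfg => ?_⟩
  have : (f, g) ∈ {p : TT c × TT c | dist (Φ p.1) (Φ p.2) < ε} := by
    apply hI3
    simp only [Set.mem_iInter]
    intro i hi
    have := (hfg i (hI1.mem_toFinset.2 hi)).trans_le (hδ i (hI1.mem_toFinset.2 hi))
    simpa [emb, Real.dist_eq] using this
  simpa [Real.dist_eq] using this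

lemma memLp2 (f : TT c) (r : Fin c) : MemLp (fun u => f.1 u r) 2 unif01 :=
  MemLp.of_bound (f.meas r).aestronglyMeasurable 1 (ae_of_all _ fun u => f.abs_le u r)

lemma test_memLp2 (h : Tst) : MemLp h.1 2 unif01 := by
  obtain ⟨M, hM⟩ := h.2.2
  exact MemLp.of_bound h.2.1.aestronglyMeasurable M (ae_of_all _ hM)

lemma ultra_lim (U : Ultrafilter (TT c)) (r : Fin c) :
    ∃ k : ℝ → ℝ, Measurable k ∧ Integrable k unif01 ∧
      ∀ h : Tst, Tendsto (fun f : TT c => pr h.1 f r) U (nhds (∫ u, h.1 u * k u ∂unif01)) := by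
  let Φ : TT c → WeakDual ℝ (Lp ℝ 2 unif01) := fun f =>
    StrongDual.toWeakDual (InnerProductSpace.toDual ℝ (Lp ℝ 2 unif01) ((f.memLp2 r).toLp _))
  have hK := WeakDual.isCompact_closedBall (𝕜 := ℝ) (E := Lp ℝ 2 unif01) 0 1
  have hΦ : ∀ f, Φ f ∈ WeakDual.toStrongDual ⁻¹' Metric.closedBall (0 : StrongDual ℝ (Lp ℝ 2 unif01)) 1 := by
    intro f
    simp only [Set.mem_preimage, mem_closedBall_zero_iff]
    change ‖InnerProductSpace.toDual ℝ (Lp ℝ 2 unif01) ((f.memLp2 r).toLp _)‖ ≤ 1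
    rw [LinearIsometryEquiv.norm_map]
    refine (Lp.norm_le_of_ae_bound zero_le_one (C := 1) ?_).trans ?_
    · filter_upwards [(f.memLp2 r).coeFn_toLp] with u hu
      rw [hu]; exact f.abs_le u r
    · simp [measureUnivNNReal]
  obtain ⟨L, -, hL⟩ := isCompact_iff_ultrafilter_le_nhds.1 hK (U.map Φ)
    (by
      rw [Ultrafilter.coe_map, Filter.le_principal_iff, Filter.mem_map]
      exact Filter.univ_mem' hΦ)
  let kk : Lp ℝ 2 unif01 := (InnerProductSpace.toDual ℝ _).symm (WeakDual.toStrongDual L)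
  refine ⟨kk, (Lp.stronglyMeasurable kk).measurable, (Lp.memLp kk).integrable (by norm_num), fun h => ?_⟩
  have h1 : Tendsto (fun f => Φ f ((test_memLp2 h).toLp _)) U (nhds (L ((test_memLp2 h).toLp _))) :=
    ((WeakDual.eval_continuous ((test_memLp2 h).toLp _)).tendsto L).comp hL
  have key : ∀ g : Lp ℝ 2 unif01, inner ℝ g ((test_memLp2 h).toLp _) = ∫ u, h.1 u * g u ∂unif01 := by
    intro g
    rw [L2.inner_def]
    refine integral_congr_ae ?_
    filter_upwards [(test_memLp2 h).coeFn_toLp] with u hu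
    rw [hu]; simp
  have e1 : L ((test_memLp2 h).toLp _) = ∫ u, h.1 u * kk u ∂unif01 := by
    rw [← key, InnerProductSpace.toDual_symm_apply]; rfl
  rw [← e1]
  refine h1.congr fun f => ?_
  change inner ℝ ((f.memLp2 r).toLp _) ((test_memLp2 h).toLp _) = _
  rw [key]
  refine integral_congr_ae ?_
  filter_upwards [(f.memLp2 r).coeFn_toLp] with u hu
  rw [hu]

instance : CompactSpace (TT c) := by
  refine ⟨isCompact_iff_ultrafilter_le_nhds.2 fun U _ => ?_⟩
  choose k hkm hki hk using ultra_lim U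
  let ind : ∀ A : Set ℝ, MeasurableSet A → Tst := fun A hA =>
    ⟨A.indicator 1, measurable_one.indicator hA, 1, fun x => by
      by_cases h : x ∈ A <;> simp [h]⟩
  have e : ∀ A (hA : MeasurableSet A) (g : ℝ → ℝ), ∫ u, (ind A hA).1 u * g u ∂unif01 = ∫ u in A, g u ∂unif01 := by
    intro A hA g
    rw [← integral_indicator hA]; congr 1; ext u
    by_cases h : u ∈ A <;> simp [h, ind]
  have h0 : ∀ r, 0 ≤ᵐ[unif01] k r := by
    intro r
    refine ae_nonneg_of_forall_setIntegral_nonneg (hki r) fun A hA _ => ?_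
    rw [← e A hA]
    refine ge_of_tendsto (hk r (ind A hA)) (Filter.Eventually.of_forall fun f => ?_)
    rw [pr, e A hA]
    exact integral_nonneg fun u => f.nn u r
  have h1 : (fun u => ∑ r, k r u) =ᵐ[unif01] fun _ => 1 := by
    refine Integrable.ae_eq_of_forall_setIntegral_eq _ _ (integrable_finsetSum _ fun r _ => hki r)
      (integrable_const _) fun A hA _ => ?_
    rw [integral_finsetSum _ fun r _ => (hki r).integrableOn]
    have t1 : Tendsto (fun f : TT c => ∑ r, pr (ind A hA).1 f r) U (nhds (∑ r, ∫ u in A, k r u ∂unif01)) := by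
      refine tendsto_finsetSum _ fun r _ => ?_
      rw [← e A hA]; exact hk r _
    have t2 : Tendsto (fun f : TT c => ∑ r, pr (ind A hA).1 f r) U (nhds (∫ u in A, (1:ℝ) ∂unif01)) := by
      refine tendsto_const_nhds.congr fun f => ?_
      simp only [pr, e]
      rw [← integral_finsetSum _ fun r _ => ?_]
      · simp [f.sum_one]
      · exact (by simpa using mul_int (integrable_const (1:ℝ)) f r : Integrable _ _).integrableOn
    exact tendsto_nhds_unique t1 t2
  obtain ⟨f0⟩ : Nonempty (TT c) := U.nonempty_of_mem univ_mem |>.to_subtype.map Subtype.val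
  classical
  let good : Set ℝ := {u | (∀ r, 0 ≤ k r u) ∧ ∑ r, k r u = 1}
  have hgm : MeasurableSet good := by
    have : good = (⋂ r, {u | 0 ≤ k r u}) ∩ {u | ∑ r, k r u = 1} := by ext u; simp [good]
    rw [this]
    exact (MeasurableSet.iInter fun r => measurableSet_le measurable_const (hkm r)).inter
      (measurableSet_eq_fun (Finset.measurable_sum _ fun r _ => hkm r) measurable_const)
  let g : TT c := ⟨fun u r => if u ∈ good then k r u else f0.1 u r, by
    rw [measurable_pi_iff]
    exact fun r => (hkm r).ite hgm (f0.meas r), by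
    intro u
    by_cases hu : u ∈ good
    · simp only [hu, if_true]; exact hu
    · simp only [hu, if_false]; exact f0.2.2 u⟩
  have hg : ∀ r, (fun u => g.1 u r) =ᵐ[unif01] k r := by
    intro r
    have h0' := (ae_all_iff (μ := unif01) (p := fun u (r : Fin c) => 0 ≤ k r u)).2 h0
    filter_upwards [h0', h1] with u hu0 hu1
    have : u ∈ good := ⟨hu0, hu1⟩
    simp [g, this]
  refine ⟨g, mem_univ _, ?_⟩
  rw [nhds_induced, ← Filter.map_le_iff_le_comap]
  change Tendsto emb U (nhds (emb g))
  rw [tendsto_pi_nhds]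
  rintro ⟨h, r⟩
  have : emb g (h, r) = ∫ u, h.1 u * k r u ∂unif01 := by
    refine integral_congr_ae ?_
    filter_upwards [hg r] with u hu
    simp only [hu]
  rw [this]
  exact hk r h

end TT

namespace TT
variable {c v : ℕ}

/-- Multilinear functional with integral kernel `K`. -/
noncomputable def pint (K : (Fin v → ℝ) → ℝ) (r : Fin c) (f : TT c) : ℝ :=
  ∫ x, K x * ∏ a, f.1 (x a) r ∂(piU v)

lemma prod_meas (f : TT c) (r : Fin c) : Measurable fun x : Fin v → ℝ => ∏ a, f.1 (x a) r :=
  Finset.measurable_prod _ fun a _ => (f.meas r).comp (measurable_pi_apply a)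

lemma prod_abs (f : TT c) (r : Fin c) (x : Fin v → ℝ) : |∏ a, f.1 (x a) r| ≤ 1 := by
  rw [Finset.abs_prod]
  exact Finset.prod_le_one (fun a _ => abs_nonneg _) fun a _ => f.abs_le _ _

lemma pint_int {K : (Fin v → ℝ) → ℝ} (hK : Integrable K (piU v)) (r : Fin c) (f : TT c) :
    Integrable (fun x => K x * ∏ a, f.1 (x a) r) (piU v) :=
  hK.mul_bdd (c := 1) (f.prod_meas r).aestronglyMeasurable (ae_of_all _ fun x => f.prod_abs r x)

lemma pint_sub {K K' : (Fin v → ℝ) → ℝ} (hK : Integrable K (piU v)) (hK' : Integrable K' (piU v))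
    (r : Fin c) (f : TT c) : |pint K r f - pint K' r f| ≤ ∫ x, |K x - K' x| ∂(piU v) := by
  rw [pint, pint, ← integral_sub (pint_int hK r f) (pint_int hK' r f)]
  refine (abs_integral_le_integral_abs).trans ?_
  refine integral_mono_of_nonneg (ae_of_all _ fun _ => abs_nonneg _) (hK.sub hK').abs (ae_of_all _ fun x => ?_)
  simp only
  rw [← sub_mul, abs_mul]
  exact mul_le_of_le_one_right (abs_nonneg _) (f.prod_abs r x)

lemma pint_lim {K : (Fin v → ℝ) → ℝ} (hK : Integrable K (piU v)) (r : Fin c)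
    (h : ∀ ε > 0, ∃ K' : (Fin v → ℝ) → ℝ, Integrable K' (piU v) ∧ ∫ x, |K x - K' x| ∂(piU v) < ε ∧
      Continuous (pint K' r : TT c → ℝ)) : Continuous (pint K r : TT c → ℝ) := by
  refine continuous_of_uniform_approx_of_continuous fun u hu => ?_
  obtain ⟨ε, hε, hεu⟩ := Metric.mem_uniformity_dist.1 hu
  obtain ⟨K', hK', h1, h2⟩ := h ε hε
  refine ⟨_, h2, fun f => hεu ?_⟩
  rw [Real.dist_eq]
  exact (pint_sub hK hK' r f).trans_lt h1

lemma cont_box (S : Fin v → Set ℝ) (hS : ∀ a, MeasurableSet (S a)) (r : Fin c) :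
    Continuous (pint ((Set.univ.pi S).indicator 1) r : TT c → ℝ) := by
  have : (pint ((Set.univ.pi S).indicator 1) r : TT c → ℝ) =
      fun f => ∏ a, pr ((S a).indicator 1) f r := by
    ext f
    simp only [pr]
    rw [← integral_fintype_prod_eq_prod, pint]
    congr 1; ext x
    rw [Finset.prod_mul_distrib]
    congr 1
    by_cases hx : x ∈ Set.univ.pi S
    · rw [indicator_of_mem hx]
      symm
      simp only [Pi.one_apply]
      refine Finset.prod_eq_one fun a _ => ?_
      rw [indicator_of_mem (hx a (mem_univ a))]; rfl
    · rw [indicator_of_notMem hx]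
      symm
      simp only [Set.mem_pi, Set.mem_univ, true_imp_iff, not_forall] at hx
      obtain ⟨a, ha⟩ := hx
      exact Finset.prod_eq_zero (Finset.mem_univ a) (indicator_of_notMem ha _)
  rw [this]
  exact continuous_finsetProd _ fun a _ => continuous_pr ⟨(S a).indicator 1, measurable_one.indicator (hS a), 1,
    fun x => by by_cases h : x ∈ S a <;> simp [h]⟩ r

lemma ind_int {A : Set (Fin v → ℝ)} (hA : MeasurableSet A) : Integrable (A.indicator (1 : (Fin v → ℝ) → ℝ)) (piU v) :=
  (integrable_const (1:ℝ)).indicator hA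

lemma cont_set (A : Set (Fin v → ℝ)) (hA : MeasurableSet A) (r : Fin c) :
    Continuous (pint (A.indicator 1) r : TT c → ℝ) := by
  have hgen := (generateFrom_pi (ι := Fin v) (α := fun _ => ℝ)).symm
  have hpi := isPiSystem_pi (ι := Fin v) (α := fun _ => ℝ)
  induction A, hA using MeasurableSpace.induction_on_inter hgen hpi with
  | empty =>
    have : (pint ((∅ : Set (Fin v → ℝ)).indicator 1) r : TT c → ℝ) = fun _ => 0 := by
      ext f; simp [pint]
    rw [this]; exact continuous_const
  | basic t ht =>
    obtain ⟨S, hS, rfl⟩ := ht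
    exact cont_box S (fun a => hS a (mem_univ a)) r
  | compl t ht ih =>
    have h1 := cont_box (c := c) (fun _ : Fin v => (univ : Set ℝ)) (fun _ => MeasurableSet.univ) r
    refine (h1.sub ih).congr fun f => ?_
    simp only [pint, Pi.sub_apply]
    rw [← integral_sub]
    · congr 1; ext x
      by_cases hx : x ∈ t <;> simp [hx]
    · exact pint_int (ind_int (MeasurableSet.pi Set.countable_univ fun _ _ => MeasurableSet.univ)) r f
    · exact pint_int (ind_int ht) r f
  | iUnion f hd hm ih =>
    set B := ⋃ i, f i with hB
    have hBm : MeasurableSet B := MeasurableSet.iUnion hm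
    let P : ℕ → Set (Fin v → ℝ) := fun k => ⋃ i ∈ Finset.range k, f i
    have hPm : ∀ k, MeasurableSet (P k) := fun k => Finset.measurableSet_biUnion _ fun i _ => hm i
    have hPB : ∀ k, P k ⊆ B := fun k => iUnion₂_subset fun i _ => subset_iUnion f i
    have hPmono : Monotone P := by
      intro k l hkl
      exact biUnion_subset_biUnion_left (by simpa using hkl)
    have hPU : ⋃ k, P k = B := by
      apply subset_antisymm (iUnion_subset hPB)
      refine iUnion_subset fun i => ?_
      exact subset_iUnion_of_subset (i+1) (subset_biUnion_of_mem (u := f) (by simp))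
    refine pint_lim (ind_int hBm) r fun ε hε => ?_
    have h1 : Tendsto (fun k => piU v (B \ P k)) atTop (nhds (piU v (⋂ k, B \ P k))) :=
      tendsto_measure_iInter_atTop (fun k => (hBm.diff (hPm k)).nullMeasurableSet)
        (fun k l hkl => sdiff_subset_sdiff_right (hPmono hkl)) ⟨0, measure_ne_top _ _⟩
    have h2 : ⋂ k, B \ P k = ∅ := by
      rw [← sdiff_iUnion, hPU, Set.sdiff_self]
    rw [h2, measure_empty] at h1
    obtain ⟨k, hk⟩ := (h1.eventually_lt_const (u := ENNReal.ofReal ε) (by simpa using hε)).exists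
    refine ⟨(P k).indicator 1, ind_int (hPm k), ?_, ?_⟩
    · have : ∀ x, |B.indicator (1 : (Fin v → ℝ) → ℝ) x - (P k).indicator 1 x| = (B \ P k).indicator 1 x := by
        intro x
        by_cases hx : x ∈ P k
        · simp [hx, hPB k hx]
        · by_cases hx' : x ∈ B <;> simp [hx, hx']
      simp_rw [this]
      rw [integral_indicator_one (hBm.diff (hPm k))]
      rw [Measure.real]
      exact (ENNReal.toReal_lt_of_lt_ofReal hk)
    · have hc : Continuous (fun g : TT c => ∑ i ∈ Finset.range k, pint ((f i).indicator 1) r g) :=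
        continuous_finsetSum _ fun i _ => ih i
      refine hc.congr fun g => ?_
      simp only [pint]
      rw [← integral_finsetSum _ fun i _ => pint_int (ind_int (hm i)) r g]
      congr 1; ext x
      rw [← Finset.sum_mul]
      congr 1
      have := Finset.indicator_biUnion (Finset.range k) f (fun i _ j _ hij => hd hij) (f := (1 : (Fin v → ℝ) → ℝ))
      exact (congrFun this x).symm

lemma cont_pint {K : (Fin v → ℝ) → ℝ} (hK : Integrable K (piU v)) (r : Fin c) :
    Continuous (pint K r : TT c → ℝ) := by
  refine Integrable.induction (P := fun K : (Fin v → ℝ) → ℝ => Continuous (pint K r : TT c → ℝ)) ?_ ?_ ?_ ?_ hK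
  · intro d s hs _
    refine (((cont_set (c := c) s hs r).const_mul d)).congr fun f => ?_
    simp only [pint]
    rw [← integral_const_mul]
    congr 1; ext x
    by_cases hx : x ∈ s <;> simp [hx]
  · intro K K' _ hK hK' ih ih'
    refine (ih.add ih').congr fun f => ?_
    simp only [pint, Pi.add_apply]
    rw [← integral_add (pint_int hK r f) (pint_int hK' r f)]
    congr 1; ext x
    simp [add_mul]
  · refine IsSeqClosed.isClosed fun Ks K hKs hlim => ?_
    refine pint_lim (L1.integrable_coeFn K) r fun ε hε => ?_
    obtain ⟨n, hn⟩ := (Metric.tendsto_atTop.1 hlim ε hε)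
    refine ⟨Ks n, L1.integrable_coeFn _, ?_, hKs n⟩
    have := hn n le_rfl
    rw [dist_comm, dist_eq_norm, L1.norm_eq_integral_norm] at this
    refine lt_of_le_of_lt (le_of_eq (integral_congr_ae ?_)) this
    filter_upwards [Lp.coeFn_sub K (Ks n)] with x hx
    rw [hx]; rfl
  · intro K K' hKK' _ ih
    refine ih.congr fun f => integral_congr_ae ?_
    filter_upwards [hKK'] with x hx
    rw [hx]

end TT

namespace TT
variable {c v : ℕ}

/-- Entropy with respect to a positive probability vector. -/
noncomputable def ent (m : Fin c → ℝ) (f : TT c) : ℝ :=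
  ∫ u, (∑ r, f.1 u r * Real.log (f.1 u r / m r)) ∂unif01

/-- Smoothed density. -/
noncomputable def sm (m : Fin c → ℝ) (f : TT c) (s : ℝ) (r : Fin c) (u : ℝ) : ℝ :=
  (1 - s) * f.1 u r + s * m r

/-- Smoothed log-likelihood. -/
noncomputable def lam (m : Fin c → ℝ) (f : TT c) (s : ℝ) (r : Fin c) (u : ℝ) : ℝ :=
  Real.log (sm m f s r u / m r)

variable {m : Fin c → ℝ} (hm : ∀ r, 0 < m r) (hm1 : ∑ r, m r = 1)

lemma sm_pos (hm : ∀ r, 0 < m r) {s : ℝ} (hs : 0 < s) (hs1 : s ≤ 1) (f : TT c) (r : Fin c) (u : ℝ) : 0 < sm m f s r u := by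
  have h1 := f.nn u r
  have h2 := mul_pos hs (hm r)
  have h3 := mul_nonneg (sub_nonneg.2 hs1) h1
  unfold sm; linarith

lemma sm_meas (f : TT c) (s : ℝ) (r : Fin c) : Measurable (sm m f s r) :=
  ((f.meas r).const_mul _).add_const _

lemma exp_lam (hm : ∀ r, 0 < m r) {s : ℝ} (hs : 0 < s) (hs1 : s ≤ 1) (f : TT c) (r : Fin c) (u : ℝ) :
    m r * Real.exp (lam m f s r u) = sm m f s r u := by
  rw [lam, Real.exp_log (div_pos (sm_pos hm hs hs1 f r u) (hm r))]
  field_simp [(hm r).ne']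

lemma sm_sum (hm1 : ∑ r, m r = 1) (s : ℝ) (f : TT c) (u : ℝ) : ∑ r, sm m f s r u = 1 := by
  simp only [sm, Finset.sum_add_distrib, ← Finset.mul_sum, f.sum_one, hm1]; ring

lemma lam_test (hm : ∀ r, 0 < m r) (hm1 : ∑ r, m r = 1) {s : ℝ} (hs : 0 < s) (hs1 : s ≤ 1) (f : TT c) (r : Fin c) :
    Measurable (lam m f s r) ∧ ∃ M, ∀ x, |lam m f s r x| ≤ M := by
  refine ⟨Real.measurable_log.comp ((sm_meas f s r).div_const _), max |Real.log s| |Real.log (1 / m r)|, fun u => ?_⟩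
  have hpos := sm_pos hm hs hs1 f r u
  have hm1' : m r ≤ 1 := by
    rw [← hm1]; exact Finset.single_le_sum (f := m) (fun i _ => (hm i).le) (Finset.mem_univ r)
  have hle : sm m f s r u ≤ 1 := by
    have h1 := mul_le_mul_of_nonneg_left (f.le_one u r) (sub_nonneg.2 hs1)
    have h2 := mul_le_mul_of_nonneg_left hm1' hs.le
    unfold sm; linarith
  have hge : s ≤ sm m f s r u / m r := by
    rw [le_div_iff₀ (hm r)]
    have := mul_nonneg (sub_nonneg.2 hs1) (f.nn u r)
    unfold sm; linarith
  have hle2 : sm m f s r u / m r ≤ 1 / m r := div_le_div_of_nonneg_right hle (hm r).le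
  exact abs_le_max_abs_abs (Real.log_le_log hs hge) (Real.log_le_log (div_pos hpos (hm r)) hle2)

lemma ent_int1 (hm : ∀ r, 0 < m r) (f : TT c) (r : Fin c) : Integrable (fun u => f.1 u r * Real.log (f.1 u r / m r)) unif01 := by
  have hcont : Continuous fun t : ℝ => t * Real.log t - t * Real.log (m r) :=
    Real.continuous_mul_log.sub (continuous_id.mul continuous_const)
  obtain ⟨M, hM⟩ := (isCompact_Icc (a := (0:ℝ)) (b := 1)).exists_bound_of_continuousOn hcont.continuousOn
  have hmeas : Measurable fun u => f.1 u r * Real.log (f.1 u r / m r) :=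
    (f.meas r).mul (Real.measurable_log.comp ((f.meas r).div_const _))
  refine Integrable.of_bound hmeas.aestronglyMeasurable M (ae_of_all _ fun u => ?_)
  have := hM (f.1 u r) ⟨f.nn u r, f.le_one u r⟩
  refine le_trans (le_of_eq ?_) this
  congr 1
  rcases (f.nn u r).eq_or_lt with h | h
  · rw [← h]; simp
  · rw [Real.log_div h.ne' (hm r).ne']; ring

lemma ent_int (hm : ∀ r, 0 < m r) (f : TT c) : Integrable (fun u => ∑ r, f.1 u r * Real.log (f.1 u r / m r)) unif01 :=
  integrable_finsetSum _ fun r _ => ent_int1 hm f r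

lemma lam_int (hm : ∀ r, 0 < m r) (hm1 : ∑ r, m r = 1) {s : ℝ} (hs : 0 < s) (hs1 : s ≤ 1) (f g : TT c) :
    Integrable (fun u => ∑ r, lam m f s r u * g.1 u r) unif01 :=
  integrable_finsetSum _ fun r _ => mul_int (test_int ⟨lam m f s r, lam_test hm hm1 hs hs1 f r⟩) g r

lemma lam_sum_pr (hm : ∀ r, 0 < m r) (hm1 : ∑ r, m r = 1) {s : ℝ} (hs : 0 < s) (hs1 : s ≤ 1) (f g : TT c) :
    ∑ r, pr (lam m f s r) g r = ∫ u, ∑ r, lam m f s r u * g.1 u r ∂unif01 :=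
  (integral_finsetSum _ fun r _ => mul_int (test_int ⟨lam m f s r, lam_test hm hm1 hs hs1 f r⟩) g r).symm

/-- Pointwise Gibbs inequality. -/
lemma gibbs_pt {g h m : ℝ} (hg : 0 ≤ g) (hh : 0 < h) (hm : 0 < m) :
    Real.log (h / m) * g ≤ g * Real.log (g / m) + (h - g) := by
  rcases hg.eq_or_lt with h0 | h0
  · rw [← h0]; simpa using hh.le
  · have h1 := Real.log_le_sub_one_of_pos (div_pos hh h0)
    rw [Real.log_div hh.ne' h0.ne'] at h1
    rw [Real.log_div hh.ne' hm.ne', Real.log_div h0.ne' hm.ne']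
    have h2 := mul_le_mul_of_nonneg_left h1 h0.le
    have h3 : g * (h / g - 1) = h - g := by field_simp
    rw [h3] at h2
    linarith

lemma gibbs (hm : ∀ r, 0 < m r) (hm1 : ∑ r, m r = 1) {s : ℝ} (hs : 0 < s) (hs1 : s ≤ 1) (f g : TT c) : ∑ r, pr (lam m f s r) g r ≤ ent m g := by
  rw [lam_sum_pr hm hm1 hs hs1]
  refine integral_mono (lam_int hm hm1 hs hs1 f g) (ent_int hm g) fun u => ?_
  have : ∑ r, lam m f s r u * g.1 u r ≤ ∑ r, (g.1 u r * Real.log (g.1 u r / m r) + (sm m f s r u - g.1 u r)) :=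
    Finset.sum_le_sum fun r _ => gibbs_pt (g.nn u r) (sm_pos hm hs hs1 f r u) (hm r)
  refine this.trans (le_of_eq ?_)
  rw [Finset.sum_add_distrib, Finset.sum_sub_distrib, sm_sum hm1, g.sum_one]; ring

lemma ent_nonneg (hm : ∀ r, 0 < m r) (hm1 : ∑ r, m r = 1) (g : TT c) : 0 ≤ ent m g := by
  have := gibbs hm hm1 one_pos le_rfl g g
  refine le_trans (le_of_eq ?_) this
  symm
  refine Finset.sum_eq_zero fun r _ => ?_
  simp [pr, lam, sm, (hm r).ne']

lemma lam_self (hm : ∀ r, 0 < m r) (hm1 : ∑ r, m r = 1) {s : ℝ} (hs : 0 < s) (hs1 : s < 1) (f : TT c) :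
    ent m f + Real.log (1 - s) ≤ ∑ r, pr (lam m f s r) f r := by
  rw [lam_sum_pr hm hm1 hs hs1.le]
  have e : ent m f + Real.log (1 - s) = ∫ u, ((∑ r, f.1 u r * Real.log (f.1 u r / m r)) + Real.log (1 - s)) ∂unif01 := by
    rw [integral_add (ent_int hm f) (integrable_const _)]; simp [ent]
  rw [e]
  refine integral_mono ((ent_int hm f).add (integrable_const _)) (lam_int hm hm1 hs hs1.le f f) fun u => ?_
  simp only
  have e2 : Real.log (1 - s) = ∑ r, f.1 u r * Real.log (1 - s) := by
    rw [← Finset.sum_mul, f.sum_one, one_mul]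
  rw [e2, ← Finset.sum_add_distrib]
  refine Finset.sum_le_sum fun r _ => ?_
  rcases (f.nn u r).eq_or_lt with h | h
  · rw [← h]; simp
  · have h1s : 0 < 1 - s := by linarith
    rw [← mul_add, ← Real.log_mul (div_pos h (hm r)).ne' h1s.ne', mul_comm (lam m f s r u)]
    refine mul_le_mul_of_nonneg_left (Real.log_le_log (mul_pos (div_pos h (hm r)) h1s) ?_) h.le
    rw [div_mul_eq_mul_div]
    refine div_le_div_of_nonneg_right ?_ (hm r).le
    have := mul_pos hs (hm r)
    unfold sm; linarith

lemma exists_s (hm : ∀ r, 0 < m r) (hm1 : ∑ r, m r = 1) {a : ℝ} (f : TT c) (ha : a < ent m f) :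
    ∃ s : ℝ, 0 < s ∧ s < 1 ∧ a < ∑ r, pr (lam m f s r) f r := by
  have hd : 0 < ent m f - a := by linarith
  refine ⟨1 - Real.exp (-(ent m f - a) / 2), ?_, ?_, ?_⟩
  · have : Real.exp (-(ent m f - a) / 2) < 1 := Real.exp_lt_one_iff.2 (by linarith)
    linarith
  · have := Real.exp_pos (-(ent m f - a) / 2); linarith
  · have h1 : Real.exp (-(ent m f - a) / 2) < 1 := Real.exp_lt_one_iff.2 (by linarith)
    have h2 := Real.exp_pos (-(ent m f - a) / 2)
    have := lam_self hm hm1 (s := 1 - Real.exp (-(ent m f - a) / 2)) (by linarith) (by linarith) f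
    rw [sub_sub_cancel, Real.log_exp] at this
    linarith

lemma lam_open (hm : ∀ r, 0 < m r) (hm1 : ∑ r, m r = 1) {s : ℝ} (hs : 0 < s) (hs1 : s ≤ 1) (f : TT c) (a : ℝ) :
    IsOpen {g : TT c | a < ∑ r, pr (lam m f s r) g r} :=
  isOpen_lt continuous_const (continuous_finsetSum _ fun r _ =>
    continuous_pr ⟨lam m f s r, lam_test hm hm1 hs hs1 f r⟩ r)

lemma ent_lsc (hm : ∀ r, 0 < m r) (hm1 : ∑ r, m r = 1) : LowerSemicontinuous (ent m : TT c → ℝ) := by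
  intro f a ha
  obtain ⟨s, hs, hs1, h⟩ := exists_s hm hm1 f ha
  filter_upwards [(lam_open hm hm1 hs hs1.le f a).mem_nhds h] with g hg
  exact lt_of_lt_of_le hg (gibbs hm hm1 hs hs1.le f g)

/-- Goodness of the rate function. -/
lemma toTT {f : ℝ → Fin c → ℝ} (hf : f ∈ Fc c) : ∃ g : TT c, ∀ u ∈ Icc (0:ℝ) 1, g.1 u = f u := by
  classical
  refine ⟨⟨fun u => if u ∈ Icc (0:ℝ) 1 then f u else f 0, hf.1.ite measurableSet_Icc measurable_const, ?_⟩, ?_⟩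
  · intro u
    have h0 : (0:ℝ) ∈ Icc (0:ℝ) 1 := by simp
    by_cases hu : u ∈ Icc (0:ℝ) 1
    · simp only [hu, if_true]; exact ⟨fun r => (hf.2.1 u hu r).1, hf.2.2 u hu⟩
    · simp only [hu, if_false]; exact ⟨fun r => (hf.2.1 0 h0 r).1, hf.2.2 0 h0⟩
  · intro u hu; simp [hu]

lemma mem_Fc (g : TT c) : g.1 ∈ Fc c :=
  ⟨g.2.1, fun u _ r => ⟨g.nn u r, g.le_one u r⟩, fun u _ => g.sum_one u⟩

lemma ae_Icc : ∀ᵐ u ∂unif01, u ∈ Icc (0:ℝ) 1 := ae_restrict_mem measurableSet_Icc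

lemma ae_pi_Icc : ∀ᵐ x ∂(piU v), ∀ a, x a ∈ Icc (0:ℝ) 1 := by
  rw [ae_all_iff]
  intro a
  exact (measurePreserving_eval (fun _ : Fin v => unif01) a).quasiMeasurePreserving.ae ae_Icc

variable (G : SimpleGraph (Fin v)) [DecidableRel G.Adj] (W : ℝ → ℝ → ℝ)

lemma G2_congr {f g : ℝ → Fin c → ℝ} (h : ∀ u ∈ Icc (0:ℝ) 1, g u = f u) : G2 c G W g = G2 c G W f := by
  unfold G2
  refine Finset.sum_congr rfl fun r _ => integral_congr_ae ?_
  filter_upwards [ae_pi_Icc (v := v)] with x hx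
  simp only [h _ (hx _)]

lemma rate2_eq (μ : Measure (Fin c)) (t : ℝ) :
    rate2 c G W μ t = ⨅ f : {f : TT c // G2 c G W f.1 = t}, ENNReal.ofReal (ent (fun r => (μ {r}).toReal) f.1) := by
  apply le_antisymm
  · refine le_iInf fun f => ?_
    exact iInf_le (fun f : {f : ℝ → Fin c → ℝ // f ∈ Fc c ∧ G2 c G W f = t} => ENNReal.ofReal (entPotts c μ f.1))
      ⟨f.1.1, f.1.mem_Fc, f.2⟩
  · refine le_iInf fun f => ?_
    obtain ⟨g, hg⟩ := toTT f.2.1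
    refine iInf_le_of_le ⟨g, (G2_congr G W hg).trans f.2.2⟩ (le_of_eq ?_)
    congr 1
    refine integral_congr_ae ?_
    filter_upwards [ae_Icc] with u hu
    rw [hg u hu]

lemma good (hm : ∀ r, 0 < m r) (hm1 : ∑ r, m r = 1) {μ : Measure (Fin c)} (hμ : ∀ r, (μ {r}).toReal = m r)
    (hcont : Continuous fun f : TT c => G2 c G W f.1) (a : ℝ≥0∞) (ha : a ≠ ⊤) :
    IsCompact {t | rate2 c G W μ t ≤ a} := by
  have e : {t | rate2 c G W μ t ≤ a} = (fun f : TT c => G2 c G W f.1) '' {f | ent m f ≤ a.toReal} := by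
    ext t
    simp only [rate2_eq, hμ, Set.mem_ofPred_eq, Set.mem_image]
    constructor
    · intro h
      have hne : {f : TT c | G2 c G W f.1 = t}.Nonempty := by
        by_contra hne
        have : IsEmpty {f : TT c // G2 c G W f.1 = t} := ⟨fun f => hne ⟨f.1, f.2⟩⟩
        rw [iInf_of_empty] at h
        exact ha (top_le_iff.1 h)
      have hcl : IsCompact {f : TT c | G2 c G W f.1 = t} :=
        (isClosed_eq hcont continuous_const).isCompact
      obtain ⟨f, hf, hmin⟩ := (ent_lsc hm hm1).lowerSemicontinuousOn _ |>.exists_isMinOn hne hcl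
      refine ⟨f, ?_, hf⟩
      have h2 : ENNReal.ofReal (ent m f) ≤ a := by
        refine le_trans (le_iInf fun g => ENNReal.ofReal_le_ofReal ?_) h
        exact hmin g.2
      rwa [ENNReal.ofReal_le_iff_le_toReal ha] at h2
    · rintro ⟨f, hf, rfl⟩
      refine iInf_le_of_le ⟨f, rfl⟩ ?_
      exact (ENNReal.ofReal_le_iff_le_toReal ha).2 hf
  rw [e]
  refine IsCompact.image ?_ hcont
  exact ((ent_lsc hm hm1).isClosed_preimage a.toReal).isCompact

end TT

/-- Equimeasurable partition map. -/
structure EM {n : ℕ} (τ : ℝ → Fin n) : Prop where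
  meas : Measurable τ
  cell : ∀ i, unif01.real (τ ⁻¹' {i}) = 1 / n

namespace TT
variable {c v n : ℕ} {τ : ℝ → Fin n}

/-- Integral over a cell. -/
noncomputable def ci (τ : ℝ → Fin n) (i : Fin n) (h : ℝ → ℝ) : ℝ := ∫ u in τ ⁻¹' {i}, h u ∂unif01

lemma cell_meas (hτ : EM τ) (i : Fin n) : MeasurableSet (τ ⁻¹' {i}) := hτ.meas (measurableSet_singleton i)

open Classical in
lemma ci_eq (hτ : EM τ) (i : Fin n) (h : ℝ → ℝ) :
    ci τ i h = ∫ u, (if τ u = i then 1 else 0) * h u ∂unif01 := by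
  rw [ci, ← integral_indicator (cell_meas hτ i)]
  congr 1; ext u
  by_cases hu : τ u = i <;> simp [hu, indicator]

lemma ci_const (hτ : EM τ) (i : Fin n) (t : ℝ) : ci τ i (fun _ => t) = t / n := by
  rw [ci, setIntegral_const, hτ.cell]; simp [smul_eq_mul]; ring

lemma ci_step (hτ : EM τ) (i : Fin n) (p : Fin n → ℝ) : ci τ i (fun u => p (τ u)) = p i / n := by
  rw [← ci_const hτ, ci, ci]
  refine setIntegral_congr_fun (cell_meas hτ i) fun u hu => ?_
  simp only [mem_preimage, mem_singleton_iff] at hu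
  simp [hu]

lemma sum_ci (hτ : EM τ) {h : ℝ → ℝ} (hh : Integrable h unif01) : ∑ i, ci τ i h = ∫ u, h u ∂unif01 := by
  classical
  simp_rw [ci_eq hτ]
  rw [← integral_finsetSum]
  · congr 1; ext u
    rw [← Finset.sum_mul]; simp
  · intro i _
    refine (hh.indicator (cell_meas hτ i)).congr (ae_of_all _ fun u => ?_)
    by_cases hu : τ u = i <;> simp [hu, indicator]

lemma pi_formula (hτ : EM τ) (F : (Fin v → Fin n) → ℝ) {h : ℝ → ℝ} (hh : Integrable h unif01) :
    ∫ y, F (τ ∘ y) * ∏ a, h (y a) ∂(piU v) = ∑ i : Fin v → Fin n, F i * ∏ a, ci τ (i a) h := by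
  classical
  have hIntg : ∀ i : Fin n, Integrable (fun u => (if τ u = i then (1:ℝ) else 0) * h u) unif01 := fun i =>
    (hh.indicator (cell_meas hτ i)).congr (ae_of_all _ fun u => by
      by_cases hu : τ u = i <;> simp [hu, indicator])
  have e : ∀ y : Fin v → ℝ, F (τ ∘ y) * ∏ a, h (y a) =
      ∑ i : Fin v → Fin n, F i * ∏ a, ((if τ (y a) = i a then (1:ℝ) else 0) * h (y a)) := by
    intro y
    rw [Finset.sum_eq_single (τ ∘ y)]
    · simp
    · intro i _ hi
      obtain ⟨a, ha⟩ := Function.ne_iff.1 hi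
      rw [Finset.prod_eq_zero (Finset.mem_univ a), mul_zero]
      rw [if_neg fun h => ha h.symm, zero_mul]
    · simp
  simp_rw [e]
  rw [integral_finsetSum]
  · refine Finset.sum_congr rfl fun i _ => ?_
    rw [integral_const_mul, integral_fintype_prod_eq_prod (fun a u => (if τ u = i a then (1:ℝ) else 0) * h u)]
    simp_rw [ci_eq hτ]
  · intro i _
    exact (Integrable.fintype_prod (f := fun a u => (if τ u = i a then (1:ℝ) else 0) * h u) fun a => hIntg (i a)).const_mul _

lemma pi_formula_one (hτ : EM τ) (F : (Fin v → Fin n) → ℝ) :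
    ∫ y, F (τ ∘ y) ∂(piU v) = (∑ i : Fin v → Fin n, F i) / (n:ℝ) ^ v := by
  have := pi_formula hτ F (h := fun _ => 1) (integrable_const _)
  simp only [Finset.prod_const_one, mul_one] at this
  rw [this, Finset.sum_div]
  refine Finset.sum_congr rfl fun i _ => ?_
  simp_rw [ci_const hτ]
  simp [div_eq_mul_inv]

/-- Step function. -/
def step (hτ : EM τ) (p : Fin n → Fin c → ℝ) (hp : ∀ i, (∀ r, 0 ≤ p i r) ∧ ∑ r, p i r = 1) : TT c :=
  ⟨fun u => p (τ u), (measurable_of_finite p).comp hτ.meas, fun _ => hp _⟩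

/-- Indicator step function of a configuration. -/
def ist (hτ : EM τ) (x : Fin n → Fin c) : TT c :=
  step hτ (fun i r => if x i = r then 1 else 0) fun i => ⟨fun r => by positivity, by simp⟩

/-- Cell averages. -/
noncomputable def avg (τ : ℝ → Fin n) (f : TT c) (i : Fin n) (r : Fin c) : ℝ := n * ci τ i (fun u => f.1 u r)

lemma f_int (f : TT c) (r : Fin c) : Integrable (fun u => f.1 u r) unif01 := by
  simpa using mul_int (integrable_const (1:ℝ)) f r

lemma avg_prop (hτ : EM τ) (f : TT c) (i : Fin n) : (∀ r, 0 ≤ avg τ f i r) ∧ ∑ r, avg τ f i r = 1 := by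
  have hn : (n : ℝ) ≠ 0 := by
    have := i.pos; positivity
  constructor
  · intro r
    exact mul_nonneg (by positivity) (integral_nonneg fun u => f.nn u r)
  · simp only [avg]
    rw [← Finset.mul_sum]
    simp only [ci]
    rw [← integral_finsetSum _ fun r _ => (f_int f r).integrableOn]
    simp only [f.sum_one]
    have := ci_const hτ i 1
    rw [ci] at this
    rw [this]; field_simp

/-- Averaged function. -/
noncomputable def bar (hτ : EM τ) (f : TT c) : TT c := step hτ (avg τ f) (avg_prop hτ f)

lemma ci_bar (hτ : EM τ) (f : TT c) (i : Fin n) (r : Fin c) :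
    ci τ i (fun u => (bar hτ f).1 u r) = ci τ i (fun u => f.1 u r) := by
  have hn : (n : ℝ) ≠ 0 := by
    have := i.pos; positivity
  have := ci_step hτ i (fun i => avg τ f i r)
  rw [show (fun u => (bar hτ f).1 u r) = fun u => avg τ f (τ u) r from rfl, this, avg]
  field_simp

variable (G : SimpleGraph (Fin v)) [DecidableRel G.Adj]

lemma G2_bar (hτ : EM τ) (Q : Fin n → Fin n → ℝ) (f : TT c) :
    G2 c G (fun s t => Q (τ s) (τ t)) (bar hτ f).1 = G2 c G (fun s t => Q (τ s) (τ t)) f.1 := by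
  unfold G2
  refine Finset.sum_congr rfl fun r _ => ?_
  have h1 := pi_formula hτ (fun i : Fin v → Fin n => edgeProd G (fun a b => Q (i a) (i b))) (f_int f r)
  have h2 := pi_formula hτ (fun i : Fin v → Fin n => edgeProd G (fun a b => Q (i a) (i b))) (f_int (bar hτ f) r)
  simp only [ci_bar] at h2
  exact h2.trans h1.symm

lemma mono_sum (hv : 1 ≤ v) (y : Fin v → Fin c) :
    ∑ r, ∏ a, (if y a = r then (1:ℝ) else 0) = monoPhi c v y := by
  let a0 : Fin v := ⟨0, hv⟩
  rw [Finset.sum_eq_single (y a0)]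
  · unfold monoPhi
    split_ifs with h
    · exact Finset.prod_eq_one fun a _ => by rw [if_pos (h a a0)]
    · simp only [not_forall] at h
      obtain ⟨a, b, hab⟩ := h
      by_cases ha : y a = y a0
      · refine Finset.prod_eq_zero (Finset.mem_univ b) (if_neg fun hb => hab (ha.trans hb.symm))
      · exact Finset.prod_eq_zero (Finset.mem_univ a) (if_neg ha)
  · intro r _ hr
    exact Finset.prod_eq_zero (Finset.mem_univ a0) (if_neg hr.symm)
  · simp

lemma G2_ist (hv : 1 ≤ v) (hτ : EM τ) (Q : Fin n → Fin n → ℝ) (x : Fin n → Fin c) :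
    G2 c G (fun s t => Q (τ s) (τ t)) (ist hτ x).1 =
      (∑ i : Fin v → Fin n, monoPhi c v (x ∘ i) * edgeProd G (fun a b => Q (i a) (i b))) / (n:ℝ) ^ v := by
  unfold G2
  have key : ∀ r : Fin c, ∫ y : Fin v → ℝ, edgeProd G (fun a b => Q (τ (y a)) (τ (y b))) * ∏ a, (ist hτ x).1 (y a) r ∂(piU v)
      = (∑ i : Fin v → Fin n, edgeProd G (fun a b => Q (i a) (i b)) * ∏ a, (if x (i a) = r then (1:ℝ) else 0)) / (n:ℝ) ^ v := by
    intro r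
    rw [← pi_formula_one hτ]; rfl
  rw [Finset.sum_congr rfl fun r _ => key r, ← Finset.sum_div, Finset.sum_comm]
  congr 1
  refine Finset.sum_congr rfl fun i _ => ?_
  rw [← Finset.mul_sum, mul_comm]
  congr 1
  exact mono_sum hv (x ∘ i)

lemma noninj (hτ : EM τ) (hn : 1 ≤ n) :
    MeasurableSet {y : Fin v → ℝ | ¬ Function.Injective (τ ∘ y)} ∧
    piU v {y | ¬ Function.Injective (τ ∘ y)} ≤ ((v : ℝ≥0)^2 / n : ℝ≥0) := by
  classical
  have hn0 : (0:ℝ) < n := by exact_mod_cast hn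
  have hcell : ∀ i, unif01 (τ ⁻¹' {i}) = ENNReal.ofReal (1 / n) := fun i => by
    rw [← hτ.cell i, Measure.real, ENNReal.ofReal_toReal (measure_ne_top _ _)]
  constructor
  · have hm : Measurable fun y : Fin v → ℝ => τ ∘ y :=
      measurable_pi_lambda _ fun a => hτ.meas.comp (measurable_pi_apply a)
    exact hm (MeasurableSet.of_discrete (s := {i : Fin v → Fin n | ¬ Function.Injective i}))
  · have hpair : ∀ a b : Fin v, a ≠ b → piU v {y | τ (y a) = τ (y b)} ≤ ENNReal.ofReal (1 / n) := by
      intro a b hab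
      have e : {y : Fin v → ℝ | τ (y a) = τ (y b)} =
          (fun y : Fin v → ℝ => (y a, y b)) ⁻¹' (⋃ i, (τ ⁻¹' {i}) ×ˢ (τ ⁻¹' {i})) := by
        ext y; simp [eq_comm]
      have hms : MeasurableSet (⋃ i, (τ ⁻¹' {i}) ×ˢ (τ ⁻¹' {i})) :=
        MeasurableSet.iUnion fun i => (cell_meas hτ i).prod (cell_meas hτ i)
      rw [e, (mp_pair hab).measure_preimage hms.nullMeasurableSet]
      refine (measure_iUnion_fintype_le _ _).trans ?_
      simp only [Measure.prod_prod, hcell]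
      rw [Finset.sum_const, Finset.card_univ, Fintype.card_fin, nsmul_eq_mul, ← mul_assoc]
      refine mul_le_of_le_one_left zero_le ?_
      rw [← ENNReal.ofReal_natCast, ← ENNReal.ofReal_mul (by positivity)]
      rw [mul_one_div_cancel hn0.ne']; simp
    have hsub : {y : Fin v → ℝ | ¬ Function.Injective (τ ∘ y)} ⊆
        ⋃ p : Fin v × Fin v, (if p.1 ≠ p.2 then {y : Fin v → ℝ | τ (y p.1) = τ (y p.2)} else ∅) := by
      intro y hy
      simp only [mem_ofPred_eq, Function.Injective, not_forall] at hy
      obtain ⟨a, b, h1, h2⟩ := hy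
      refine mem_iUnion.2 ⟨(a, b), ?_⟩
      rw [if_pos h2]; exact h1
    refine (measure_mono hsub).trans ((measure_iUnion_fintype_le _ _).trans ?_)
    have : ∀ p : Fin v × Fin v, piU v (if p.1 ≠ p.2 then {y : Fin v → ℝ | τ (y p.1) = τ (y p.2)} else ∅) ≤
        ENNReal.ofReal (1 / n) := by
      intro p
      split_ifs with h
      · exact hpair _ _ h
      · simp
    refine (Finset.sum_le_sum fun p _ => this p).trans (le_of_eq ?_)
    rw [Finset.sum_const, Finset.card_univ, Fintype.card_prod, Fintype.card_fin, nsmul_eq_mul]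
    rw [← ENNReal.ofReal_natCast, ← ENNReal.ofReal_mul (by positivity), ENNReal.ofReal]
    congr 1
    apply NNReal.eq
    rw [Real.coe_toNNReal _ (by positivity)]
    push_cast
    field_simp

lemma Ustat_close (hv : 1 ≤ v) (D : ℕ) (hD : 1 ≤ D) (hdeg : ∀ i, G.degree i ≤ D) (q : ℝ) (hq : 1 < q)
    (C : ℝ≥0) (hτ : EM τ) (hn : 1 ≤ n) (Q : Fin n → Fin n → ℝ)
    (hC : kerNorm (fun s t => Q (τ s) (τ t)) (ENNReal.ofReal (q * D)) ≤ C) (x : Fin n → Fin c) :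
    |Ustat G (monoPhi c v) n Q x - G2 c G (fun s t => Q (τ s) (τ t)) (ist hτ x).1| ≤
      (C : ℝ) ^ (edgeS G).card * (((v:ℝ)^2 / n : ℝ)) ^ (1 - 1 / q) := by
  classical
  have hQm : Measurable (Function.uncurry fun s t => Q (τ s) (τ t)) := by
    have : Measurable (fun z : ℝ × ℝ => (τ z.1, τ z.2)) :=
      (hτ.meas.comp measurable_fst).prodMk (hτ.meas.comp measurable_snd)
    exact (measurable_of_finite (fun p : Fin n × Fin n => Q p.1 p.2)).comp this
  obtain ⟨hBm, hB⟩ := noninj (v := v) hτ hn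
  have h := graph_ui_real G D hD hdeg q hq (fun _ => fun s t => Q (τ s) (τ t)) (fun _ => hQm) C (fun _ _ => hC)
    (ψ := fun y => monoPhi c v (x ∘ τ ∘ y)) (fun y => by unfold monoPhi; split_ifs <;> simp) _ hBm _ hB
  rw [abs_sub_comm]
  refine le_trans (le_of_eq ?_) (h.trans (le_of_eq ?_))
  · rw [G2_ist G hv hτ, Ustat, ← sub_div, ← integral_indicator hBm]
    congr 1
    have e := pi_formula_one hτ (fun i : Fin v → Fin n => if ¬ Function.Injective i then
      (∏ p ∈ edgeS G, Q (i p.1) (i p.2)) * monoPhi c v (x ∘ i) else 0)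
    have e2 : ∫ y, Set.indicator {y : Fin v → ℝ | ¬ Function.Injective (τ ∘ y)}
        (fun y => (∏ p ∈ edgeS G, Q (τ (y p.1)) (τ (y p.2))) * monoPhi c v (x ∘ τ ∘ y)) y ∂(piU v) =
        ∫ y, (fun i : Fin v → Fin n => if ¬ Function.Injective i then
      (∏ p ∈ edgeS G, Q (i p.1) (i p.2)) * monoPhi c v (x ∘ i) else 0) (τ ∘ y) ∂(piU v) := by
      congr 1
      ext y
      by_cases hy : Function.Injective (τ ∘ y)
      · simp [hy, indicator]
      · simp [hy, indicator]
    rw [e2, e]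
    congr 1
    rw [Finset.sum_filter, ← Finset.sum_sub_distrib]
    refine Finset.sum_congr rfl fun i _ => ?_
    rw [edgeProd_eq]
    by_cases hi : Function.Injective i
    · simp [hi]
    · simp [hi, mul_comm]
  · push_cast; rfl

/-- The key approximation. -/
lemma star (hv : 1 ≤ v) (D : ℕ) (hD : 1 ≤ D) (hdeg : ∀ i, G.degree i ≤ D) (q : ℝ) (hq : 1 < q)
    (C : ℝ≥0) {W : ℝ → ℝ → ℝ} (hW : Measurable (Function.uncurry W))
    (hWC : kerNorm W (ENNReal.ofReal (q * D)) ≤ C) (ε : ℝ) (hε : 0 < ε) :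
    ∃ η > 0, ∃ N : ℕ, 1 ≤ N ∧ ∀ n ≥ N, ∀ (τ : ℝ → Fin n) (hτ : EM τ) (Q : Fin n → Fin n → ℝ),
      kerNorm (fun s t => Q (τ s) (τ t)) (ENNReal.ofReal (q * D)) ≤ C →
      cutDist (fun s t => Q (τ s) (τ t)) W ≤ η →
      (∀ x : Fin n → Fin c, |Ustat G (monoPhi c v) n Q x - G2 c G W (ist hτ x).1| ≤ ε) ∧
      (∀ f : TT c, |G2 c G W f.1 - G2 c G W (bar hτ f).1| ≤ ε) := by
  obtain ⟨η, hη, hcount⟩ := counting_eps G D hD hdeg q hq C (ε / (4 * (c + 1))) (by positivity)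
  have hq1 : 0 < 1 - 1 / q := by
    have : 1 / q < 1 := by rw [div_lt_one (by linarith)]; exact hq
    linarith
  have hlim : Tendsto (fun n : ℕ => (C : ℝ) ^ (edgeS G).card * (((v:ℝ)^2 / n : ℝ)) ^ (1 - 1 / q)) atTop (nhds 0) := by
    have h1 : Tendsto (fun n : ℕ => ((v:ℝ)^2 / n : ℝ)) atTop (nhds 0) := tendsto_const_div_atTop_nhds_zero_nat _
    have h2 := (h1.rpow_const (p := 1 - 1 / q) (Or.inr hq1.le)).const_mul ((C : ℝ) ^ (edgeS G).card)
    rwa [Real.zero_rpow hq1.ne', mul_zero] at h2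
  obtain ⟨N, hN⟩ := eventually_atTop.1 (hlim.eventually_lt_const (u := ε / 2) (by positivity))
  refine ⟨η, hη, max N 1, le_max_right _ _, fun n hn τ hτ Q hQC hcut => ?_⟩
  have hQm : Measurable (Function.uncurry fun s t => Q (τ s) (τ t)) := by
    have : Measurable (fun z : ℝ × ℝ => (τ z.1, τ z.2)) :=
      (hτ.meas.comp measurable_fst).prodMk (hτ.meas.comp measurable_snd)
    exact (measurable_of_finite (fun p : Fin n × Fin n => Q p.1 p.2)).comp this
  have hG : ∀ f : TT c, |G2 c G (fun s t => Q (τ s) (τ t)) f.1 - G2 c G W f.1| ≤ ε / 4 := by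
    intro f
    unfold G2
    rw [← Finset.sum_sub_distrib]
    refine (Finset.abs_sum_le_sum_abs _ _).trans ?_
    refine (Finset.sum_le_sum fun r _ => hcount _ W hQm hW hQC hWC hcut (fun _ u => f.1 u r)
      (fun _ => f.meas r) (fun _ u => f.abs_le u r)).trans ?_
    rw [Finset.sum_const, Finset.card_univ, Fintype.card_fin, nsmul_eq_mul, ← mul_div_assoc, div_le_div_iff₀ (by positivity) (by positivity)]
    nlinarith
  refine ⟨fun x => ?_, fun f => ?_⟩
  · have h1 := Ustat_close G hv D hD hdeg q hq C hτ (le_of_max_le_right hn) Q hQC x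
    have h2 := hN n (le_of_max_le_left hn)
    have h3 := hG (ist hτ x)
    have := abs_sub_le (Ustat G (monoPhi c v) n Q x) (G2 c G (fun s t => Q (τ s) (τ t)) (ist hτ x).1) (G2 c G W (ist hτ x).1)
    linarith
  · have h1 := hG f
    have h2 := hG (bar hτ f)
    rw [G2_bar G hτ Q f] at h2
    rw [abs_sub_comm] at h1
    have := abs_sub_le (G2 c G W f.1) (G2 c G (fun s t => Q (τ s) (τ t)) f.1) (G2 c G W (bar hτ f).1)
    linarith

end TT

namespace TT
variable {c v n : ℕ} {τ : ℝ → Fin n}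

lemma Epi (w A : Fin n → Fin c → ℝ) :
    ∑ x : Fin n → Fin c, (∏ k, w k (x k)) * ∏ k, A k (x k) = ∏ k, ∑ r, w k r * A k r := by
  rw [Finset.prod_univ_sum, Fintype.piFinset_univ]
  refine Finset.sum_congr rfl fun x _ => ?_
  rw [Finset.prod_mul_distrib]

lemma Etot (w : Fin n → Fin c → ℝ) (hw : ∀ i, ∑ r, w i r = 1) :
    ∑ x : Fin n → Fin c, (∏ k, w k (x k)) = 1 := by
  have := Epi w (fun _ _ => 1)
  simpa [hw] using this

lemma Emarg (w : Fin n → Fin c → ℝ) (hw : ∀ i, ∑ r, w i r = 1) (i : Fin n) (Z : Fin c → ℝ) :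
    ∑ x : Fin n → Fin c, (∏ k, w k (x k)) * Z (x i) = ∑ r, w i r * Z r := by
  have := Epi w (fun k r => if k = i then Z r else 1)
  simp only [Finset.prod_ite_eq', Finset.mem_univ, if_true] at this
  rw [this, Finset.prod_eq_single i]
  · simp
  · intro k _ hk; simp [hk, hw]
  · simp

lemma Evar (w : Fin n → Fin c → ℝ) (hw0 : ∀ i r, 0 ≤ w i r) (hw : ∀ i, ∑ r, w i r = 1)
    (Z : Fin n → Fin c → ℝ) (hZ : ∀ i, ∑ r, w i r * Z i r = 0) (L : ℝ) (hL : ∀ i r, |Z i r| ≤ L) :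
    ∑ x : Fin n → Fin c, (∏ k, w k (x k)) * (∑ i, Z i (x i)) ^ 2 ≤ n * L ^ 2 := by
  have e : ∀ x : Fin n → Fin c, (∏ k, w k (x k)) * (∑ i, Z i (x i)) ^ 2 =
      ∑ i, ∑ j, (∏ k, w k (x k)) * (Z i (x i) * Z j (x j)) := by
    intro x
    rw [sq, Finset.sum_mul_sum, Finset.mul_sum]
    simp_rw [Finset.mul_sum]
  simp_rw [e]
  rw [Finset.sum_comm]
  have key : ∀ i, ∑ x : Fin n → Fin c, ∑ j, (∏ k, w k (x k)) * (Z i (x i) * Z j (x j)) ≤ L ^ 2 := by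
    intro i
    rw [Finset.sum_comm, Finset.sum_eq_single i]
    · have h1 := Emarg w hw i (fun r => Z i r * Z i r)
      rw [h1]
      calc ∑ r, w i r * (Z i r * Z i r) ≤ ∑ r, w i r * L ^ 2 := by
            refine Finset.sum_le_sum fun r _ => mul_le_mul_of_nonneg_left ?_ (hw0 i r)
            have := hL i r
            have h2 := abs_nonneg (Z i r)
            nlinarith [abs_mul_abs_self (Z i r)]
        _ = L ^ 2 := by rw [← Finset.sum_mul, hw, one_mul]
    · intro j _ hj
      have := Epi w (fun k r => (if k = i then Z i r else 1) * (if k = j then Z j r else 1))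
      simp only [Finset.prod_mul_distrib, Finset.prod_ite_eq', Finset.mem_univ, if_true] at this
      rw [this]
      refine Finset.prod_eq_zero (Finset.mem_univ i) ?_
      simp [hj.symm, hZ]
    · simp
  refine (Finset.sum_le_sum fun i _ => key i).trans ?_
  simp

open Classical in
/-- Weight of an event under a product weight. -/
noncomputable def PB (w : Fin n → Fin c → ℝ) (B : Set (Fin n → Fin c)) : ℝ :=
  ∑ x : Fin n → Fin c, if x ∈ B then ∏ k, w k (x k) else 0

lemma PB_nonneg {w : Fin n → Fin c → ℝ} (hw : ∀ i r, 0 ≤ w i r) (B : Set (Fin n → Fin c)) : 0 ≤ PB w B := by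
  classical
  refine Finset.sum_nonneg fun x _ => ?_
  split_ifs
  · exact Finset.prod_nonneg fun i _ => hw _ _
  · exact le_rfl

lemma PB_mono {w : Fin n → Fin c → ℝ} (hw : ∀ i r, 0 ≤ w i r) {B B' : Set (Fin n → Fin c)} (h : B ⊆ B') :
    PB w B ≤ PB w B' := by
  classical
  refine Finset.sum_le_sum fun x _ => ?_
  have := Finset.prod_nonneg fun i (_ : i ∈ Finset.univ) => hw i (x i)
  by_cases h1 : x ∈ B
  · rw [if_pos h1, if_pos (h h1)]
  · rw [if_neg h1]; split_ifs
    · exact this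
    · exact le_rfl

lemma PB_union {w : Fin n → Fin c → ℝ} (hw : ∀ i r, 0 ≤ w i r) {κ : Type*} (s : Finset κ)
    (B : κ → Set (Fin n → Fin c)) : PB w (⋃ k ∈ s, B k) ≤ ∑ k ∈ s, PB w (B k) := by
  classical
  unfold PB
  rw [Finset.sum_comm]
  refine Finset.sum_le_sum fun x _ => ?_
  have h0 := Finset.prod_nonneg fun i (_ : i ∈ Finset.univ) => hw i (x i)
  have h1 : ∀ k ∈ s, 0 ≤ if x ∈ B k then ∏ i, w i (x i) else 0 := fun k _ => by split_ifs <;> simp [h0]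
  split_ifs with h
  · simp only [mem_iUnion] at h
    obtain ⟨k, hk, hx⟩ := h
    refine le_trans ?_ (Finset.single_le_sum h1 hk)
    rw [if_pos hx]
  · exact Finset.sum_nonneg h1

lemma PB_compl {w : Fin n → Fin c → ℝ} (hw : ∀ i, ∑ r, w i r = 1) (B : Set (Fin n → Fin c)) :
    PB w B = 1 - PB w Bᶜ := by
  classical
  rw [← Etot w hw, PB, PB, ← Finset.sum_sub_distrib]
  refine Finset.sum_congr rfl fun x _ => ?_
  by_cases h : x ∈ B <;> simp [h]

/-- Chernoff / Markov. -/
lemma PB_markov {w : Fin n → Fin c → ℝ} (hw : ∀ i r, 0 ≤ w i r) (B : Set (Fin n → Fin c))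
    (Y : (Fin n → Fin c) → ℝ) (hY0 : ∀ x, 0 ≤ Y x) (t : ℝ) (ht : ∀ x ∈ B, t ≤ Y x) :
    t * PB w B ≤ ∑ x, (∏ k, w k (x k)) * Y x := by
  classical
  unfold PB
  rw [Finset.mul_sum]
  refine Finset.sum_le_sum fun x _ => ?_
  have h0 := Finset.prod_nonneg fun i (_ : i ∈ Finset.univ) => hw i (x i)
  split_ifs with h
  · rw [mul_comm]; exact mul_le_mul_of_nonneg_left (ht x h) h0
  · rw [mul_zero]; exact mul_nonneg h0 (hY0 x)

lemma jensen_cell (hτ : EM τ) (i : Fin n) {g : ℝ → ℝ} {s : Set ℝ} (hg : ConvexOn ℝ s g)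
    (hgc : ContinuousOn g s) (hs : IsClosed s) {h : ℝ → ℝ} (hhs : ∀ u, h u ∈ s) (hh : Integrable h unif01)
    (hgh : Integrable (fun u => g (h u)) unif01) :
    g (n * ci τ i h) ≤ n * ci τ i (fun u => g (h u)) := by
  have hn : (0:ℝ) < n := by exact_mod_cast i.pos
  have h0 : unif01 (τ ⁻¹' {i}) ≠ 0 := by
    intro h0
    have := hτ.cell i
    rw [Measure.real, h0] at this
    have h2 : (0:ℝ) < 1 / n := by positivity
    rw [← this] at h2; simp at h2
  have := hg.map_set_average_le hgc hs h0 (measure_ne_top _ _) (ae_of_all _ hhs) hh.integrableOn hgh.integrableOn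
  rw [setAverage_eq, setAverage_eq, hτ.cell] at this
  simpa [ci] using this

lemma pr_step (hτ : EM τ) (p : Fin n → Fin c → ℝ) (hp) {h : ℝ → ℝ} (hh : Integrable h unif01) (r : Fin c) :
    pr h (step hτ p hp) r = ∑ i, p i r * ci τ i h := by
  rw [pr, ← sum_ci hτ (mul_int hh _ r)]
  refine Finset.sum_congr rfl fun i _ => ?_
  rw [ci, ci, ← integral_const_mul]
  refine setIntegral_congr_fun (cell_meas hτ i) fun u hu => ?_
  simp only [mem_preimage, mem_singleton_iff] at hu
  simp [step, hu, mul_comm]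

lemma pr_ist (hτ : EM τ) (x : Fin n → Fin c) {h : ℝ → ℝ} (hh : Integrable h unif01) (r : Fin c) :
    pr h (ist hτ x) r = ∑ i, (if x i = r then 1 else 0) * ci τ i h := pr_step hτ _ _ hh r

lemma ci_abs (hτ : EM τ) (i : Fin n) {h : ℝ → ℝ} {M : ℝ} (hM : ∀ u, |h u| ≤ M) : |ci τ i h| ≤ M / n := by
  have := norm_setIntegral_le_of_norm_le_const (μ := unif01) (s := τ ⁻¹' {i}) (f := h) (C := M)
    (measure_lt_top _ _) (fun u _ => hM u)
  rw [hτ.cell i] at this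
  rw [ci, ← Real.norm_eq_abs]
  exact this.trans (le_of_eq (by ring))

variable {m : Fin c → ℝ} (hm : ∀ r, 0 < m r) (hm1 : ∑ r, m r = 1)

lemma chernoff (hm : ∀ r, 0 < m r) (hm1 : ∑ r, m r = 1) {s : ℝ} (hs : 0 < s) (hs1 : s ≤ 1) (hτ : EM τ) (f : TT c) (a : ℝ) :
    PB (fun _ => m) {x : Fin n → Fin c | a < ∑ r, pr (lam m f s r) (ist hτ x) r} ≤ Real.exp (-(n * a)) := by
  have hli : ∀ r, Integrable (lam m f s r) unif01 := fun r =>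
    test_int ⟨lam m f s r, lam_test hm hm1 hs hs1 f r⟩
  have hY : ∀ x : Fin n → Fin c, ∑ r, pr (lam m f s r) (ist hτ x) r = ∑ i, ci τ i (lam m f s (x i)) := by
    intro x
    simp_rw [pr_ist hτ x (hli _)]
    rw [Finset.sum_comm]
    refine Finset.sum_congr rfl fun i _ => ?_
    simp
  have h1 := PB_markov (n := n) (w := fun _ => m) (fun _ r => (hm r).le)
    {x : Fin n → Fin c | a < ∑ r, pr (lam m f s r) (ist hτ x) r}
    (fun x => Real.exp (n * ∑ i, ci τ i (lam m f s (x i)))) (fun x => (Real.exp_pos _).le) (Real.exp (n * a))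
    (fun x hx => Real.exp_le_exp.2 (mul_le_mul_of_nonneg_left (by rw [← hY]; exact le_of_lt hx) (Nat.cast_nonneg _)))
  have h2 : ∑ x : Fin n → Fin c, (∏ k, m (x k)) * Real.exp (n * ∑ i, ci τ i (lam m f s (x i))) ≤ 1 := by
    have e := Epi (n := n) (fun _ => m) (fun i r => Real.exp (n * ci τ i (lam m f s r)))
    simp only [← Real.exp_sum, ← Finset.mul_sum] at e
    rw [e]
    refine Finset.prod_le_one (fun i _ => Finset.sum_nonneg fun r _ => mul_nonneg (hm r).le (Real.exp_pos _).le) fun i _ => ?_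
    have hsmi : ∀ r, Integrable (sm m f s r) unif01 := fun r =>
      ((f_int f r).const_mul _).add (integrable_const _)
    have hei : ∀ r, (fun u => Real.exp (lam m f s r u)) = fun u => (m r)⁻¹ * sm m f s r u := fun r => by
      ext u; rw [← exp_lam hm hs hs1, ← mul_assoc, inv_mul_cancel₀ (hm r).ne', one_mul]
    calc ∑ r, m r * Real.exp (n * ci τ i (lam m f s r)) ≤ ∑ r, m r * (n * ci τ i (fun u => Real.exp (lam m f s r u))) := by
          refine Finset.sum_le_sum fun r _ => mul_le_mul_of_nonneg_left ?_ (hm r).le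
          refine jensen_cell hτ i convexOn_exp Real.continuous_exp.continuousOn isClosed_univ (fun _ => mem_univ _) (hli r) ?_
          rw [hei r]; exact (hsmi r).const_mul _
      _ = n * ∑ r, ci τ i (sm m f s r) := by
          rw [Finset.mul_sum]
          refine Finset.sum_congr rfl fun r _ => ?_
          rw [hei r, ci, ci, integral_const_mul]
          field_simp [(hm r).ne']
      _ = n * ci τ i (fun _ => 1) := by
          congr 1
          simp only [ci]
          rw [← integral_finsetSum _ fun r _ => (hsmi r).integrableOn]
          simp only [sm_sum hm1]
      _ = 1 := by
          have hn : (0:ℝ) < n := by exact_mod_cast i.pos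
          rw [ci_const hτ]; field_simp
  rw [Real.exp_neg, ← one_div, le_div_iff₀ (Real.exp_pos _), mul_comm]
  exact h1.trans h2

end TT

namespace TT
variable {c v n : ℕ} {τ : ℝ → Fin n} {m : Fin c → ℝ} (hm : ∀ r, 0 < m r) (hm1 : ∑ r, m r = 1)

/-- The approximation hypothesis. -/
def Apx (Φ : TT c → ℝ) (U : ∀ n : ℕ, (Fin n → Fin c) → ℝ) : Prop :=
  ∀ ε > 0, ∀ᶠ n in atTop, ∃ (τ : ℝ → Fin n) (hτ : EM τ), (∀ x, |U n x - Φ (ist hτ x)| ≤ ε) ∧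
    ∀ f : TT c, |Φ f - Φ (bar hτ f)| ≤ ε

lemma upper_loc (hm : ∀ r, 0 < m r) (hm1 : ∑ r, m r = 1) {Φ : TT c → ℝ} (hΦ : Continuous Φ) (F : Set ℝ) (a : ℝ)
    (h : ∀ f, Φ f ∈ closure F → a < ent m f) (f : TT c) :
    ∃ N : Set (TT c), IsOpen N ∧ f ∈ N ∧ ∃ ε > 0, ∀ (n : ℕ) (τ : ℝ → Fin n) (hτ : EM τ)
      (u : (Fin n → Fin c) → ℝ), (∀ x, |u x - Φ (ist hτ x)| ≤ ε) →
      PB (fun _ => m) {x | u x ∈ F ∧ ist hτ x ∈ N} ≤ Real.exp (-(n * a)) := by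
  by_cases hf : Φ f ∈ closure F
  · obtain ⟨s, hs, hs1, h2⟩ := exists_s hm hm1 f (h f hf)
    refine ⟨_, lam_open hm hm1 hs hs1.le f a, h2, 1, one_pos, fun n τ hτ u _ => ?_⟩
    exact (PB_mono (fun _ r => (hm r).le) (fun x hx => hx.2)).trans (chernoff hm hm1 hs hs1.le hτ f a)
  · rw [Metric.mem_closure_iff] at hf
    push Not at hf
    obtain ⟨ρ, hρ, h3⟩ := hf
    refine ⟨Φ ⁻¹' Metric.ball (Φ f) (ρ / 2), Metric.isOpen_ball.preimage hΦ, by simp [hρ], ρ / 4, by positivity,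
      fun n τ hτ u hu => ?_⟩
    have : {x | u x ∈ F ∧ ist hτ x ∈ Φ ⁻¹' Metric.ball (Φ f) (ρ / 2)} = ∅ := by
      ext x
      simp only [mem_preimage, Metric.mem_ball, Real.dist_eq, mem_empty_iff_false, iff_false]
      rintro ⟨h4, h5⟩
      have h6 := h3 _ h4
      have h7 := hu x
      rw [Real.dist_eq] at h6
      have h8 : |Φ f - u x| ≤ |Φ (ist hτ x) - Φ f| + |u x - Φ (ist hτ x)| := by
        rw [abs_sub_comm (Φ f)]
        refine (le_of_eq ?_).trans (abs_add_le _ _)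
        congr 1; ring
      linarith
    rw [this]
    simp [PB, (Real.exp_pos _).le]

lemma upper (hm : ∀ r, 0 < m r) (hm1 : ∑ r, m r = 1) {Φ : TT c → ℝ} (hΦ : Continuous Φ) {U : ∀ n : ℕ, (Fin n → Fin c) → ℝ} (hst : Apx Φ U)
    (F : Set ℝ) (a : ℝ) (h : ∀ f, Φ f ∈ closure F → a < ent m f) :
    ∃ K : ℕ, ∀ᶠ n : ℕ in atTop, PB (fun _ => m) {x | U n x ∈ F} ≤ K * Real.exp (-(n * a)) := by
  choose N hNo hfN ε hε hN using upper_loc hm hm1 hΦ F a h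
  obtain ⟨t, ht⟩ := isCompact_univ.elim_finite_subcover N hNo (fun f _ => mem_iUnion.2 ⟨f, hfN f⟩)
  obtain ⟨e, he, hemin⟩ : ∃ e > 0, ∀ f ∈ t, e ≤ ε f := by
    classical
    clear ht
    induction t using Finset.induction_on with
    | empty => exact ⟨1, one_pos, by simp⟩
    | insert f t _ ih =>
      obtain ⟨e, he, h1⟩ := ih
      refine ⟨min e (ε f), lt_min he (hε f), fun g hg => ?_⟩
      rcases Finset.mem_insert.1 hg with rfl | hg
      · exact min_le_right _ _
      · exact (min_le_left _ _).trans (h1 g hg)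
  refine ⟨t.card, ?_⟩
  filter_upwards [hst e he] with n hn
  obtain ⟨τ, hτ, h1, -⟩ := hn
  calc PB (fun _ => m) {x | U n x ∈ F} ≤ PB (fun _ => m) (⋃ f ∈ t, {x | U n x ∈ F ∧ ist hτ x ∈ N f}) := by
        refine PB_mono (fun _ r => (hm r).le) fun x hx => ?_
        have := ht (mem_univ (ist hτ x))
        simp only [mem_iUnion] at this ⊢
        obtain ⟨f, hf, hx2⟩ := this
        exact ⟨f, hf, hx, hx2⟩
    _ ≤ ∑ f ∈ t, PB (fun _ => m) {x | U n x ∈ F ∧ ist hτ x ∈ N f} := PB_union (fun _ r => (hm r).le) _ _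
    _ ≤ ∑ f ∈ t, Real.exp (-(n * a)) := Finset.sum_le_sum fun f hf =>
        hN f n τ hτ _ fun x => (h1 x).trans (hemin f hf)
    _ = _ := by simp

lemma mul_log_div (hm : ∀ r, 0 < m r) (t : ℝ) (r : Fin c) :
    t * Real.log (t / m r) = t * Real.log t + (-Real.log (m r)) * t := by
  rcases eq_or_ne t 0 with rfl | ht
  · simp
  · rw [Real.log_div ht (hm r).ne']; ring

lemma cell_kl (hm : ∀ r, 0 < m r) (hτ : EM τ) (f : TT c) :
    ∑ i, ∑ r, avg τ f i r * Real.log (avg τ f i r / m r) ≤ n * ent m f := by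
  have e : ent m f = ∑ i, ∑ r, ci τ i (fun u => f.1 u r * Real.log (f.1 u r / m r)) := by
    rw [Finset.sum_comm]
    simp_rw [sum_ci hτ (ent_int1 hm f _)]
    rw [ent, integral_finsetSum _ fun r _ => ent_int1 hm f r]
  rw [e, Finset.mul_sum]
  refine Finset.sum_le_sum fun i _ => ?_
  rw [Finset.mul_sum]
  refine Finset.sum_le_sum fun r _ => ?_
  have hg : ConvexOn ℝ (Ici 0) fun t => t * Real.log t + (-Real.log (m r)) * t :=
    Real.convexOn_mul_log.add ((LinearMap.convexOn (LinearMap.mulLeft ℝ (-Real.log (m r))) (convex_Ici 0)))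
  have := jensen_cell hτ i hg (Real.continuous_mul_log.add (continuous_const.mul continuous_id)).continuousOn
    isClosed_Ici (h := fun u => f.1 u r) (fun u => f.nn u r) (f_int f r)
    (by simpa only [mul_log_div hm] using ent_int1 hm f r)
  simp only [← mul_log_div hm] at this
  exact this

lemma kl_sum (hm : ∀ r, 0 < m r) (w : Fin n → Fin c → ℝ) (hw : ∀ i, ∑ r, w i r = 1) :
    ∑ x : Fin n → Fin c, (∏ k, w k (x k)) * Real.log ((∏ k, w k (x k)) / ∏ k, m (x k)) =
      ∑ i, ∑ r, w i r * Real.log (w i r / m r) := by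
  simp_rw [← Emarg w hw]
  rw [Finset.sum_comm]
  refine Finset.sum_congr rfl fun x _ => ?_
  rw [← Finset.mul_sum]
  by_cases h0 : ∏ k, w k (x k) = 0
  · rw [h0]; simp
  · rw [← Finset.prod_div_distrib, Real.log_prod]
    intro i _
    exact div_ne_zero (fun h => h0 (Finset.prod_eq_zero (Finset.mem_univ i) h)) (hm _).ne'

lemma fin_gibbs (hm : ∀ r, 0 < m r) (hm1 : ∑ r, m r = 1) (w : Fin n → Fin c → ℝ) (hw0 : ∀ i r, 0 ≤ w i r) (hw : ∀ i, ∑ r, w i r = 1)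
    (B : Set (Fin n → Fin c)) (hb : 0 < PB w B) (hb0 : 0 < PB (fun _ => m) B) :
    PB w B * Real.log (PB w B / PB (fun _ => m) B) ≤ (∑ i, ∑ r, w i r * Real.log (w i r / m r)) + 1 := by
  classical
  rw [← kl_sum hm w hw]
  have ec : PB w B * Real.log (PB w B / PB (fun _ => m) B) =
    ∑ x, if x ∈ B then Real.log (PB w B / PB (fun _ => m) B) * (∏ k, w k (x k)) else 0 := by
    conv_lhs => rw [PB]
    rw [Finset.sum_mul]
    refine Finset.sum_congr rfl fun x _ => ?_
    rw [ite_mul, zero_mul, mul_comm]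
    simp only [PB]
  set b := PB w B with hbdef
  set b0 := PB (fun _ => m) B with hb0def
  rw [ec]
  have hP : ∀ x : Fin n → Fin c, 0 < ∏ k, m (x k) := fun x => Finset.prod_pos fun i _ => hm _
  have hp : ∀ x : Fin n → Fin c, 0 ≤ ∏ k, w k (x k) := fun x => Finset.prod_nonneg fun i _ => hw0 _ _
  have h1 : ∀ x : Fin n → Fin c, (if x ∈ B then Real.log (b / b0) * (∏ k, w k (x k)) else 0) ≤
      (∏ k, w k (x k)) * Real.log ((∏ k, w k (x k)) / ∏ k, m (x k)) +
      ((∏ k, m (x k)) + ((b / b0 - 1) * (if x ∈ B then ∏ k, m (x k) else 0) - if x ∈ B then ∏ k, w k (x k) else 0)) := by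
    intro x
    split_ifs with hx
    · have := gibbs_pt (hp x) (mul_pos (div_pos hb hb0) (hP x)) (hP x)
      rw [mul_div_assoc, div_self (hP x).ne', mul_one] at this
      linarith
    · have := gibbs_pt (hp x) (hP x) (hP x)
      rw [div_self (hP x).ne', Real.log_one] at this
      linarith [hp x]
  refine (Finset.sum_le_sum fun x _ => h1 x).trans ?_
  rw [Finset.sum_add_distrib, Finset.sum_add_distrib, Finset.sum_sub_distrib, ← Finset.mul_sum]
  have e1 : ∑ x : Fin n → Fin c, ∏ k, m (x k) = 1 := Etot (fun _ => m) fun _ => hm1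
  have e2 : (∑ x : Fin n → Fin c, if x ∈ B then ∏ k, m (x k) else 0) = b0 := by rw [hb0def, PB]
  have e3 : (∑ x : Fin n → Fin c, if x ∈ B then ∏ k, w k (x k) else 0) = b := by rw [hbdef, PB]
  rw [e1, e2, e3]
  have : (b / b0 - 1) * b0 = b - b0 := by field_simp
  rw [this]; linarith

lemma conc (hτ : EM τ) (f : TT c) (h : Tst) (r : Fin c) {M : ℝ} (hM : ∀ u, |h.1 u| ≤ M) {δ : ℝ} (hδ : 0 < δ) :
    PB (avg τ f) {x | δ ≤ |pr h.1 (ist hτ x) r - pr h.1 (bar hτ f) r|} ≤ (M / δ) ^ 2 / n := by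
  rcases Nat.eq_zero_or_pos n with rfl | hn0
  · exact (Fin.elim0 (τ 0))
  have hn : (0:ℝ) < n := by exact_mod_cast hn0
  set Z : Fin n → Fin c → ℝ := fun i r' => ((if r' = r then 1 else 0) - avg τ f i r) * ci τ i h.1 with hZdef
  have hS : ∀ x : Fin n → Fin c, pr h.1 (ist hτ x) r - pr h.1 (bar hτ f) r = ∑ i, Z i (x i) := by
    intro x
    rw [pr_ist hτ x (test_int h) r, bar, pr_step hτ _ _ (test_int h) r, ← Finset.sum_sub_distrib]
    refine Finset.sum_congr rfl fun i _ => ?_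
    rw [hZdef]; ring
  have hle1 : ∀ i, avg τ f i r ≤ 1 := fun i => by
    rw [← (avg_prop hτ f i).2]
    exact Finset.single_le_sum (fun r _ => (avg_prop hτ f i).1 r) (Finset.mem_univ r)
  have hv := Evar (avg τ f) (fun i => (avg_prop hτ f i).1) (fun i => (avg_prop hτ f i).2) Z
    (fun i => by
      simp only [hZdef]
      simp_rw [← mul_assoc]
      rw [← Finset.sum_mul]
      simp_rw [mul_sub]
      rw [Finset.sum_sub_distrib, ← Finset.sum_mul, (avg_prop hτ f i).2]
      simp) (M / n) (fun i r' => by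
      rw [hZdef]; simp only
      rw [abs_mul]
      have h1 : |(if r' = r then (1:ℝ) else 0) - avg τ f i r| ≤ 1 := by
        have := (avg_prop hτ f i).1 r
        have := hle1 i
        rw [_root_.abs_le]; split_ifs <;> constructor <;> linarith
      calc _ ≤ 1 * |ci τ i h.1| := mul_le_mul_of_nonneg_right h1 (abs_nonneg _)
        _ ≤ _ := by rw [one_mul]; exact ci_abs hτ i hM)
  have := PB_markov (w := avg τ f) (fun i => (avg_prop hτ f i).1)
    {x | δ ≤ |pr h.1 (ist hτ x) r - pr h.1 (bar hτ f) r|} (fun x => (∑ i, Z i (x i)) ^ 2) (fun x => sq_nonneg _) (δ ^ 2)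
    (fun x hx => by
      rw [← hS, ← sq_abs (pr _ _ _ - _)]
      exact pow_le_pow_left₀ hδ.le hx 2)
  have h3 := this.trans hv
  rw [div_pow, div_div, le_div_iff₀ (by positivity)]
  have : (n:ℝ) * (M / n) ^ 2 * n = M ^ 2 := by field_simp
  nlinarith

lemma lower (hm : ∀ r, 0 < m r) (hm1 : ∑ r, m r = 1) {Φ : TT c → ℝ} (hΦ : Continuous Φ) {U : ∀ n : ℕ, (Fin n → Fin c) → ℝ} (hst : Apx Φ U)
    (F : Set ℝ) (f : TT c) (a : ℝ) (ha : ent m f < a) {ρ : ℝ} (hρ : 0 < ρ) (hF : Metric.ball (Φ f) ρ ⊆ F) :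
    ∀ᶠ n : ℕ in atTop, Real.exp (-(n * a)) ≤ PB (fun _ => m) {x | U n x ∈ F} := by
  obtain ⟨s, δ, hδ, hs⟩ := uc_extract (CompactSpace.uniformContinuous_of_continuous hΦ) (ρ / 4) (by positivity)
  choose M hM using fun h : Tst => h.2.2
  set K : ℝ := ∑ k ∈ s, (M k.1 / δ) ^ 2 with hK
  have hK0 : 0 ≤ K := Finset.sum_nonneg fun k _ => sq_nonneg _
  have hE := ent_nonneg hm hm1 f
  obtain ⟨N1, hN1⟩ := exists_nat_gt ((2 + K * a) / (a - ent m f))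
  obtain ⟨N2, hN2⟩ := exists_nat_gt K
  filter_upwards [hst (ρ / 4) (by positivity), eventually_ge_atTop N1, eventually_ge_atTop N2, eventually_ge_atTop 1] with n hn hn1 hn2 hn3
  obtain ⟨τ, hτ, h1, h2⟩ := hn
  have hn0 : (0:ℝ) < n := by exact_mod_cast hn3
  set A : Set (Fin n → Fin c) := {x | U n x ∈ F} with hA
  have hsub : Aᶜ ⊆ ⋃ k ∈ s, {x | δ ≤ |pr k.1.1 (ist hτ x) k.2 - pr k.1.1 (bar hτ f) k.2|} := by
    intro x hx
    by_contra hcon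
    simp only [mem_iUnion, not_exists] at hcon
    have h3 := hs (ist hτ x) (bar hτ f) fun k hk => not_le.1 (hcon k hk)
    refine hx (hF ?_)
    rw [Metric.mem_ball, Real.dist_eq]
    have h4 := h1 x
    have h5 := h2 f
    rw [_root_.abs_le] at h4 h5
    rw [abs_lt] at h3 ⊢
    constructor <;> linarith
  have hw0 : ∀ i r, 0 ≤ avg τ f i r := fun i => (avg_prop hτ f i).1
  have hw1 : ∀ i, ∑ r, avg τ f i r = 1 := fun i => (avg_prop hτ f i).2
  have hc : PB (avg τ f) Aᶜ ≤ K / n := by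
    refine (PB_mono hw0 hsub).trans ((PB_union hw0 _ _).trans ?_)
    rw [hK, Finset.sum_div]
    exact Finset.sum_le_sum fun k _ => conc hτ f k.1 k.2 (hM k.1) hδ
  have hbge : 1 - K / n ≤ PB (avg τ f) A := by rw [PB_compl hw1]; linarith
  have hKn : K / n < 1 := by
    rw [div_lt_one hn0]
    exact hN2.trans_le (by exact_mod_cast hn2)
  have hb : 0 < PB (avg τ f) A := by linarith
  have hb0 : 0 < PB (fun _ => m) A := by
    classical
    have hne : A.Nonempty := by
      by_contra hne
      rw [not_nonempty_iff_eq_empty] at hne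
      rw [hne] at hb
      simp [PB] at hb
    obtain ⟨x, hx⟩ := hne
    refine Finset.sum_pos' (fun y _ => ?_) ⟨x, Finset.mem_univ x, ?_⟩
    · split_ifs
      · exact Finset.prod_nonneg fun i _ => (hm _).le
      · exact le_rfl
    · rw [if_pos hx]; exact Finset.prod_pos fun i _ => hm _
  have hg := fin_gibbs hm hm1 (avg τ f) hw0 hw1 A hb hb0
  have hkl := cell_kl hm hτ f
  rw [Real.log_div hb.ne' hb0.ne'] at hg
  set b := PB (avg τ f) A with hbdef
  set b0 := PB (fun _ => m) A
  have hlb : -1 ≤ b * Real.log b := by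
    have := Real.one_sub_inv_le_log_of_pos hb
    have h6 := mul_le_mul_of_nonneg_left this hb.le
    have : b * (1 - b⁻¹) = b - 1 := by field_simp
    linarith
  rw [← Real.le_log_iff_exp_le hb0]
  by_contra hcon
  push Not at hcon
  have h7 : b * Real.log b0 ≤ b * (-(n * a)) := mul_le_mul_of_nonneg_left hcon.le hb.le
  have ha0 : 0 < a := by linarith
  have h8 : (1 - K / n) * (n * a) ≤ b * (n * a) := mul_le_mul_of_nonneg_right hbge (by positivity)
  have h9 : (1 - K / n) * (n * a) = n * a - K * a := by field_simp
  rw [div_lt_iff₀ (by linarith)] at hN1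
  have h10 : (N1:ℝ) * (a - ent m f) ≤ n * (a - ent m f) :=
    mul_le_mul_of_nonneg_right (by exact_mod_cast hn1) (by linarith)
  nlinarith

end TT

namespace TT
variable {c v n : ℕ}

lemma pi_PB (μ : Measure (Fin c)) [IsProbabilityMeasure μ] (B : Set (Fin n → Fin c)) :
    (Measure.pi fun _ : Fin n => μ) B = ENNReal.ofReal (PB (fun _ r => (μ {r}).toReal) B) := by
  classical
  have h1 : (B.toFinset : Set (Fin n → Fin c)) = B := Set.coe_toFinset B
  conv_lhs => rw [← h1]
  rw [← sum_measure_singleton, PB, ENNReal.ofReal_sum_of_nonneg, ← Finset.sum_filter_add_sum_filter_not Finset.univ (fun x => x ∈ B)]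
  · have : ∑ x with ¬ x ∈ B, ENNReal.ofReal (if x ∈ B then ∏ k, (μ {x k}).toReal else 0) = 0 := by
      refine Finset.sum_eq_zero fun x hx => ?_
      rw [if_neg (Finset.mem_filter.1 hx).2]; simp
    rw [this, add_zero]
    have hs : B.toFinset = Finset.univ.filter (fun x => x ∈ B) := by ext; simp
    rw [hs]
    refine Finset.sum_congr rfl fun x hx => ?_
    rw [if_pos (Finset.mem_filter.1 hx).2, Measure.pi_singleton, ENNReal.ofReal_prod_of_nonneg (fun _ _ => ENNReal.toReal_nonneg)]
    refine Finset.prod_congr rfl fun k _ => ?_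
    rw [ENNReal.ofReal_toReal (measure_ne_top _ _)]
  · intro x _
    split_ifs
    · exact Finset.prod_nonneg fun i _ => ENNReal.toReal_nonneg
    · exact le_rfl

lemma log_exp_term (a : ℝ) (hn : 1 ≤ n) :
    (((n : ℝ)⁻¹ : ℝ) : EReal) * ENNReal.log (ENNReal.ofReal (Real.exp (-(n * a)))) = ((-a : ℝ) : EReal) := by
  have hn0 : (n:ℝ) ≠ 0 := by positivity
  rw [ENNReal.log_ofReal_of_pos (Real.exp_pos _), Real.log_exp, ← EReal.coe_mul]
  congr 1; field_simp

lemma term_mono {x y : ℝ} (h : x ≤ y) :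
    (((n : ℝ)⁻¹ : ℝ) : EReal) * ENNReal.log (ENNReal.ofReal x) ≤ (((n : ℝ)⁻¹ : ℝ) : EReal) * ENNReal.log (ENNReal.ofReal y) :=
  mul_le_mul_of_nonneg_left (ENNReal.log_monotone (ENNReal.ofReal_le_ofReal h)) (by exact_mod_cast (by positivity : (0:ℝ) ≤ (n:ℝ)⁻¹))

theorem ldp (μ : Measure (Fin c)) [IsProbabilityMeasure μ] (hpos : ∀ r : Fin c, 0 < μ {r})
    (G : SimpleGraph (Fin v)) [DecidableRel G.Adj] (W : ℝ → ℝ → ℝ)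
    (hcont : Continuous fun f : TT c => G2 c G W f.1) (U : ∀ n : ℕ, (Fin n → Fin c) → ℝ)
    (hst : Apx (fun f : TT c => G2 c G W f.1) U) :
    SatisfiesLDP (fun n => Measure.pi fun _ : Fin n => μ) U (rate2 c G W μ) := by
  set m : Fin c → ℝ := fun r => (μ {r}).toReal with hmdef
  have hm : ∀ r, 0 < m r := fun r => ENNReal.toReal_pos (hpos r).ne' (measure_ne_top _ _)
  have hm1 : ∑ r, m r = 1 := by
    have h1 : ∑ r, μ {r} = 1 := by
      rw [sum_measure_singleton]; simp
    rw [hmdef]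
    simp only
    rw [← ENNReal.toReal_sum (fun r _ => measure_ne_top _ _), h1, ENNReal.toReal_one]
  refine ⟨fun a ha => good G W hm hm1 (fun _ => rfl) hcont a ha, fun F _ => ⟨?_, ?_⟩⟩
  · simp_rw [pi_PB]
    rw [EReal.neg_le]
    refine le_iInf₂ fun t ht => ?_
    by_contra hcon
    obtain ⟨a, h1, h2⟩ := EReal.lt_iff_exists_real_btwn.1 (not_le.1 hcon)
    have h0 : (0:ℝ) ≤ a := by
      have : (0 : EReal) < a := lt_of_le_of_lt (EReal.coe_ennreal_nonneg _) h1
      exact_mod_cast this.le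
    have h3 : rate2 c G W μ t < ENNReal.ofReal a := by
      rw [← EReal.coe_ennreal_lt_coe_ennreal_iff, EReal.coe_ennreal_ofReal, max_eq_left h0]; exact h1
    rw [rate2_eq, iInf_lt_iff] at h3
    obtain ⟨⟨f, hf⟩, h4⟩ := h3
    have h5 : ent m f < a := (ENNReal.ofReal_lt_ofReal_iff_of_nonneg (ent_nonneg hm hm1 f)).1 h4
    obtain ⟨ρ, hρ, hball⟩ := Metric.isOpen_iff.1 isOpen_interior t ht
    have h6 := lower hm hm1 hcont hst F f a h5 hρ (by rw [hf]; exact hball.trans interior_subset)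
    refine absurd h2 (not_lt.2 ?_)
    rw [EReal.neg_le]
    refine Filter.le_liminf_of_le (by isBoundedDefault) ?_
    filter_upwards [h6, eventually_ge_atTop 1] with n hn hn1
    rw [← EReal.coe_neg, ← log_exp_term a hn1]
    exact term_mono hn
  · simp_rw [pi_PB]
    rw [EReal.le_neg]
    by_contra hcon
    obtain ⟨a', h1, h2⟩ := EReal.lt_iff_exists_real_btwn.1 (not_le.1 hcon)
    obtain ⟨a, h3, h4⟩ := EReal.lt_iff_exists_real_btwn.1 h2
    have haa : a' < a := by exact_mod_cast h3
    obtain ⟨K, hK⟩ := upper hm hm1 hcont hst F a (fun f hf => by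
      have h5 : (a : EReal) < (rate2 c G W μ (G2 c G W f.1) : EReal) := h4.trans_le (iInf₂_le _ hf)
      have h6 : rate2 c G W μ (G2 c G W f.1) ≤ ENNReal.ofReal (ent m f) := by
        rw [rate2_eq]
        exact iInf_le (fun g : {g : TT c // G2 c G W g.1 = G2 c G W f.1} => ENNReal.ofReal (ent m g.1)) ⟨f, rfl⟩
      have h7 := h5.trans_le (EReal.coe_ennreal_le_coe_ennreal_iff.2 h6)
      rw [EReal.coe_ennreal_ofReal, max_eq_left (ent_nonneg hm hm1 f)] at h7
      exact_mod_cast h7)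
    refine absurd h1 (not_lt.2 ?_)
    rw [EReal.le_neg]
    refine Filter.limsup_le_of_le (by isBoundedDefault) ?_
    obtain ⟨N, hN⟩ := exists_nat_gt (K / (a - a'))
    filter_upwards [hK, eventually_ge_atTop 1, eventually_ge_atTop N] with n hn hn1 hn2
    rw [← EReal.coe_neg, ← log_exp_term a' hn1]
    refine term_mono (hn.trans ?_)
    have e : Real.exp (-(n * a')) = Real.exp (n * (a - a')) * Real.exp (-(n * a)) := by
      rw [← Real.exp_add]; congr 1; ring
    rw [e]
    refine mul_le_mul_of_nonneg_right ?_ (Real.exp_pos _).le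
    rw [div_lt_iff₀ (by linarith)] at hN
    have h8 : (N:ℝ) * (a - a') ≤ n * (a - a') := mul_le_mul_of_nonneg_right (by exact_mod_cast hn2) (by linarith)
    linarith [Real.add_one_le_exp (n * (a - a'))]

end TT

namespace TT
variable {c v n : ℕ}

lemma core (hv : 1 ≤ v) (G : SimpleGraph (Fin v)) [DecidableRel G.Adj] (D : ℕ) (hD : 1 ≤ D)
    (hdeg : ∀ i, G.degree i ≤ D) (q : ℝ) (hq : 1 < q)
    (C : ℝ≥0) {W : ℝ → ℝ → ℝ} (hW : Measurable (Function.uncurry W)) (hW1 : kerNorm W 1 ≠ ⊤)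
    (Q : ∀ n : ℕ, Fin n → Fin n → ℝ)
    (H : ∀ η > 0, ∀ᶠ n in atTop, ∃ τ : ℝ → Fin n, EM τ ∧
      kerNorm (fun s t => Q n (τ s) (τ t)) (ENNReal.ofReal (q * D)) ≤ C ∧
      cutDist (fun s t => Q n (τ s) (τ t)) W ≤ η) :
    (Continuous fun f : TT c => G2 c G W f.1) ∧
      Apx (fun f : TT c => G2 c G W f.1) (fun n x => Ustat G (monoPhi c v) n (Q n) x) := by
  have hp : 1 < q * D := by
    have : (1:ℝ) ≤ D := by exact_mod_cast hD
    nlinarith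
  have hWC : kerNorm W (ENNReal.ofReal (q * D)) ≤ C := by
    choose N τ h1 h2 h3 using fun k : ℕ => (H (1 / ((k:ℝ) + 1)) (by positivity)).exists
    refine kerNorm_lim (U := fun k s t => Q (N k) (τ k s) (τ k t)) (fun k => ?_) hW hp h2 hW1 ?_
    · exact (measurable_of_finite (fun z : Fin (N k) × Fin (N k) => Q (N k) z.1 z.2)).comp
        (((h1 k).meas.comp measurable_fst).prodMk ((h1 k).meas.comp measurable_snd))
    · exact squeeze_zero (fun k => cutDist_nonneg _ _) h3 tendsto_one_div_add_atTop_nhds_zero_nat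
  constructor
  · have hi := graph_integrable G D hD hdeg q hq (fun _ => W) (fun _ => hW) C (fun _ _ => hWC)
      (ψ := fun _ => 1) measurable_const (by simp)
    simp only [mul_one] at hi
    exact continuous_finsetSum _ fun r _ => cont_pint hi r
  · intro ε hε
    obtain ⟨η, hη, N, -, h⟩ := star (c := c) G hv D hD hdeg q hq C hW hWC ε hε
    filter_upwards [H η hη, eventually_ge_atTop N] with n hn hnN
    obtain ⟨τ, hτ, h1, h2⟩ := hn
    exact ⟨τ, hτ, h n hnN τ hτ (Q n) h1 h2⟩

/-- cell index -/
noncomputable def cel (n : ℕ) (hn : 1 ≤ n) (y : ℝ) : Fin n :=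
  ⟨min (n - 1) (⌈(n:ℝ) * y⌉₊ - 1), by omega⟩

lemma cel_meas (hn : 1 ≤ n) : Measurable (cel n hn) := by
  have h : Measurable fun k : ℕ => (⟨min (n - 1) (k - 1), by omega⟩ : Fin n) := measurable_from_top
  exact h.comp (Nat.measurable_ceil.comp (measurable_const.mul measurable_id))

lemma cel_iff (hn : 1 ≤ n) {y : ℝ} (hy : y ∈ Ioc (0:ℝ) 1) (i : Fin n) :
    y ∈ Ioc (((i : ℕ) : ℝ) / n) ((((i : ℕ) : ℝ) + 1) / n) ↔ cel n hn y = i := by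
  have hn0 : (0:ℝ) < n := by exact_mod_cast hn
  have h1 : 0 < (n:ℝ) * y := mul_pos hn0 hy.1
  have h2 : 0 < ⌈(n:ℝ) * y⌉₊ := Nat.ceil_pos.2 h1
  have h3 : ⌈(n:ℝ) * y⌉₊ ≤ n := Nat.ceil_le.2 (by nlinarith [hy.2])
  rw [mem_Ioc, div_lt_iff₀ hn0, le_div_iff₀ hn0, Fin.ext_iff]
  have e1 : ((i : ℕ) : ℝ) < y * n ↔ (i : ℕ) < ⌈(n:ℝ) * y⌉₊ := by rw [Nat.lt_ceil, mul_comm]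
  have e2 : y * n ≤ (i : ℕ) + 1 ↔ ⌈(n:ℝ) * y⌉₊ ≤ (i : ℕ) + 1 := by
    rw [Nat.ceil_le, mul_comm]; push_cast; rfl
  rw [e1, e2]
  simp only [cel]
  omega

lemma ae_Ioc : ∀ᵐ u ∂unif01, u ∈ Ioc (0:ℝ) 1 := by
  have h0 : ∀ᵐ u ∂unif01, u ≠ (0:ℝ) := by
    rw [ae_iff]
    simp only [ne_eq, not_not]
    rw [unif01]
    exact measure_mono_null (fun x hx => hx) (measure_singleton (μ := volume.restrict (Icc (0:ℝ) 1)) (0:ℝ))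
  filter_upwards [ae_Icc, h0] with u h1 h2
  exact ⟨lt_of_le_of_ne h1.1 (Ne.symm h2), h1.2⟩

lemma cel_step (hn : 1 ≤ n) (Q : Fin n → Fin n → ℝ) {x y : ℝ} (hx : x ∈ Ioc (0:ℝ) 1) (hy : y ∈ Ioc (0:ℝ) 1) :
    stepKernel n Q x y = Q (cel n hn x) (cel n hn y) := by
  unfold stepKernel
  simp only [cel_iff hn hx, cel_iff hn hy]
  rw [Finset.sum_eq_single (cel n hn x), Finset.sum_eq_single (cel n hn y)]
  · simp
  · intro j _ hj; simp [hj.symm]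
  · simp
  · intro j _ hj; simp [hj.symm]
  · simp

lemma cel_EM (hn : 1 ≤ n) {σ : ℝ → ℝ} (hσ : MeasurePreserving σ unif01 unif01) : EM (cel n hn ∘ σ) := by
  refine ⟨(cel_meas hn).comp hσ.measurable, fun i => ?_⟩
  have hn0 : (0:ℝ) < n := by exact_mod_cast hn
  rw [Set.preimage_comp, Measure.real, hσ.measure_preimage ((cel_meas hn) (measurableSet_singleton i)).nullMeasurableSet]
  have : unif01 (cel n hn ⁻¹' {i}) = unif01 (Ioc (((i : ℕ) : ℝ) / n) ((((i : ℕ) : ℝ) + 1) / n)) := by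
    refine measure_congr ?_
    filter_upwards [ae_Ioc] with u hu
    exact propext (cel_iff hn hu i).symm
  rw [this, unif01, Measure.restrict_apply measurableSet_Ioc, inter_eq_self_of_subset_left, Real.volume_Ioc,
    ENNReal.toReal_ofReal]
  · ring
  · rw [← sub_div]; simp
  · intro y hy
    have hi : ((i:ℕ):ℝ) + 1 ≤ n := by exact_mod_cast i.2
    refine ⟨le_trans (by positivity) hy.1.le, hy.2.trans ?_⟩
    rw [div_le_one hn0]; exact hi

lemma cutDist_congr {K1 K2 W : ℝ → ℝ → ℝ} {p : ℝ → Prop} (hp : ∀ᵐ x ∂unif01, p x)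
    (h : ∀ x y, p x → p y → K1 x y = K2 x y) : cutDist K1 W = cutDist K2 W := by
  unfold cutDist
  congr 1; ext S; congr 1; ext T
  congr 1
  have hr : ∀ S : Set ℝ, ∀ᵐ x ∂(volume.restrict (Icc (0:ℝ) 1 ∩ S)), p x := fun S =>
    ae_mono (Measure.restrict_mono inter_subset_left le_rfl) hp
  refine integral_congr_ae ?_
  filter_upwards [hr S.1] with x hx
  refine integral_congr_ae ?_
  filter_upwards [hr T.1] with y hy
  rw [h x y hx hy]

lemma kerNorm_congr {K1 K2 : ℝ → ℝ → ℝ} {p : ℝ → Prop} (hp : ∀ᵐ x ∂unif01, p x)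
    (h : ∀ x y, p x → p y → K1 x y = K2 x y) (r : ℝ≥0∞) : kerNorm K1 r = kerNorm K2 r := by
  unfold kerNorm
  refine eLpNorm_congr_ae ?_
  filter_upwards [Measure.quasiMeasurePreserving_fst.ae hp, Measure.quasiMeasurePreserving_snd.ae hp] with z h1 h2
  exact h _ _ h1 h2

lemma step_meas (Q : Fin n → Fin n → ℝ) : Measurable (Function.uncurry (stepKernel n Q)) := by
  unfold stepKernel Function.uncurry
  refine Finset.measurable_sum _ fun i _ => Finset.measurable_sum _ fun j _ => ?_
  refine Measurable.ite ?_ measurable_const measurable_const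
  have h1 : MeasurableSet {z : ℝ × ℝ | z.1 ∈ Ioc (((i : ℕ) : ℝ) / n) ((((i : ℕ) : ℝ) + 1) / n)} :=
    measurable_fst measurableSet_Ioc
  have h2 : MeasurableSet {z : ℝ × ℝ | z.2 ∈ Ioc (((j : ℕ) : ℝ) / n) ((((j : ℕ) : ℝ) + 1) / n)} :=
    measurable_snd measurableSet_Ioc
  exact h1.inter h2

lemma kerNorm_comp {K : ℝ → ℝ → ℝ} (hK : Measurable (Function.uncurry K)) {σ : ℝ → ℝ}
    (hσ : MeasurePreserving σ unif01 unif01) (r : ℝ≥0∞) : kerNorm (fun x y => K (σ x) (σ y)) r = kerNorm K r := by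
  unfold kerNorm
  have hK' : AEStronglyMeasurable (fun z : ℝ × ℝ => K z.1 z.2) (unif01.prod unif01) := hK.aestronglyMeasurable
  have hp : MeasurePreserving (Prod.map σ σ) (unif01.prod unif01) (unif01.prod unif01) := hσ.prod hσ
  have := eLpNorm_comp_measurePreserving (p := r) hK' hp
  rw [← this]
  rfl

lemma edgeProd_one (G : SimpleGraph (Fin v)) [DecidableRel G.Adj] (h : G.maxDegree = 0) (f : Fin v → Fin v → ℝ) :
    edgeProd G f = 1 := by
  rw [edgeProd_eq]
  refine Finset.prod_eq_one fun p hp => ?_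
  simp only [edgeS, Finset.mem_filter] at hp
  have h1 : 0 < G.degree p.1 := (G.degree_pos_iff_exists_adj p.1).2 ⟨_, hp.2.1⟩
  have := G.degree_le_maxDegree p.1
  omega

theorem main
    (c : ℕ) 
    {v : ℕ} (hv : 2 ≤ v) (G : SimpleGraph (Fin v)) [DecidableRel G.Adj]
    (Q : ∀ n : ℕ, Fin n → Fin n → ℝ)
    (W : ℝ → ℝ → ℝ) (hWmeas : Measurable (Function.uncurry W))
    (hWL1 : kerNorm W 1 ≠ ⊤)
    (hcut : Tendsto (fun n => weakCutDist (stepKernel n (Q n)) W) atTop (nhds 0))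
    (q : ℝ≥0∞) (hq : 1 < q)
    (hnorm : Filter.atTop.limsup
        (fun n => kerNorm (stepKernel n (Q n)) (q * (G.maxDegree : ℝ≥0∞))) ≠ ⊤) :
    (Continuous fun f : TT c => G2 c G W f.1) ∧
      Apx (fun f : TT c => G2 c G W f.1) (fun n x => Ustat G (monoPhi c v) n (Q n) x) := by
  rcases Nat.eq_zero_or_pos G.maxDegree with h0 | hD
  · have h := core (c := c) (by omega : 1 ≤ v) G 1 le_rfl (fun i => (G.degree_le_maxDegree i).trans (by omega)) 2 (by norm_num) 0
      (W := fun _ _ => 0) measurable_const (by simp [kerNorm]) (fun n _ _ => 0) (fun η hη => by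
        filter_upwards [eventually_ge_atTop 1] with n hn
        refine ⟨_, cel_EM hn (MeasurePreserving.id unif01), by simp [kerNorm], ?_⟩
        simp [cutDist, hη.le])
    simp only [G2, Ustat, edgeProd_one G h0] at h ⊢
    exact h
  · set q' : ℝ := (min q 2).toReal with hq'
    have hmin : min q 2 ≠ ⊤ := ne_top_of_le_ne_top (by simp) (min_le_right q 2)
    have hq1 : 1 < q' := by
      rw [hq', ← ENNReal.toReal_one, ENNReal.toReal_lt_toReal ENNReal.one_ne_top hmin]
      exact lt_min hq (by norm_num)
    have hle : ENNReal.ofReal (q' * G.maxDegree) ≤ q * (G.maxDegree : ℝ≥0∞) := by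
      rw [ENNReal.ofReal_mul (by linarith), hq', ENNReal.ofReal_toReal hmin, ENNReal.ofReal_natCast]
      gcongr
      exact min_le_left _ _
    obtain ⟨C, hC, -⟩ := ENNReal.lt_iff_exists_nnreal_btwn.1 (lt_top_iff_ne_top.2 hnorm)
    have hev := Filter.eventually_lt_of_limsup_lt hC
    refine core (by omega) G G.maxDegree hD (fun i => G.degree_le_maxDegree i) q' hq1 C hWmeas hWL1 Q fun η hη => ?_
    filter_upwards [hev, hcut.eventually_lt_const hη, eventually_ge_atTop 1] with n h1 h2 hn
    have : Nonempty {σ : ℝ → ℝ // MPB σ} := ⟨⟨id, Set.bijOn_id _, MeasurePreserving.id _⟩⟩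
    obtain ⟨⟨σ, hσ⟩, h3⟩ := exists_lt_of_ciInf_lt h2
    have hp : ∀ᵐ x ∂unif01, σ x ∈ Ioc (0:ℝ) 1 := hσ.2.quasiMeasurePreserving.ae ae_Ioc
    have hkk : ∀ x y, σ x ∈ Ioc (0:ℝ) 1 → σ y ∈ Ioc (0:ℝ) 1 →
        Q n ((cel n hn ∘ σ) x) ((cel n hn ∘ σ) y) = stepKernel n (Q n) (σ x) (σ y) := fun x y hx hy =>
      (cel_step hn (Q n) hx hy).symm
    refine ⟨_, cel_EM hn hσ.2, ?_, ?_⟩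
    · rw [kerNorm_congr hp hkk, kerNorm_comp (step_meas (Q n)) hσ.2]
      exact (kerNorm_mono (step_meas _) hle).trans h1.le
    · rw [cutDist_congr hp hkk]
      exact h3.le

end TT

/-- Corollary 1.3: LDP for monochromatic subgraph counts. -/
theorem ldp_monochromatic_counts
    (c : ℕ) (μ : Measure (Fin c)) [IsProbabilityMeasure μ]
    (hpos : ∀ r : Fin c, 0 < μ {r})
    {v : ℕ} (hv : 2 ≤ v) (G : SimpleGraph (Fin v)) [DecidableRel G.Adj]
    (Q : ∀ n : ℕ, Fin n → Fin n → ℝ)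
    (hQsymm : ∀ n i j, Q n i j = Q n j i) (hQzero : ∀ n i, Q n i i = 0)
    (W : ℝ → ℝ → ℝ) (hWmeas : Measurable (Function.uncurry W))
    (hWsymm : ∀ x y, W x y = W y x) (hWL1 : kerNorm W 1 ≠ ⊤)
    (hcut : Tendsto (fun n => weakCutDist (stepKernel n (Q n)) W) atTop (nhds 0))
    (q : ℝ≥0∞) (hq : 1 < q)
    (hnorm : Filter.atTop.limsup
        (fun n => kerNorm (stepKernel n (Q n)) (q * (G.maxDegree : ℝ≥0∞))) ≠ ⊤) :
    SatisfiesLDP (fun n => Measure.pi fun _ : Fin n => μ)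
      (fun n x => Ustat G (monoPhi c v) n (Q n) x) (rate2 c G W μ) := by
  obtain ⟨h1, h2⟩ := TT.main c hv G Q W hWmeas hWL1 hcut q hq hnorm
  exact TT.ldp μ hpos G W h1 _ h2
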